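/- Let X ⊆ (ℂ^n,0) be a germ of an analytic variety and let f ∈ m^3 be a holomorphic function germ with μ_X(f) < ∞. If μ_X(f) = τ_X(f), then the pair (f, X) is relatively quasihomogeneous with respect to a system of weights w ∈ ((0, 1/2) ∩ ℚ)^n. -/

import Mathlib

open Filter Topology Polynomial

set_option maxHeartbeats 1000000
set_option synthInstance.maxHeartbeats 1000000

noncomputable section

/-- The algebra structure on germs of complex valued functions. -/
instance Filter.Germ.instAlgebraComplex {α : Type*} (l : Filter α) :
    Algebra ℂ (Filter.Germ l ℂ) where
  algebraMap := (Filter.Germ.coeRingHom l).comp (algebraMap ℂ (α → ℂ))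
  commutes' := fun c g => mul_comm _ _
  smul_def' := fun c g => Filter.Germ.inductionOn g fun f => rfl

/-- The local algebra `𝒪ₙ` of germs at `0 ∈ ℂⁿ` of holomorphic functions,
realized as the subalgebra of germs at `0` admitting an analytic representative. -/
def On (n : ℕ) : Subalgebra ℂ (Filter.Germ (𝓝 (0 : Fin n → ℂ)) ℂ) where
  carrier := {g | ∃ f : (Fin n → ℂ) → ℂ,
    AnalyticAt ℂ f 0 ∧ (f : Filter.Germ (𝓝 (0 : Fin n → ℂ)) ℂ) = g}
  mul_mem' := by
    rintro a b ⟨f, hf, rfl⟩ ⟨g, hg, rfl⟩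
    exact ⟨f * g, hf.mul hg, rfl⟩
  add_mem' := by
    rintro a b ⟨f, hf, rfl⟩ ⟨g, hg, rfl⟩
    exact ⟨f + g, hf.add hg, rfl⟩
  algebraMap_mem' := fun c => ⟨fun _ => c, analyticAt_const, rfl⟩

variable {n : ℕ}

/-- Existence of an analytic representative for an element of `𝒪ₙ`. -/
lemma On.exists_rep (g : On n) : ∃ f : (Fin n → ℂ) → ℂ,
    AnalyticAt ℂ f 0 ∧ (f : Filter.Germ (𝓝 (0 : Fin n → ℂ)) ℂ) = (g : Filter.Germ _ ℂ) :=
  g.2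

/-- A chosen analytic representative of a germ in `𝒪ₙ`. -/
def On.rep (g : On n) : (Fin n → ℂ) → ℂ := (On.exists_rep g).choose

lemma On.rep_analyticAt (g : On n) : AnalyticAt ℂ (On.rep g) 0 :=
  (On.exists_rep g).choose_spec.1

lemma On.rep_spec (g : On n) :
    (On.rep g : Filter.Germ (𝓝 (0 : Fin n → ℂ)) ℂ) = (g : Filter.Germ _ ℂ) :=
  (On.exists_rep g).choose_spec.2

/-- Build an element of `𝒪ₙ` from an analytic function. -/
def mkOn {n : ℕ} (f : (Fin n → ℂ) → ℂ) (hf : AnalyticAt ℂ f 0) : On n :=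
  ⟨(f : Filter.Germ (𝓝 (0 : Fin n → ℂ)) ℂ), ⟨f, hf, rfl⟩⟩

/-- The `i`-th partial derivative, as an operation on `𝒪ₙ`. -/
def pd (i : Fin n) (g : On n) : On n :=
  mkOn (fun x => fderiv ℂ (On.rep g) x (Pi.single i 1)) (by
    have h := ((ContinuousLinearMap.apply ℂ ℂ (Pi.single i 1)).analyticAt
      (fderiv ℂ (On.rep g) 0)).comp (On.rep_analyticAt g).fderiv
    exact h)

/-- Restriction of germs at `0` to germs along a finer filter. -/
def restrictGerm {l : Filter (Fin n → ℂ)} (hl : l ≤ 𝓝 (0 : Fin n → ℂ)) :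
    Filter.Germ (𝓝 (0 : Fin n → ℂ)) ℂ →+* Filter.Germ l ℂ where
  toFun g := g.compTendsto id (Filter.tendsto_id'.2 hl)
  map_one' := rfl
  map_mul' a b := Filter.Germ.inductionOn₂ a b fun f g => rfl
  map_zero' := rfl
  map_add' a b := Filter.Germ.inductionOn₂ a b fun f g => rfl

/-- Evaluation of germs restricted along `l ≤ 𝓝 0`, as a ring homomorphism on `𝒪ₙ`. -/
def restrictOn (n : ℕ) {l : Filter (Fin n → ℂ)} (hl : l ≤ 𝓝 (0 : Fin n → ℂ)) :
    On n →+* Filter.Germ l ℂ :=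
  (restrictGerm hl).comp (On n).val.toRingHom

/-- The ideal `I_X ⊆ 𝒪ₙ` of germs vanishing on a set `X` near `0`. -/
def IX (n : ℕ) (X : Set (Fin n → ℂ)) : Ideal (On n) :=
  RingHom.ker (restrictOn n (nhdsWithin_le_nhds (s := X)))

/-- The maximal ideal `𝔪 ⊂ 𝒪ₙ` of germs vanishing at the origin. -/
def mId (n : ℕ) : Ideal (On n) :=
  RingHom.ker (restrictOn n (pure_le_nhds (0 : Fin n → ℂ)))

/-- `X` is the germ at `0` of an analytic variety: `0 ∈ X` and, near `0`, `X` coincides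
with the common zero locus of finitely many holomorphic functions. -/
def IsAnalyticGermAt0 (n : ℕ) (X : Set (Fin n → ℂ)) : Prop :=
  (0 : Fin n → ℂ) ∈ X ∧
    ∃ (m : ℕ) (g : Fin m → (Fin n → ℂ) → ℂ),
      (∀ j, AnalyticAt ℂ (g j) 0) ∧
      ∀ᶠ x in 𝓝 (0 : Fin n → ℂ), (x ∈ X ↔ ∀ j, g j x = 0)

/-- The action `δ(g) = Σ δᵢ ∂g/∂xᵢ` of a vector field `δ ∈ Θ ≅ 𝒪ₙⁿ` on `g ∈ 𝒪ₙ`. -/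
def applyVF (δ : Fin n → On n) (g : On n) : On n := ∑ i, δ i * pd i g

lemma applyVF_add (a b : Fin n → On n) (g : On n) :
    applyVF (a + b) g = applyVF a g + applyVF b g := by
  simp [applyVF, add_mul, Finset.sum_add_distrib]

lemma applyVF_smul (c : On n) (a : Fin n → On n) (g : On n) :
    applyVF (c • a) g = c * applyVF a g := by
  simp [applyVF, Finset.mul_sum, smul_eq_mul, mul_assoc]

/-- For fixed `f`, the map `δ ↦ δ(f)` as an `𝒪ₙ`-linear map `Θ → 𝒪ₙ`. -/
def gradMap (n : ℕ) (f : On n) : (Fin n → On n) →ₗ[On n] On n where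
  toFun δ := applyVF δ f
  map_add' a b := applyVF_add a b f
  map_smul' c a := applyVF_smul c a f

/-- The module `Θ_X` of logarithmic vector fields of `X`, i.e. vector fields
preserving the ideal `I_X`. -/
def ThetaX (n : ℕ) (X : Set (Fin n → ℂ)) : Submodule (On n) (Fin n → On n) where
  carrier := {δ | ∀ g ∈ IX n X, applyVF δ g ∈ IX n X}
  add_mem' := by
    intro a b ha hb g hg
    rw [applyVF_add]
    exact Ideal.add_mem _ (ha g hg) (hb g hg)
  zero_mem' := by
    intro g hg
    have h0 : applyVF (0 : Fin n → On n) g = 0 := by simp [applyVF]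
    rw [h0]; exact Ideal.zero_mem _
  smul_mem' := by
    intro c a ha g hg
    rw [applyVF_smul]
    exact Ideal.mul_mem_left _ _ (ha g hg)

/-- The module `Θ_Y` of vector fields tangent to the hypersurface `Y = f⁻¹(0)`,
i.e. `δ(f) ∈ ⟨f⟩`. -/
def ThetaF (n : ℕ) (f : On n) : Submodule (On n) (Fin n → On n) :=
  Submodule.comap (gradMap n f) (Ideal.span {f})

/-- The module `H_Y` of Hamiltonian vector fields of `f`, i.e. `δ(f) = 0`. -/
def HamF (n : ℕ) (f : On n) : Submodule (On n) (Fin n → On n) :=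
  LinearMap.ker (gradMap n f)

/-- The Bruce–Roberts ideal `df(Θ_X) ⊆ 𝒪ₙ`. -/
def BRIdeal (n : ℕ) (X : Set (Fin n → ℂ)) (f : On n) : Ideal (On n) :=
  Submodule.map (gradMap n f) (ThetaX n X)

/-- The Jacobian ideal `J(f) = ⟨∂f/∂x₁, …, ∂f/∂xₙ⟩`. -/
def Jac (n : ℕ) (f : On n) : Ideal (On n) :=
  Ideal.span (Set.range fun i => pd i f)

/-- The ideal `J(f,h)` generated by the `2×2` minors of the Jacobian matrix of `(f,h)`. -/
def Jmin (n : ℕ) (f h : On n) : Ideal (On n) :=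
  Ideal.span (Set.range fun p : Fin n × Fin n => pd p.1 f * pd p.2 h - pd p.2 f * pd p.1 h)

/-- The Milnor number `μ(f)`. -/
def mu (n : ℕ) (f : On n) : ℕ := Module.finrank ℂ (On n ⧸ Jac n f)

/-- The Tjurina number `τ(f)`. -/
def tau (n : ℕ) (f : On n) : ℕ :=
  Module.finrank ℂ (On n ⧸ (Jac n f + Ideal.span {f}))

/-- The Bruce–Roberts Milnor number `μ_X(f)`. -/
def muX (n : ℕ) (X : Set (Fin n → ℂ)) (f : On n) : ℕ :=
  Module.finrank ℂ (On n ⧸ BRIdeal n X f)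

/-- The Bruce–Roberts Tjurina number `τ_X(f)`. -/
def tauX (n : ℕ) (X : Set (Fin n → ℂ)) (f : On n) : ℕ :=
  Module.finrank ℂ (On n ⧸ (BRIdeal n X f + Ideal.span {f}))

/-- The value at the origin of a germ in `𝒪ₙ`. -/
def ev0 (g : On n) : ℂ := On.rep g 0

/-- The linear part `j¹δ` of a vector field `δ`, as the matrix `(∂δⱼ/∂xᵢ)(0)`. -/
def linPart (δ : Fin n → On n) : Matrix (Fin n) (Fin n) ℂ :=
  Matrix.of fun i j => ev0 (pd i (δ j))

/-- The eigenvalues (with multiplicities) of the linear part of `δ` are given by `w`. -/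
def EigsEq (δ : Fin n → On n) (w : Fin n → ℚ) : Prop :=
  (linPart δ).charpoly = ∏ i, (Polynomial.X - Polynomial.C ((w i : ℂ)))

/-- The germ at `0` of the coordinate function `xᵢ`. -/
def coordG (i : Fin n) : On n :=
  mkOn (fun x : Fin n → ℂ => x i)
    ((ContinuousLinearMap.proj (R := ℂ) (φ := fun _ : Fin n => ℂ) i).analyticAt _)

/-- `g` is quasihomogeneous of degree `d` with respect to the weights `w` (in the given
coordinates): the Euler identity `Σ wᵢ xᵢ ∂g/∂xᵢ = d g` holds. -/
def IsQH (n : ℕ) (w : Fin n → ℚ) (d : ℚ) (g : On n) : Prop :=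
  ∑ i, (w i : ℂ) • (coordG i * pd i g) = (d : ℂ) • g

/-- A germ of a biholomorphic change of coordinates at `0 ∈ ℂⁿ`. -/
structure CoordChange (n : ℕ) where
  toFun : (Fin n → ℂ) → (Fin n → ℂ)
  invFun : (Fin n → ℂ) → (Fin n → ℂ)
  analyticAt : AnalyticAt ℂ toFun 0
  inv_analyticAt : AnalyticAt ℂ invFun 0
  map_zero : toFun 0 = 0
  inv_map_zero : invFun 0 = 0
  left_inv : ∀ᶠ x in 𝓝 (0 : Fin n → ℂ), invFun (toFun x) = x
  right_inv : ∀ᶠ x in 𝓝 (0 : Fin n → ℂ), toFun (invFun x) = x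

lemma CoordChange.tendsto (φ : CoordChange n) :
    Filter.Tendsto φ.toFun (𝓝 (0 : Fin n → ℂ)) (𝓝 (0 : Fin n → ℂ)) := by
  have h := φ.analyticAt.continuousAt
  rwa [ContinuousAt, φ.map_zero] at h

/-- The pullback (composition) of a germ `g ∈ 𝒪ₙ` under a change of coordinates. -/
def pullback (φ : CoordChange n) (g : On n) : On n :=
  ⟨(g : Filter.Germ (𝓝 (0 : Fin n → ℂ)) ℂ).compTendsto φ.toFun φ.tendsto, by
    refine ⟨On.rep g ∘ φ.toFun, ?_, ?_⟩
    · have h := On.rep_analyticAt g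
      rw [← φ.map_zero] at h
      exact h.comp φ.analyticAt
    · rw [← On.rep_spec g]
      exact (Filter.Germ.coe_compTendsto _ φ.tendsto).symm⟩

/-- Definition 1.1: the pair `(f, X)` is relatively quasihomogeneous with respect to the
weights `w`: in suitable coordinates, `f` is quasihomogeneous of degree `1` and `I_X` admits
a system of quasihomogeneous generators of positive degrees, all with respect to `w`. -/
def RelQH (n : ℕ) (X : Set (Fin n → ℂ)) (f : On n) (w : Fin n → ℚ) : Prop :=
  ∃ φ : CoordChange n,
    IsQH n w 1 (pullback φ f) ∧
    ∃ (m : ℕ) (h : Fin m → On n) (d : Fin m → ℚ),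
      Ideal.span (Set.range h) = IX n X ∧ (∀ j, 0 < d j) ∧
      ∀ j, IsQH n w (d j) (pullback φ (h j))

/-- The variety `X` is quasihomogeneous with respect to the weights `w`: in suitable
coordinates, `I_X` admits a system of quasihomogeneous generators of positive degrees. -/
def VarQH (n : ℕ) (X : Set (Fin n → ℂ)) (w : Fin n → ℚ) : Prop :=
  ∃ φ : CoordChange n,
    ∃ (m : ℕ) (h : Fin m → On n) (d : Fin m → ℚ),
      Ideal.span (Set.range h) = IX n X ∧ (∀ j, 0 < d j) ∧
      ∀ j, IsQH n w (d j) (pullback φ (h j))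

instance (f : On n) : HasQuotient (↥(ThetaF n f)) (Submodule ↥(On n) ↥(ThetaF n f)) :=
  Submodule.hasQuotient (R := On n) (M := ThetaF n f)

/-!
The equality `μ_X(f) = τ_X(f)` says that `f ∈ df(Θ_X)`, so some logarithmic field `D` satisfies
`D f = f`. As `D` preserves the `𝔪`-primary ideal `df(Θ_X)`, it preserves `𝔪`. Modulo every power of
`𝔪` the ring splits into generalized eigenspaces of `D`, so in suitable coordinates each `xᵢ` is a
generalized eigenvector modulo `𝔪ᵏ`, with eigenvalue `lᵢ`. The monomials of degree `< k` occurring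
in `f` then have weight `1`, and since `𝔪ᴺ` lies in the Jacobian ideal, for each nonempty set `A` of
indices a monomial `xᵝ xⱼ` occurs in which `β` is supported in `A`. For an arbitrary `ℚ`-linear
`ρ : ℂ → ℚ` with `ρ 1 = 1`, these relations and `f ∈ 𝔪³` give `0 < ρ(lᵢ) < 1/2`, which forces the
`lᵢ` to be rational.

Positivity of the weights bounds `|⟨l, α⟩ - lᵢ|` below by a multiple of `|α|`, so `D - lᵢ` can be
inverted on `𝔪ᵏ` for large `k` within convergent series, and the `xᵢ` can be corrected to genuine
generalized eigenvectors. As `I_X` and `f` are preserved by `D`, Krull's intersection theorem shows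
that `I_X` contains the weighted homogeneous components of its elements, hence is generated by
them, and that `f` is homogeneous of weight `1`.
-/

/-! ### Absolutely convergent power series -/

section PowerSeries

section Cofactor

variable {σ 𝕜 : Type*} [NontriviallyNormedField 𝕜] {a : MvPowerSeries σ 𝕜}

lemma hasSum_coeff_mul {R : Type*} [CommSemiring R] [TopologicalSpace R] (a b : MvPowerSeries σ R)
    (γ : σ →₀ ℕ) :
    HasSum (fun δ => MvPowerSeries.coeff δ a * MvPowerSeries.coeff γ
      (MvPowerSeries.monomial δ 1 * b)) (MvPowerSeries.coeff γ (a * b)) := by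
  classical
  have hcoeff : MvPowerSeries.coeff γ (a * b) = ∑ δ ∈ Finset.Iic γ, MvPowerSeries.coeff δ a *
      MvPowerSeries.coeff γ (MvPowerSeries.monomial δ 1 * b) := by
    rw [MvPowerSeries.coeff_mul]
    refine Finset.sum_nbij' Prod.fst (fun δ => (δ, γ - δ)) (fun p hp => ?_) (fun δ hδ => ?_)
      (fun p hp => ?_) (fun δ _ => rfl) fun p hp => ?_
    · exact Finset.mem_Iic.2 (Finset.HasAntidiagonal.mem_antidiagonal.1 hp ▸ le_self_add)
    · exact Finset.HasAntidiagonal.mem_antidiagonal.2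
        (add_tsub_cancel_of_le (Finset.mem_Iic.1 hδ))
    · rw [← Finset.HasAntidiagonal.mem_antidiagonal.1 hp, add_tsub_cancel_left]
    · rw [← Finset.HasAntidiagonal.mem_antidiagonal.1 hp, MvPowerSeries.coeff_add_monomial_mul,
        one_mul]
  rw [hcoeff]
  refine hasSum_sum_of_ne_finset_zero fun δ hδ => ?_
  rw [MvPowerSeries.coeff_monomial_mul, if_neg fun h => hδ (Finset.mem_Iic.2 h), mul_zero]

/-- Given a choice `s` of a divisor `x ^ s β` of each monomial `x ^ β`, the cofactor of `x ^ α`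
collecting the terms of `a` assigned to `α`. -/
def cofactor (s : (σ →₀ ℕ) → (σ →₀ ℕ)) (a : MvPowerSeries σ 𝕜) (α : σ →₀ ℕ) : MvPowerSeries σ 𝕜 :=
  open Classical in fun δ => if s (α + δ) = α then MvPowerSeries.coeff (α + δ) a else 0

lemma coeff_cofactor (s : (σ →₀ ℕ) → (σ →₀ ℕ)) [DecidableEq (σ →₀ ℕ)] (a : MvPowerSeries σ 𝕜)
    (α δ : σ →₀ ℕ) : MvPowerSeries.coeff δ (cofactor s a α) =
      if s (α + δ) = α then MvPowerSeries.coeff (α + δ) a else 0 := by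
  rw [MvPowerSeries.coeff_apply, cofactor]
  congr

lemma hasSum_coeff_sum_cofactor_mul {s : (σ →₀ ℕ) → (σ →₀ ℕ)} {S : Finset (σ →₀ ℕ)}
    (hs : ∀ β, MvPowerSeries.coeff β a ≠ 0 → s β ∈ S ∧ s β ≤ β)
    (G : (σ →₀ ℕ) → MvPowerSeries σ 𝕜) (γ : σ →₀ ℕ) :
    HasSum (fun β => MvPowerSeries.coeff β a *
        MvPowerSeries.coeff γ (MvPowerSeries.monomial (β - s β) 1 * G (s β)))
      (MvPowerSeries.coeff γ (∑ α ∈ S, cofactor s a α * G α)) := by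
  classical
  have hterm (α) : HasSum (fun β => if s β = α then MvPowerSeries.coeff β a *
      MvPowerSeries.coeff γ (MvPowerSeries.monomial (β - α) 1 * G α) else 0)
      (MvPowerSeries.coeff γ (cofactor s a α * G α)) := by
    rw [← (add_right_injective α).hasSum_iff]
    · convert hasSum_coeff_mul (cofactor s a α) (G α) γ using 2 with δ
      simp only [Function.comp_apply, add_tsub_cancel_left, coeff_cofactor, ite_mul, zero_mul]
    · intro β hβ
      by_contra h0
      obtain ⟨rfl, hβ0⟩ := ite_ne_right_iff.1 h0
      exact hβ ⟨_, add_tsub_cancel_of_le (hs β (left_ne_zero_of_mul hβ0)).2⟩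
  rw [map_sum]
  convert hasSum_sum fun α (_ : α ∈ S) => hterm α using 2 with β
  by_cases hβ : MvPowerSeries.coeff β a = 0
  · simp [hβ]
  · rw [Finset.sum_ite_eq, if_pos (hs β hβ).1]

lemma sum_cofactor_mul_monomial {s : (σ →₀ ℕ) → (σ →₀ ℕ)} {S : Finset (σ →₀ ℕ)}
    (hs : ∀ β, MvPowerSeries.coeff β a ≠ 0 → s β ∈ S ∧ s β ≤ β) :
    ∑ α ∈ S, cofactor s a α * MvPowerSeries.monomial α 1 = a := by
  classical
  ext γ
  refine (hasSum_coeff_sum_cofactor_mul hs (fun α => MvPowerSeries.monomial α 1) γ).unique ?_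
  refine (hasSum_ite_eq γ (MvPowerSeries.coeff γ a)).congr_fun fun β => ?_
  by_cases hβ : MvPowerSeries.coeff β a = 0
  · rw [hβ, zero_mul]
    split_ifs with h
    exacts [(h ▸ hβ).symm, rfl]
  · rw [MvPowerSeries.monomial_mul_monomial, tsub_add_cancel_of_le (hs β hβ).2, mul_one,
      MvPowerSeries.coeff_monomial, mul_ite, mul_one, mul_zero]
    rcases eq_or_ne β γ with rfl | h
    · simp
    · rw [if_neg h, if_neg h.symm]

end Cofactor

/-- The monomial `x ^ α` in commuting quantities `x i`, for a multi-index `α`. -/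
def mvPow {σ R : Type*} [Fintype σ] [CommMonoid R] (x : σ → R) (α : σ →₀ ℕ) : R :=
  ∏ i, x i ^ α i

variable {σ : Type*} [Fintype σ]

section MvPow

variable {R : Type*} [CommMonoid R]

lemma mvPow_zero (x : σ → R) : mvPow x 0 = 1 := by
  simp [mvPow]

lemma mvPow_add (x : σ → R) (α β : σ →₀ ℕ) : mvPow x (α + β) = mvPow x α * mvPow x β := by
  simp [mvPow, pow_add, Finset.prod_mul_distrib]

lemma mvPow_single (x : σ → R) (i : σ) (k : ℕ) : mvPow x (Finsupp.single i k) = x i ^ k := by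
  classical
  simp [mvPow, Finsupp.single_apply, pow_ite, Finset.prod_ite_eq]

lemma mvPow_eq_prod (x : σ → R) (α : σ →₀ ℕ) : mvPow x α = α.prod fun i k => x i ^ k :=
  (Finsupp.prod_fintype α _ fun _ => pow_zero _).symm

lemma mvPow_const (t : R) (α : σ →₀ ℕ) : mvPow (fun _ => t) α = t ^ α.degree := by
  simp [mvPow, Finset.prod_pow_eq_pow_sum, Finsupp.degree_eq_sum]

lemma map_mvPow {S F : Type*} [CommMonoid S] [FunLike F R S] [MonoidHomClass F R S] (φ : F)
    (x : σ → R) (α : σ →₀ ℕ) : φ (mvPow x α) = mvPow (fun i => φ (x i)) α := by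
  simp [mvPow]

end MvPow

lemma mvPow_nonneg {r : σ → ℝ} (hr : ∀ i, 0 ≤ r i) (α : σ →₀ ℕ) : 0 ≤ mvPow r α :=
  Finset.prod_nonneg fun i _ => pow_nonneg (hr i) _

lemma mvPow_pos {r : σ → ℝ} (hr : ∀ i, 0 < r i) (α : σ →₀ ℕ) : 0 < mvPow r α :=
  Finset.prod_pos fun i _ => pow_pos (hr i) _

lemma mvPow_mono {r s : σ → ℝ} (hs : ∀ i, 0 ≤ s i) (h : ∀ i, s i ≤ r i) (α : σ →₀ ℕ) :
    mvPow s α ≤ mvPow r α :=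
  Finset.prod_le_prod (fun i _ => pow_nonneg (hs i) _) fun i _ => pow_le_pow_left₀ (hs i) (h i) _

variable {𝕜 : Type*} [NontriviallyNormedField 𝕜]

lemma norm_mvPow (x : σ → 𝕜) (α : σ →₀ ℕ) : ‖mvPow x α‖ = mvPow (fun i => ‖x i‖) α := by
  simp [mvPow, norm_prod, norm_pow]

/-- The finite set of multi-indices of degree `k`. -/
def multiIndices (σ : Type*) [Fintype σ] (k : ℕ) : Finset (σ →₀ ℕ) :=
  open Classical in Finset.finsuppAntidiag Finset.univ k

lemma mem_multiIndices {k : ℕ} {α : σ →₀ ℕ} : α ∈ multiIndices σ k ↔ α.degree = k := by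
  simp [multiIndices, Finset.mem_finsuppAntidiag, Finsupp.degree_eq_sum]

lemma tsum_preimage_degree {E : Type*} [AddCommMonoid E] [TopologicalSpace E]
    (F : (σ →₀ ℕ) → E) (k : ℕ) :
    ∑' α : (Finsupp.degree ⁻¹' {k} : Set (σ →₀ ℕ)), F α = ∑ α ∈ multiIndices σ k, F α := by
  have h : (Finsupp.degree ⁻¹' {k} : Set (σ →₀ ℕ)) = (multiIndices σ k : Set (σ →₀ ℕ)) := by
    ext α
    simp [mem_multiIndices]
  rw [h]
  exact Finset.tsum_subtype _ F

lemma summable_of_sum_multiIndices_le {F : (σ →₀ ℕ) → ℝ} {u : ℕ → ℝ} (hF : ∀ α, 0 ≤ F α)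
    (hu : Summable u) (h : ∀ k, ∑ α ∈ multiIndices σ k, F α ≤ u k) : Summable F := by
  have hu0 k : 0 ≤ u k := (Finset.sum_nonneg fun α _ => hF α).trans (h k)
  refine summable_of_sum_le hF (c := ∑' k, u k) fun s => ?_
  rw [← Finset.sum_fiberwise_of_maps_to fun α hα => Finset.mem_image_of_mem Finsupp.degree hα]
  refine (Finset.sum_le_sum fun k _ => ?_).trans (hu.sum_le_tsum _ fun k _ => hu0 k)
  refine (Finset.sum_le_sum_of_subset_of_nonneg (fun α hα => ?_) fun α _ _ => hF α).trans (h k)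
  exact mem_multiIndices.2 (Finset.mem_filter.1 hα).2

lemma hasSum_mul_antidiagonal {ι : Type*} [AddCommMonoid ι] [Finset.HasAntidiagonal ι]
    [CompleteSpace 𝕜] {F G : ι → 𝕜} {A B : 𝕜} (hF : HasSum F A) (hG : HasSum G B)
    (hF' : Summable fun i => ‖F i‖) (hG' : Summable fun i => ‖G i‖) :
    HasSum (fun k => ∑ p ∈ Finset.HasAntidiagonal.antidiagonal k, F p.1 * G p.2) (A * B) := by
  have hFG := summable_mul_of_summable_norm hF' hG'
  rw [← hF.tsum_eq, ← hG.tsum_eq,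
    hF.summable.tsum_mul_tsum_eq_tsum_sum_antidiagonal hG.summable hFG]
  exact (summable_sum_mul_antidiagonal_of_summable_mul hFG).hasSum

/-- Absolute convergence of the power series `a` on the closed polydisc of polyradius `r`. -/
def WeightedSummable (r : σ → ℝ) (a : MvPowerSeries σ 𝕜) : Prop :=
  Summable fun α => ‖MvPowerSeries.coeff α a‖ * mvPow r α

namespace WeightedSummable

variable {r s : σ → ℝ} {a b : MvPowerSeries σ 𝕜}

lemma of_le (hr : ∀ i, 0 ≤ r i) {u : (σ →₀ ℕ) → ℝ} (hu : Summable u)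
    (h : ∀ α, ‖MvPowerSeries.coeff α a‖ * mvPow r α ≤ u α) : WeightedSummable r a :=
  Summable.of_nonneg_of_le (fun α => mul_nonneg (norm_nonneg _) (mvPow_nonneg hr α)) h hu

lemma mono (h : WeightedSummable r a) (hs : ∀ i, 0 ≤ s i) (hsr : ∀ i, s i ≤ r i) :
    WeightedSummable s a :=
  of_le hs h fun α => mul_le_mul_of_nonneg_left (mvPow_mono hs hsr α) (norm_nonneg _)

lemma add (hr : ∀ i, 0 ≤ r i) (ha : WeightedSummable r a) (hb : WeightedSummable r b) :
    WeightedSummable r (a + b) :=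
  of_le hr (Summable.add ha hb) fun α => by
    rw [map_add, ← add_mul]
    exact mul_le_mul_of_nonneg_right (norm_add_le _ _) (mvPow_nonneg hr α)

lemma smul (c : 𝕜) (ha : WeightedSummable r a) : WeightedSummable r (c • a) :=
  (Summable.mul_left ‖c‖ ha).congr fun α => by rw [MvPowerSeries.coeff_smul, norm_mul, mul_assoc]

lemma norm_coeff_mul_le [DecidableEq σ] (hr : ∀ i, 0 ≤ r i) (a b : MvPowerSeries σ 𝕜)
    (γ : σ →₀ ℕ) : ‖MvPowerSeries.coeff γ (a * b)‖ * mvPow r γ ≤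
      ∑ p ∈ Finset.HasAntidiagonal.antidiagonal γ, ‖MvPowerSeries.coeff p.1 a‖ * mvPow r p.1 *
        (‖MvPowerSeries.coeff p.2 b‖ * mvPow r p.2) := by
  classical
  rw [MvPowerSeries.coeff_mul]
  refine (mul_le_mul_of_nonneg_right (norm_sum_le _ _) (mvPow_nonneg hr γ)).trans_eq ?_
  rw [Finset.sum_mul]
  refine Finset.sum_congr (by congr!) fun p hp => ?_
  rw [← Finset.HasAntidiagonal.mem_antidiagonal.1 hp, mvPow_add, norm_mul, mul_mul_mul_comm]

lemma mul (hr : ∀ i, 0 ≤ r i) (ha : WeightedSummable r a) (hb : WeightedSummable r b) :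
    WeightedSummable r (a * b) := by
  classical
  have h0 (c : MvPowerSeries σ 𝕜) (α) : 0 ≤ ‖MvPowerSeries.coeff α c‖ * mvPow r α :=
    mul_nonneg (norm_nonneg _) (mvPow_nonneg hr α)
  exact of_le hr (summable_sum_mul_antidiagonal_of_summable_mul
    (Summable.mul_of_nonneg ha hb (h0 a) (h0 b))) (norm_coeff_mul_le hr a b)

lemma summable_norm (ha : WeightedSummable r a) {x : σ → 𝕜} (hx : ∀ i, ‖x i‖ ≤ r i) :
    Summable fun α => ‖MvPowerSeries.coeff α a * mvPow x α‖ := by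
  have h := ha.mono (fun i => norm_nonneg (x i)) hx
  unfold WeightedSummable at h
  simpa only [norm_mul, norm_mvPow] using h

lemma hasSum_mul [CompleteSpace 𝕜] (ha : WeightedSummable r a)
    (hb : WeightedSummable r b) {x : σ → 𝕜} (hx : ∀ i, ‖x i‖ ≤ r i) {A B : 𝕜}
    (hA : HasSum (fun α => MvPowerSeries.coeff α a * mvPow x α) A)
    (hB : HasSum (fun α => MvPowerSeries.coeff α b * mvPow x α) B) :
    HasSum (fun α => MvPowerSeries.coeff α (a * b) * mvPow x α) (A * B) := by
  classical
  refine (hasSum_mul_antidiagonal hA hB (ha.summable_norm hx) (hb.summable_norm hx)).congr_fun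
    fun γ => ?_
  rw [MvPowerSeries.coeff_mul, Finset.sum_mul]
  refine Finset.sum_congr rfl fun p hp => ?_
  rw [← Finset.HasAntidiagonal.mem_antidiagonal.1 hp, mvPow_add, mul_mul_mul_comm]

end WeightedSummable

section WeightedNorm

variable {r : σ → ℝ} {a b : MvPowerSeries σ 𝕜}

lemma weightedSummable_zero (r : σ → ℝ) : WeightedSummable r (0 : MvPowerSeries σ 𝕜) := by
  simp [WeightedSummable]

lemma WeightedSummable.sum {ι : Type*} (hr : ∀ i, 0 ≤ r i) {s : Finset ι}
    {a : ι → MvPowerSeries σ 𝕜} (h : ∀ i ∈ s, WeightedSummable r (a i)) :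
    WeightedSummable r (∑ i ∈ s, a i) :=
  Finset.sum_induction a (WeightedSummable r) (fun _ _ => WeightedSummable.add hr)
    (weightedSummable_zero r) h

/-- The weighted `ℓ¹`-norm of a power series on the polydisc of polyradius `r`. It is the junk value
`0` when `a` is not `WeightedSummable r`. -/
def weightedNorm (r : σ → ℝ) (a : MvPowerSeries σ 𝕜) : ℝ :=
  ∑' α, ‖MvPowerSeries.coeff α a‖ * mvPow r α

lemma weightedNorm_zero (r : σ → ℝ) : weightedNorm r (0 : MvPowerSeries σ 𝕜) = 0 := by
  simp [weightedNorm]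

lemma weightedNorm_mul_le (hr : ∀ i, 0 ≤ r i) (ha : WeightedSummable r a)
    (hb : WeightedSummable r b) :
    weightedNorm r (a * b) ≤ weightedNorm r a * weightedNorm r b := by
  classical
  have hab := hasSum_mul_antidiagonal (𝕜 := ℝ) ha.hasSum hb.hasSum ha.norm hb.norm
  refine (Summable.tsum_le_tsum (fun α => ?_) (ha.mul hr hb) hab.summable).trans_eq hab.tsum_eq
  exact WeightedSummable.norm_coeff_mul_le hr a b α

lemma weightedNorm_add_le (hr : ∀ i, 0 ≤ r i) (ha : WeightedSummable r a)
    (hb : WeightedSummable r b) :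
    weightedNorm r (a + b) ≤ weightedNorm r a + weightedNorm r b := by
  refine (Summable.tsum_le_tsum (fun α => ?_) (ha.add hr hb) (Summable.add ha hb)).trans_eq
    (Summable.tsum_add ha hb)
  rw [map_add, ← add_mul]
  exact mul_le_mul_of_nonneg_right (norm_add_le _ _) (mvPow_nonneg hr α)

lemma weightedNorm_sum_le {ι : Type*} (hr : ∀ i, 0 ≤ r i) {s : Finset ι}
    {a : ι → MvPowerSeries σ 𝕜} (h : ∀ i ∈ s, WeightedSummable r (a i)) :
    weightedNorm r (∑ i ∈ s, a i) ≤ ∑ i ∈ s, weightedNorm r (a i) :=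
  Finset.le_sum_of_subadditive_on_pred _ (WeightedSummable r) (weightedNorm_zero r).le
    (fun _ _ => weightedNorm_add_le hr) (fun _ _ => WeightedSummable.add hr) a h

lemma hasSum_norm_coeff_monomial (r : σ → ℝ) (β : σ →₀ ℕ) (c : 𝕜) :
    HasSum (fun α => ‖MvPowerSeries.coeff α (MvPowerSeries.monomial β c)‖ * mvPow r α)
      (‖c‖ * mvPow r β) := by
  classical
  convert hasSum_ite_eq β (‖c‖ * mvPow r β) using 2 with α
  rw [MvPowerSeries.coeff_monomial]
  split_ifs with h
  · rw [h]
  · rw [norm_zero, zero_mul]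

lemma weightedSummable_monomial (r : σ → ℝ) (β : σ →₀ ℕ) (c : 𝕜) :
    WeightedSummable r (MvPowerSeries.monomial β c) :=
  (hasSum_norm_coeff_monomial r β c).summable

lemma weightedNorm_monomial (r : σ → ℝ) (β : σ →₀ ℕ) (c : 𝕜) :
    weightedNorm r (MvPowerSeries.monomial β c) = ‖c‖ * mvPow r β :=
  (hasSum_norm_coeff_monomial r β c).tsum_eq

end WeightedNorm

lemma WeightedSummable.cofactor {r : σ → ℝ} (hr : ∀ i, 0 < r i) {a : MvPowerSeries σ 𝕜}
    (s : (σ →₀ ℕ) → (σ →₀ ℕ)) (ha : WeightedSummable r a) (α : σ →₀ ℕ) :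
    WeightedSummable r (cofactor s a α) := by
  classical
  refine of_le (fun i => (hr i).le)
    ((ha.comp_injective (add_right_injective α)).mul_left (mvPow r α)⁻¹) fun δ => ?_
  rw [Function.comp_apply, mvPow_add, mul_left_comm ‖_‖, inv_mul_cancel_left₀ (mvPow_pos hr α).ne',
    coeff_cofactor]
  refine mul_le_mul_of_nonneg_right ?_ (mvPow_pos hr δ).le
  split_ifs <;> simp

/-- `f` is the sum of the power series `a`, absolutely convergent on some closed polydisc
around `0`. -/
def HasExpansion (f : (σ → 𝕜) → 𝕜) (a : MvPowerSeries σ 𝕜) : Prop :=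
  ∃ t : ℝ, 0 < t ∧ WeightedSummable (fun _ => t) a ∧ ∀ x : σ → 𝕜, (∀ i, ‖x i‖ ≤ t) →
    HasSum (fun α => MvPowerSeries.coeff α a * mvPow x α) (f x)

section Multilinear

lemma exists_word_prod_eq_mvPow {R : Type*} [CommMonoid R] (α : σ →₀ ℕ) {k : ℕ}
    (h : α.degree = k) : ∃ s : Fin k → σ, ∀ x : σ → R, ∏ j, x (s j) = mvPow x α := by
  have hlen : (Finsupp.toMultiset α).toList.length = k := by
    rw [Multiset.length_toList, Finsupp.card_toMultiset, ← h]
    rfl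
  subst hlen
  refine ⟨fun j => (Finsupp.toMultiset α).toList[j], fun x => ?_⟩
  refine (Fin.prod_univ_fun_getElem _ x).trans ?_
  rw [Multiset.prod_map_toList, mvPow_eq_prod, Finsupp.toMultiset_map,
    Finsupp.prod_toMultiset, Finsupp.prod_mapDomain_index pow_zero pow_add]

lemma exists_multilinear_eq_mvPow (α : σ →₀ ℕ) {k : ℕ} (h : α.degree = k) :
    ∃ M : ContinuousMultilinearMap 𝕜 (fun _ : Fin k => σ → 𝕜) 𝕜,
      ‖M‖ ≤ 1 ∧ ∀ x, (M fun _ => x) = mvPow x α := by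
  obtain ⟨s, hs⟩ := exists_word_prod_eq_mvPow (R := 𝕜) α h
  refine ⟨(ContinuousMultilinearMap.mkPiAlgebra 𝕜 (Fin k) 𝕜).compContinuousLinearMap
    fun j => ContinuousLinearMap.proj (s j), ?_, fun x => by simp [hs]⟩
  refine ContinuousMultilinearMap.opNorm_le_bound zero_le_one fun v => ?_
  simp only [ContinuousMultilinearMap.compContinuousLinearMap_apply,
    ContinuousMultilinearMap.mkPiAlgebra_apply, ContinuousLinearMap.proj_apply, one_mul, norm_prod]
  exact Finset.prod_le_prod (fun _ _ => norm_nonneg _) fun j _ => norm_le_pi_norm (v j) _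

lemma exists_homogeneous_multilinear (a : MvPowerSeries σ 𝕜) (k : ℕ) :
    ∃ M : ContinuousMultilinearMap 𝕜 (fun _ : Fin k => σ → 𝕜) 𝕜,
      ‖M‖ ≤ ∑ α ∈ multiIndices σ k, ‖MvPowerSeries.coeff α a‖ ∧
      ∀ x, (M fun _ => x) = ∑ α ∈ multiIndices σ k, MvPowerSeries.coeff α a * mvPow x α := by
  choose M hM hMx using fun α : multiIndices σ k =>
    exists_multilinear_eq_mvPow (𝕜 := 𝕜) α.1 (mem_multiIndices.1 α.2)
  refine ⟨∑ α ∈ (multiIndices σ k).attach, MvPowerSeries.coeff α.1 a • M α, ?_, fun x => ?_⟩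
  · rw [← Finset.sum_attach (multiIndices σ k) fun α => ‖MvPowerSeries.coeff α a‖]
    refine norm_sum_le_of_le _ fun α _ => ?_
    rw [norm_smul]
    exact mul_le_of_le_one_right (norm_nonneg _) (hM α)
  · rw [sum_apply,
      ← Finset.sum_attach (multiIndices σ k) fun α => MvPowerSeries.coeff α a * mvPow x α]
    simp only [smul_apply, hMx, smul_eq_mul]

end Multilinear

namespace HasExpansion

variable {f g : (σ → 𝕜) → 𝕜} {a b : MvPowerSeries σ 𝕜}

lemma exists_common_radius (hf : HasExpansion f a) (hg : HasExpansion g b) :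
    ∃ t : ℝ, 0 < t ∧ WeightedSummable (fun _ => t) a ∧ WeightedSummable (fun _ => t) b ∧
      ∀ x : σ → 𝕜, (∀ i, ‖x i‖ ≤ t) →
        HasSum (fun α => MvPowerSeries.coeff α a * mvPow x α) (f x) ∧
        HasSum (fun α => MvPowerSeries.coeff α b * mvPow x α) (g x) := by
  obtain ⟨t, ht, ha, hfa⟩ := hf
  obtain ⟨s, hs, hb, hgb⟩ := hg
  have h0 : 0 < min t s := lt_min ht hs
  exact ⟨min t s, h0, ha.mono (fun _ => h0.le) fun _ => min_le_left _ _,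
    hb.mono (fun _ => h0.le) fun _ => min_le_right _ _, fun x hx =>
      ⟨hfa x fun i => (hx i).trans (min_le_left _ _),
        hgb x fun i => (hx i).trans (min_le_right _ _)⟩⟩

lemma add (hf : HasExpansion f a) (hg : HasExpansion g b) : HasExpansion (f + g) (a + b) := by
  obtain ⟨t, ht, ha, hb, h⟩ := hf.exists_common_radius hg
  refine ⟨t, ht, ha.add (fun _ => ht.le) hb, fun x hx => ?_⟩
  simpa [add_mul] using (h x hx).1.add (h x hx).2

lemma smul (c : 𝕜) (hf : HasExpansion f a) : HasExpansion (c • f) (c • a) := by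
  obtain ⟨t, ht, ha, h⟩ := hf
  exact ⟨t, ht, ha.smul c, fun x hx => by simpa [mul_assoc] using (h x hx).mul_left c⟩

lemma mul [CompleteSpace 𝕜] (hf : HasExpansion f a) (hg : HasExpansion g b) :
    HasExpansion (f * g) (a * b) := by
  obtain ⟨t, ht, ha, hb, h⟩ := hf.exists_common_radius hg
  exact ⟨t, ht, ha.mul (fun _ => ht.le) hb, fun x hx =>
    ha.hasSum_mul hb hx (h x hx).1 (h x hx).2⟩

lemma congr (hf : HasExpansion f a) (h : f =ᶠ[𝓝 0] g) : HasExpansion g a := by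
  obtain ⟨t, ht, ha, hfa⟩ := hf
  obtain ⟨s, hs, hfg⟩ := Metric.eventually_nhds_iff_ball.1 h
  have h0 : 0 < min t (s / 2) := lt_min ht (half_pos hs)
  refine ⟨min t (s / 2), h0, ha.mono (fun _ => h0.le) fun _ => min_le_left _ _, fun x hx => ?_⟩
  have hxs : x ∈ Metric.ball 0 s := mem_ball_zero_iff.2 <|
    ((pi_norm_le_iff_of_nonneg h0.le).2 hx).trans_lt ((min_le_right _ _).trans_lt (half_lt_self hs))
  exact hfg x hxs ▸ hfa x fun i => (hx i).trans (min_le_left _ _)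

lemma eventuallyEq (hf : HasExpansion f a) (hg : HasExpansion g a) : f =ᶠ[𝓝 0] g := by
  obtain ⟨t, ht, -, -, h⟩ := hf.exists_common_radius hg
  filter_upwards [Metric.ball_mem_nhds 0 ht] with x hx
  have hxt (i) : ‖x i‖ ≤ t := (norm_le_pi_norm x i).trans (mem_ball_zero_iff.1 hx).le
  exact (h x hxt).1.unique (h x hxt).2

lemma apply_zero (hf : HasExpansion f a) : f 0 = MvPowerSeries.coeff 0 a := by
  obtain ⟨t, ht, -, h⟩ := hf
  have hsingle := hasSum_single (f := fun α => MvPowerSeries.coeff α a * mvPow (0 : σ → 𝕜) α) 0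
    fun α hα => by
      obtain ⟨i, hi⟩ := Finsupp.ne_iff.1 hα
      rw [mvPow, Finset.prod_eq_zero (Finset.mem_univ i) (by simpa using hi), mul_zero]
  simpa [mvPow_zero] using (h 0 (by simp [ht.le])).unique hsingle

lemma exists_hasFPowerSeriesAt [CompleteSpace 𝕜] (hf : HasExpansion f a) :
    ∃ p : FormalMultilinearSeries 𝕜 (σ → 𝕜) 𝕜, HasFPowerSeriesAt f p 0 ∧ ∀ k x,
      (p k fun _ => x) = ∑ α ∈ multiIndices σ k, MvPowerSeries.coeff α a * mvPow x α := by
  obtain ⟨t, ht, ha, hfa⟩ := hf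
  choose q hq hqx using exists_homogeneous_multilinear a
  let p : FormalMultilinearSeries 𝕜 (σ → 𝕜) 𝕜 := q
  refine ⟨p, ⟨ENNReal.ofReal t, ?_, by simpa using ht, fun {y} hy => ?_⟩, hqx⟩
  · lift t to NNReal using ht.le
    rw [ENNReal.ofReal_coe_nnreal]
    refine p.le_radius_of_bound (∑' α, ‖MvPowerSeries.coeff α a‖ * mvPow (fun _ => (t : ℝ)) α)
      fun k => ?_
    calc ‖p k‖ * t ^ k ≤ (∑ α ∈ multiIndices σ k, ‖MvPowerSeries.coeff α a‖) * t ^ k := by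
          gcongr
          exact hq k
      _ = ∑ α ∈ multiIndices σ k, ‖MvPowerSeries.coeff α a‖ * mvPow (fun _ => (t : ℝ)) α := by
          rw [Finset.sum_mul]
          refine Finset.sum_congr rfl fun α hα => ?_
          rw [mvPow_const, mem_multiIndices.1 hα]
      _ ≤ _ := ha.sum_le_tsum _ fun α _ =>
          mul_nonneg (norm_nonneg _) (mvPow_nonneg (fun _ => ht.le) _)
  · rw [Metric.eball_ofReal, mem_ball_zero_iff] at hy
    have h := (hfa y fun i => (norm_le_pi_norm y i).trans hy.le).tsum_fiberwise Finsupp.degree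
    simpa only [tsum_preimage_degree (fun α => MvPowerSeries.coeff α a * mvPow y α), ← hqx,
      zero_add] using h

lemma analyticAt [CompleteSpace 𝕜] (hf : HasExpansion f a) : AnalyticAt 𝕜 f 0 :=
  hf.exists_hasFPowerSeriesAt.choose_spec.1.analyticAt

lemma eq_zero [CompleteSpace 𝕜] (h : HasExpansion (0 : (σ → 𝕜) → 𝕜) a) : a = 0 := by
  obtain ⟨p, hp, hpx⟩ := h.exists_hasFPowerSeriesAt
  classical
  ext α
  have hP : ∑ β ∈ multiIndices σ α.degree,
      MvPolynomial.monomial β (MvPowerSeries.coeff β a) = 0 := by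
    refine MvPolynomial.funext fun y => ?_
    rw [map_sum, map_zero, ← hp.apply_eq_zero α.degree y, hpx]
    simp only [MvPolynomial.eval_monomial, mvPow_eq_prod]
  have hα := congrArg (MvPolynomial.coeff α) hP
  simpa [MvPolynomial.coeff_sum, MvPolynomial.coeff_monomial, mem_multiIndices] using hα

lemma unique [CompleteSpace 𝕜] (ha : HasExpansion f a) (hb : HasExpansion f b) : a = b := by
  have h := ha.add (hb.smul (-1))
  rw [neg_one_smul, neg_one_smul, add_neg_cancel] at h
  rw [← sub_eq_zero, sub_eq_add_neg, h.eq_zero]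

end HasExpansion

lemma hasExpansion_monomial (β : σ →₀ ℕ) (c : 𝕜) :
    HasExpansion (fun x => c * mvPow x β) (MvPowerSeries.monomial β c) := by
  classical
  refine ⟨1, one_pos, summable_of_ne_finset_zero (s := {β}) fun α hα => ?_, fun x _ => ?_⟩
  · rw [MvPowerSeries.coeff_monomial, if_neg (by simpa using hα), norm_zero, zero_mul]
  · convert hasSum_single β fun α hα => ?_ using 1
    · rw [MvPowerSeries.coeff_monomial_same]
    · rw [MvPowerSeries.coeff_monomial, if_neg hα, zero_mul]

lemma hasExpansion_const (c : 𝕜) :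
    HasExpansion (fun _ : σ → 𝕜 => c) (algebraMap 𝕜 (MvPowerSeries σ 𝕜) c) := by
  have h := hasExpansion_monomial (σ := σ) 0 c
  simp only [mvPow_zero, mul_one] at h
  rwa [MvPowerSeries.monomial_zero_eq_C_apply] at h

lemma exists_homogeneous_coeff {k : ℕ}
    (M : ContinuousMultilinearMap 𝕜 (fun _ : Fin k => σ → 𝕜) 𝕜) :
    ∃ c : (σ →₀ ℕ) → 𝕜, (∀ x, (M fun _ => x) = ∑ α ∈ multiIndices σ k, c α * mvPow x α) ∧
      ∑ α ∈ multiIndices σ k, ‖c α‖ ≤ ‖M‖ * Fintype.card σ ^ k := by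
  classical
  let e (s : Fin k → σ) : σ →₀ ℕ := ∑ j, Finsupp.single (s j) 1
  let m (s : Fin k → σ) : 𝕜 := M fun j => Pi.single (s j) 1
  have he (s : Fin k → σ) (_ : s ∈ Finset.univ) : e s ∈ multiIndices σ k := by
    simp [e, mem_multiIndices]
  have hpow (x : σ → 𝕜) (s : Fin k → σ) : mvPow x (e s) = ∏ j, x (s j) := by
    rw [mvPow_eq_prod, ← Finsupp.prod_finsetSum_index (fun _ => pow_zero _) fun _ _ _ => pow_add ..]
    simp
  have hm (s : Fin k → σ) : ‖m s‖ ≤ ‖M‖ :=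
    (M.le_opNorm _).trans <| mul_le_of_le_one_right (norm_nonneg _) <|
      Finset.prod_le_one (fun _ _ => norm_nonneg _) fun j _ => by simp [Pi.norm_single]
  refine ⟨fun α => ∑ s with e s = α, m s, fun x => ?_, ?_⟩
  · calc (M fun _ => x) = M fun _ => ∑ i, x i • Pi.single i 1 := by
          rw [← pi_eq_sum_univ' x]
      _ = ∑ s, m s * mvPow x (e s) := by
          simp only [M.map_sum, M.map_smul_univ, hpow, m, smul_eq_mul, mul_comm]
      _ = ∑ α ∈ multiIndices σ k, (∑ s with e s = α, m s) * mvPow x α := by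
          rw [← Finset.sum_fiberwise_of_maps_to he]
          refine Finset.sum_congr rfl fun α _ => ?_
          rw [Finset.sum_mul]
          exact Finset.sum_congr rfl fun _ hs => by rw [(Finset.mem_filter.1 hs).2]
  · calc ∑ α ∈ multiIndices σ k, ‖∑ s with e s = α, m s‖
        ≤ ∑ α ∈ multiIndices σ k, ∑ s with e s = α, ‖M‖ :=
          Finset.sum_le_sum fun _ _ => norm_sum_le_of_le _ fun _ _ => hm _
      _ = ∑ _s : Fin k → σ, ‖M‖ := Finset.sum_fiberwise_of_maps_to he _
      _ = ‖M‖ * Fintype.card σ ^ k := by simp [mul_comm]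

lemma exists_hasExpansion [CompleteSpace 𝕜] {f : (σ → 𝕜) → 𝕜} (hf : AnalyticAt 𝕜 f 0) :
    ∃ a, HasExpansion f a := by
  obtain ⟨p, R, hp⟩ := hf
  obtain ⟨R', hR'0, hR'⟩ := ENNReal.lt_iff_exists_nnreal_btwn.1 hp.r_pos
  have hR'0 : (0 : ℝ) < R' := by exact_mod_cast hR'0
  choose c hc hcn using fun k => exists_homogeneous_coeff (p k)
  set t : ℝ := R' / (Fintype.card σ + 1) with ht
  have ht0 : 0 < t := by positivity
  have htR : t ≤ R' := div_le_self hR'0.le (by simp)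
  have hcard : Fintype.card σ * t ≤ R' := by
    rw [ht, mul_div_left_comm]
    exact mul_le_of_le_one_right hR'0.le (div_le_one_of_le₀ (by simp) (by positivity))
  let a : MvPowerSeries σ 𝕜 := fun α => c α.degree α
  have hcoeff {k : ℕ} {α : σ →₀ ℕ} (hα : α ∈ multiIndices σ k) :
      MvPowerSeries.coeff α a = c k α := by
    rw [← mem_multiIndices.1 hα]
    rfl
  have ha : WeightedSummable (fun _ => t) a := by
    refine summable_of_sum_multiIndices_le
      (fun α => mul_nonneg (norm_nonneg _) (mvPow_nonneg (fun _ => ht0.le) α))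
      (p.summable_norm_mul_pow (hR'.trans_le hp.r_le)) fun k => ?_
    calc ∑ α ∈ multiIndices σ k, ‖MvPowerSeries.coeff α a‖ * mvPow (fun _ => t) α
        = (∑ α ∈ multiIndices σ k, ‖c k α‖) * t ^ k := by
          rw [Finset.sum_mul]
          refine Finset.sum_congr rfl fun α hα => ?_
          rw [hcoeff hα, mvPow_const, mem_multiIndices.1 hα]
      _ ≤ ‖p k‖ * Fintype.card σ ^ k * t ^ k := by
          gcongr
          exact hcn k
      _ = ‖p k‖ * (Fintype.card σ * t) ^ k := by ring
      _ ≤ ‖p k‖ * R' ^ k := by gcongr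
  refine ⟨a, t, ht0, ha, fun x hx => ?_⟩
  have hxR : x ∈ Metric.eball (0 : σ → 𝕜) R := by
    refine (Metric.mem_eball.2 ?_)
    rw [edist_zero_right]
    refine lt_of_le_of_lt ?_ hR'
    rw [enorm_eq_nnnorm, ENNReal.coe_le_coe, ← NNReal.coe_le_coe]
    exact ((pi_norm_le_iff_of_nonneg ht0.le).2 hx).trans htR
  have hsum := (ha.summable_norm hx).of_norm.hasSum
  have hfib := hsum.tsum_fiberwise Finsupp.degree
  have hterm (k : ℕ) : ∑' α : (Finsupp.degree ⁻¹' {k} : Set (σ →₀ ℕ)),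
      MvPowerSeries.coeff α.1 a * mvPow x α.1 = p k fun _ => x := by
    rw [tsum_preimage_degree fun α => MvPowerSeries.coeff α a * mvPow x α, hc]
    exact Finset.sum_congr rfl fun α hα => by rw [hcoeff hα]
  simp only [hterm] at hfib
  have hfx := hp.hasSum hxR
  rw [zero_add] at hfx
  rwa [hfib.unique hfx] at hsum

lemma HasExpansion.of_weightedSummable [CompleteSpace 𝕜] {a : MvPowerSeries σ 𝕜} {r : σ → ℝ}
    (hr : ∀ i, 0 < r i) (h : WeightedSummable r a) :
    HasExpansion (fun x => ∑' α, MvPowerSeries.coeff α a * mvPow x α) a := by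
  obtain ⟨t, ht, htr⟩ : ∃ t, 0 < t ∧ ∀ i, t ≤ r i := by
    cases isEmpty_or_nonempty σ
    · exact ⟨1, one_pos, isEmptyElim⟩
    · obtain ⟨i, hi⟩ := Finite.exists_min r
      exact ⟨r i, hr i, hi⟩
  have ht' := h.mono (fun _ => ht.le) htr
  exact ⟨t, ht, ht', fun x hx => (ht'.summable_norm hx).of_norm.hasSum⟩

end PowerSeries

/-! ### The ring of germs inside formal power series -/

namespace On

section Representatives

lemma ext_rep {g h : On n} (e : On.rep g =ᶠ[𝓝 0] On.rep h) : g = h := by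
  apply Subtype.ext
  rw [← On.rep_spec g, ← On.rep_spec h]
  exact Filter.Germ.coe_eq.2 e

lemma rep_mkOn {f : (Fin n → ℂ) → ℂ} (hf : AnalyticAt ℂ f 0) : On.rep (mkOn f hf) =ᶠ[𝓝 0] f :=
  Filter.Germ.coe_eq.1 (On.rep_spec (mkOn f hf))

lemma rep_add (g h : On n) : On.rep (g + h) =ᶠ[𝓝 0] On.rep g + On.rep h := by
  rw [← Filter.Germ.coe_eq, On.rep_spec, Filter.Germ.coe_add, On.rep_spec, On.rep_spec]
  rfl

lemma rep_mul (g h : On n) : On.rep (g * h) =ᶠ[𝓝 0] On.rep g * On.rep h := by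
  rw [← Filter.Germ.coe_eq, On.rep_spec, Filter.Germ.coe_mul, On.rep_spec, On.rep_spec]
  rfl

lemma rep_algebraMap (c : ℂ) : On.rep (algebraMap ℂ (On n) c) =ᶠ[𝓝 0] fun _ => c := by
  rw [← Filter.Germ.coe_eq, On.rep_spec]
  rfl

lemma restrictOn_apply {l : Filter (Fin n → ℂ)} (hl : l ≤ 𝓝 0) (g : On n) :
    restrictOn n hl g = (On.rep g : Filter.Germ l ℂ) := by
  change restrictGerm hl (g : Filter.Germ (𝓝 (0 : Fin n → ℂ)) ℂ) = _
  rw [← On.rep_spec g]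
  rfl

lemma mem_ker_restrictOn {l : Filter (Fin n → ℂ)} (hl : l ≤ 𝓝 0) {g : On n} :
    g ∈ RingHom.ker (restrictOn n hl) ↔ ∀ᶠ x in l, On.rep g x = 0 := by
  rw [RingHom.mem_ker, restrictOn_apply]
  exact Filter.Germ.coe_eq

end Representatives

section Taylor

lemma unique_of_rep {g : On n} {f : (Fin n → ℂ) → ℂ} {a b : MvPowerSeries (Fin n) ℂ}
    (ha : HasExpansion (On.rep g) a) (h : On.rep g =ᶠ[𝓝 0] f) (hf : HasExpansion f b) : a = b :=
  (ha.congr h).unique hf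

/-- The Taylor expansion at the origin, as a homomorphism from `𝒪ₙ` to formal power series. -/
def taylor (n : ℕ) : On n →ₐ[ℂ] MvPowerSeries (Fin n) ℂ :=
  have spec (g : On n) := (exists_hasExpansion (On.rep_analyticAt g)).choose_spec
  { toFun := fun g => (exists_hasExpansion (On.rep_analyticAt g)).choose
    map_one' := by
      rw [← map_one (algebraMap ℂ (On n)), ← map_one (algebraMap ℂ (MvPowerSeries (Fin n) ℂ))]
      exact unique_of_rep (spec _) (rep_algebraMap 1) (hasExpansion_const 1)
    map_zero' := by
      rw [← map_zero (algebraMap ℂ (On n)), ← map_zero (algebraMap ℂ (MvPowerSeries (Fin n) ℂ))]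
      exact unique_of_rep (spec _) (rep_algebraMap 0) (hasExpansion_const 0)
    map_add' := fun g h => unique_of_rep (spec _) (rep_add g h) ((spec g).add (spec h))
    map_mul' := fun g h => unique_of_rep (spec _) (rep_mul g h) ((spec g).mul (spec h))
    commutes' := fun c => unique_of_rep (spec _) (rep_algebraMap c) (hasExpansion_const c) }

lemma hasExpansion_taylor (g : On n) : HasExpansion (On.rep g) (taylor n g) :=
  (exists_hasExpansion (On.rep_analyticAt g)).choose_spec

lemma taylor_mkOn {f : (Fin n → ℂ) → ℂ} (hf : AnalyticAt ℂ f 0) {a : MvPowerSeries (Fin n) ℂ}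
    (h : HasExpansion f a) : taylor n (mkOn f hf) = a :=
  unique_of_rep (hasExpansion_taylor _) (rep_mkOn hf) h

lemma taylor_injective : Function.Injective (taylor n) := fun g h e =>
  ext_rep ((hasExpansion_taylor g).eventuallyEq (e ▸ hasExpansion_taylor h))

lemma exists_weightedSummable_taylor (g : On n) :
    ∃ t : ℝ, 0 < t ∧ WeightedSummable (fun _ => t) (taylor n g) := by
  obtain ⟨t, ht, h, -⟩ := hasExpansion_taylor g
  exact ⟨t, ht, h⟩

lemma exists_taylor_eq {a : MvPowerSeries (Fin n) ℂ} {r : Fin n → ℝ} (hr : ∀ i, 0 < r i)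
    (h : WeightedSummable r a) : ∃ g : On n, taylor n g = a :=
  ⟨mkOn _ (HasExpansion.of_weightedSummable hr h).analyticAt,
    taylor_mkOn _ (HasExpansion.of_weightedSummable hr h)⟩

instance : IsDomain (On n) :=
  haveI : IsDomain (MvPowerSeries (Fin n) ℂ) := NoZeroDivisors.to_isDomain _
  (taylor_injective (n := n)).isDomain (taylor n).toRingHom

/-- The coefficient of `x ^ α` in the Taylor expansion of a germ. -/
def coeff (α : Fin n →₀ ℕ) : On n →ₗ[ℂ] ℂ := MvPowerSeries.coeff α ∘ₗ (taylor n).toLinearMap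

lemma coeff_def (α : Fin n →₀ ℕ) (g : On n) : coeff α g = MvPowerSeries.coeff α (taylor n g) :=
  rfl

lemma ext_coeff {g h : On n} (e : ∀ α, coeff α g = coeff α h) : g = h :=
  taylor_injective (MvPowerSeries.ext e)

lemma taylor_coordG (i : Fin n) : taylor n (coordG i) = MvPowerSeries.X i := by
  refine taylor_mkOn _ ?_
  have h := hasExpansion_monomial (Finsupp.single i 1) (1 : ℂ)
  simp only [mvPow_single, one_mul, pow_one] at h
  exact h

lemma taylor_mvPow_coordG (α : Fin n →₀ ℕ) :
    taylor n (mvPow coordG α) = MvPowerSeries.monomial α 1 := by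
  rw [map_mvPow, mvPow_eq_prod, MvPowerSeries.monomial_eq']
  simp [taylor_coordG]

lemma coeff_add_mvPow_mul (α β : Fin n →₀ ℕ) (g : On n) :
    coeff (β + α) (mvPow coordG β * g) = coeff α g := by
  rw [coeff_def, map_mul, taylor_mvPow_coordG, MvPowerSeries.coeff_add_monomial_mul, one_mul,
    coeff_def]

lemma coeff_mvPow_mul_of_not_le {α β : Fin n →₀ ℕ} (h : ¬β ≤ α) (g : On n) :
    coeff α (mvPow coordG β * g) = 0 := by
  classical
  rw [coeff_def, map_mul, taylor_mvPow_coordG, MvPowerSeries.coeff_monomial_mul, if_neg h]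

open Classical in
lemma coeff_mvPow (α β : Fin n →₀ ℕ) :
    coeff α (mvPow coordG β) = if α = β then 1 else 0 := by
  rw [coeff_def, taylor_mvPow_coordG, MvPowerSeries.coeff_monomial]

lemma coeff_zero_mul (g h : On n) : coeff 0 (g * h) = coeff 0 g * coeff 0 h := by
  classical
  simp [coeff_def, MvPowerSeries.coeff_mul]

lemma coeff_zero_one : coeff 0 (1 : On n) = 1 := by
  simp [coeff_def]

lemma rep_zero_eq (g : On n) : On.rep g 0 = coeff 0 g := (hasExpansion_taylor g).apply_zero

end Taylor

section LocalRing

lemma mem_mId_iff {g : On n} : g ∈ mId n ↔ coeff 0 g = 0 := by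
  rw [mId, mem_ker_restrictOn, eventually_pure, rep_zero_eq]

lemma mem_IX_iff {X : Set (Fin n → ℂ)} {g : On n} :
    g ∈ IX n X ↔ ∀ᶠ x in 𝓝[X] 0, On.rep g x = 0 :=
  mem_ker_restrictOn _

lemma IX_le_mId {X : Set (Fin n → ℂ)} (h0 : (0 : Fin n → ℂ) ∈ X) : IX n X ≤ mId n := by
  intro g hg
  rw [mem_mId_iff, ← rep_zero_eq]
  exact (mem_IX_iff.1 hg).self_of_nhdsWithin h0

lemma isUnit_iff {g : On n} : IsUnit g ↔ coeff 0 g ≠ 0 := by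
  refine ⟨?_, fun h => ?_⟩
  · rintro ⟨u, rfl⟩ h0
    have h1 : coeff 0 (u.1 * u.2) = 1 := by rw [u.3, coeff_zero_one]
    rw [coeff_zero_mul, h0, zero_mul] at h1
    exact zero_ne_one h1
  · rw [← rep_zero_eq] at h
    have hinv := (On.rep_analyticAt g).inv h
    refine IsUnit.of_mul_eq_one (mkOn _ hinv) (ext_rep ?_)
    rw [← map_one (algebraMap ℂ (On n))]
    filter_upwards [rep_mul g (mkOn _ hinv), rep_algebraMap 1,
      (On.rep_analyticAt g).continuousAt.eventually_ne h, rep_mkOn hinv] with x hmul hone hne hrep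
    rw [hmul, hone, Pi.mul_apply, hrep, Pi.inv_apply, mul_inv_cancel₀ hne]

instance : IsLocalRing (On n) := IsLocalRing.of_nonunits_add fun a b ha hb => by
  rw [mem_nonunits_iff, isUnit_iff, not_not] at *
  rw [map_add, ha, hb, add_zero]

lemma maximalIdeal_eq : IsLocalRing.maximalIdeal (On n) = mId n := by
  ext g
  rw [IsLocalRing.mem_maximalIdeal, mem_nonunits_iff, isUnit_iff, not_not, mem_mId_iff]

instance : (mId n).IsMaximal := maximalIdeal_eq (n := n) ▸ inferInstance

lemma coordG_mem_mId (i : Fin n) : coordG i ∈ mId n := by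
  classical
  rw [mem_mId_iff, coeff_def, taylor_coordG, MvPowerSeries.coeff_zero_X]

end LocalRing

section MonomialIdeals

lemma mem_span_mvPow {g : On n} {S : Finset (Fin n →₀ ℕ)}
    (hS : ∀ α, coeff α g ≠ 0 → ∃ β ∈ S, β ≤ α) : g ∈ Ideal.span (mvPow coordG '' S) := by
  classical
  obtain ⟨t, ht, hg⟩ := exists_weightedSummable_taylor g
  choose! s hs using hS
  choose q hq using fun α => exists_taylor_eq (fun _ => ht) (hg.cofactor (fun _ => ht) s α)
  have hsum : g = ∑ α ∈ S, q α * mvPow coordG α := taylor_injective <| by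
    simp only [map_sum, map_mul, hq, taylor_mvPow_coordG]
    exact (sum_cofactor_mul_monomial hs).symm
  rw [hsum]
  exact Ideal.sum_mem _ fun α hα =>
    Ideal.mul_mem_left _ _ (Ideal.subset_span (Set.mem_image_of_mem _ hα))

lemma mvPow_coordG_mem (α : Fin n →₀ ℕ) : mvPow coordG α ∈ mId n ^ α.degree := by
  rw [Finsupp.degree_eq_sum, ← Finset.prod_pow_eq_pow_sum]
  exact Ideal.prod_mem_prod fun i _ => Ideal.pow_mem_pow (coordG_mem_mId i) _

lemma mem_mId_pow_iff {k : ℕ} {g : On n} :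
    g ∈ mId n ^ k ↔ ∀ α : Fin n →₀ ℕ, α.degree < k → coeff α g = 0 := by
  constructor
  · suffices horder : g ∈ mId n ^ k → (k : ℕ∞) ≤ (taylor n g).order from fun h α hα =>
      MvPowerSeries.coeff_of_lt_order ((Nat.cast_lt.2 hα).trans_le (horder h))
    induction k generalizing g with
    | zero => simp
    | succ k ih =>
      intro h
      rw [pow_succ] at h
      refine Submodule.mul_induction_on h (fun a ha b hb => ?_) fun a b ha hb => ?_
      · rw [map_mul, Nat.cast_succ]
        exact (add_le_add (ih ha) (MvPowerSeries.one_le_order_iff_constCoeff_eq_zero.2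
          (mem_mId_iff.1 hb))).trans MvPowerSeries.le_order_mul
      · rw [map_add]
        exact (le_min ha hb).trans MvPowerSeries.min_order_le_add
  · intro h
    refine Ideal.span_le.2 ?_ (mem_span_mvPow (S := multiIndices (Fin n) k) fun α hα => ?_)
    · rintro _ ⟨α, hα, rfl⟩
      exact mem_multiIndices.1 hα ▸ mvPow_coordG_mem α
    · obtain ⟨β, hβα, hβ⟩ := Finsupp.exists_le_degree_eq α k (not_lt.1 fun hk => hα (h α hk))
      exact ⟨β, mem_multiIndices.2 hβ, hβα⟩

lemma mId_eq_span : mId n = Ideal.span (Set.range coordG) := by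
  classical
  refine le_antisymm (fun g hg => ?_) (Ideal.span_le.2 ?_)
  · refine Ideal.span_mono ?_ (mem_span_mvPow
      (S := Finset.univ.image fun i => Finsupp.single i 1) fun α hα => ?_)
    · rintro _ ⟨_, hβ, rfl⟩
      obtain ⟨i, -, rfl⟩ := Finset.mem_image.1 hβ
      exact ⟨i, by rw [mvPow_single, pow_one]⟩
    · obtain ⟨i, hi⟩ := Finsupp.ne_iff.1 fun h0 : α = 0 => hα (h0 ▸ mem_mId_iff.1 hg)
      exact ⟨_, Finset.mem_image_of_mem _ (Finset.mem_univ i),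
        Finsupp.single_le_iff.2 (Nat.one_le_iff_ne_zero.2 hi)⟩
  · rintro _ ⟨i, rfl⟩
    exact coordG_mem_mId i

lemma eq_zero_of_mem_mId_pow {g : On n} (h : ∀ k, g ∈ mId n ^ k) : g = 0 :=
  ext_coeff fun α => by rw [map_zero, mem_mId_pow_iff.1 (h (α.degree + 1)) α (Nat.lt_succ_self _)]

lemma sub_sum_coeff_smul_mem (k : ℕ) (g : On n) :
    g - ∑ α ∈ (Finsupp.finite_of_degree_lt k).toFinset, coeff α g • mvPow coordG α ∈ mId n ^ k := by
  classical
  refine mem_mId_pow_iff.2 fun α hα => ?_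
  simp [coeff_mvPow, hα]

instance finiteDimensional_quotient_mId_pow (k : ℕ) : FiniteDimensional ℂ (On n ⧸ mId n ^ k) := by
  have := (Finsupp.finite_of_degree_lt (σ := Fin n) k).to_subtype
  let L : On n →ₗ[ℂ] ({α : Fin n →₀ ℕ | α.degree < k} → ℂ) := LinearMap.pi fun α => coeff α.1
  have hL : LinearMap.ker L = (mId n ^ k).restrictScalars ℂ := by
    ext g
    simp [L, mem_mId_pow_iff, funext_iff]
  exact Module.Finite.equiv (L.quotKerEquivRange.symm.trans (Submodule.quotEquivOfEq _ _ hL))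

end MonomialIdeals

end On

/-! ### Derivations -/

section Derivation

variable {R A : Type*} [CommRing R] [CommRing A] [Algebra R A]

lemma derivation_apply_mem_pow (D : Derivation R A A) (I : Ideal A) {k : ℕ} {a : A}
    (ha : a ∈ I ^ (k + 1)) : D a ∈ I ^ k := by
  induction k generalizing a with
  | zero => simp
  | succ k ih =>
    rw [pow_succ] at ha
    refine Submodule.mul_induction_on ha (fun b hb c hc => ?_) fun b c hb hc => ?_
    · rw [D.leibniz, smul_eq_mul, smul_eq_mul]
      refine add_mem (Ideal.mul_mem_right _ _ hb) ?_
      rw [pow_succ']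
      exact Ideal.mul_mem_mul hc (ih hb)
    · rw [map_add]
      exact add_mem hb hc

lemma derivation_apply_mem_pow_of_mapsTo {D : Derivation R A A} {I : Ideal A}
    (hD : ∀ a ∈ I, D a ∈ I) {k : ℕ} {a : A} (ha : a ∈ I ^ k) : D a ∈ I ^ k := by
  induction k generalizing a with
  | zero => simp
  | succ k ih =>
    rw [pow_succ] at ha ⊢
    refine Submodule.mul_induction_on ha (fun b hb c hc => ?_) fun b c hb hc => ?_
    · rw [D.leibniz, smul_eq_mul, smul_eq_mul, mul_comm c]
      exact add_mem (Ideal.mul_mem_mul hb (hD c hc)) (Ideal.mul_mem_mul (ih hb) hc)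
    · rw [map_add]
      exact add_mem hb hc

lemma derivation_mem_of_mem_span {D : Derivation R A A} {I : Ideal A} {s : Set A} (hs : s ⊆ I)
    (hD : ∀ a ∈ s, D a ∈ I) {a : A} (ha : a ∈ Ideal.span s) : D a ∈ I := by
  induction ha using Submodule.span_induction with
  | mem a ha => exact hD a ha
  | zero => simp
  | add a b _ _ ha hb => exact map_add D a b ▸ add_mem ha hb
  | smul r a h ha =>
    rw [smul_eq_mul, Derivation.leibniz]
    exact add_mem (I.mul_mem_left _ ha) (I.mul_mem_right _ (Ideal.span_le.2 hs h))

end Derivation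

namespace On

lemma rep_pd {g : On n} {f : (Fin n → ℂ) → ℂ} (h : On.rep g =ᶠ[𝓝 0] f) (i : Fin n) :
    On.rep (pd i g) =ᶠ[𝓝 0] fun x => fderiv ℂ f x (Pi.single i 1) := by
  refine (rep_mkOn _).trans ?_
  filter_upwards [h.fderiv (𝕜 := ℂ)] with x hx
  rw [hx]

lemma pd_add (i : Fin n) (g h : On n) : pd i (g + h) = pd i g + pd i h := by
  refine ext_rep ((rep_pd (rep_add g h) i).trans (EventuallyEq.trans ?_ (rep_add _ _).symm))
  filter_upwards [rep_pd (EventuallyEq.refl _ (On.rep g)) i,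
    rep_pd (EventuallyEq.refl _ (On.rep h)) i, (On.rep_analyticAt g).eventually_analyticAt,
    (On.rep_analyticAt h).eventually_analyticAt] with x hg hh hga hha
  rw [fderiv_add hga.differentiableAt hha.differentiableAt, Pi.add_apply, hg, hh]
  rfl

lemma pd_mul (i : Fin n) (g h : On n) : pd i (g * h) = g * pd i h + h * pd i g := by
  refine ext_rep ((rep_pd (rep_mul g h) i).trans (EventuallyEq.trans ?_ (rep_add _ _).symm))
  filter_upwards [rep_pd (EventuallyEq.refl _ (On.rep g)) i,
    rep_pd (EventuallyEq.refl _ (On.rep h)) i, (On.rep_analyticAt g).eventually_analyticAt,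
    (On.rep_analyticAt h).eventually_analyticAt, rep_mul g (pd i h), rep_mul h (pd i g)]
    with x hg hh hga hha hgh hhg
  rw [fderiv_mul hga.differentiableAt hha.differentiableAt, Pi.add_apply, hgh, hhg, Pi.mul_apply,
    Pi.mul_apply, hg, hh]
  rfl

lemma pd_algebraMap (i : Fin n) (c : ℂ) : pd i (algebraMap ℂ (On n) c) = 0 := by
  rw [← map_zero (algebraMap ℂ (On n))]
  refine ext_rep ((rep_pd (rep_algebraMap c) i).trans
    (EventuallyEq.trans ?_ (rep_algebraMap 0).symm))
  filter_upwards with x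
  simp

lemma pd_smul (i : Fin n) (c : ℂ) (g : On n) : pd i (c • g) = c • pd i g := by
  rw [Algebra.smul_def, pd_mul, pd_algebraMap, mul_zero, add_zero, Algebra.smul_def]

lemma pd_coordG (i j : Fin n) : pd i (coordG j) = if i = j then 1 else 0 := by
  rw [show (if i = j then (1 : On n) else 0) = algebraMap ℂ (On n) (if i = j then 1 else 0) by
    split_ifs <;> simp]
  refine ext_rep ((rep_pd (rep_mkOn _) i).trans (EventuallyEq.trans ?_ (rep_algebraMap _).symm))
  filter_upwards with x
  rw [show (fun x : Fin n → ℂ => x j) =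
    ContinuousLinearMap.proj (R := ℂ) (φ := fun _ : Fin n => ℂ) j from rfl,
    ContinuousLinearMap.fderiv, ContinuousLinearMap.proj_apply, Pi.single_apply]
  simp only [eq_comm]

/-- The `i`-th partial derivative `pd i`, bundled as a derivation of `𝒪ₙ`. -/
def partialDer (i : Fin n) : Derivation ℂ (On n) (On n) :=
  Derivation.mk' { toFun := pd i, map_add' := pd_add i, map_smul' := pd_smul i } (pd_mul i)

lemma partialDer_apply (i : Fin n) (g : On n) : partialDer i g = pd i g := rfl

/-- The vector field with components `δ`, as the derivation `applyVF δ` of `𝒪ₙ`. -/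
def vectorField (δ : Fin n → On n) : Derivation ℂ (On n) (On n) := ∑ i, δ i • partialDer i

lemma vectorField_apply (δ : Fin n → On n) (g : On n) : vectorField δ g = applyVF δ g := by
  rw [vectorField, ← Derivation.coeFnAddMonoidHom_apply, map_sum, Finset.sum_apply]
  rfl

lemma vectorField_coordG (δ : Fin n → On n) (j : Fin n) : vectorField δ (coordG j) = δ j := by
  rw [vectorField_apply, applyVF]
  simp [pd_coordG]

lemma exists_mem_adjoin_sub_mem (k : ℕ) (g : On n) :
    ∃ p ∈ Algebra.adjoin ℂ (Set.range (coordG (n := n))), g - p ∈ mId n ^ k := by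
  refine ⟨_, Subalgebra.sum_mem _ fun α _ => Subalgebra.smul_mem _ ?_ _, sub_sum_coeff_smul_mem k g⟩
  exact Subalgebra.prod_mem _ fun i _ =>
    Subalgebra.pow_mem _ (Algebra.subset_adjoin (Set.mem_range_self i)) (α i)

lemma derivation_ext {D E : Derivation ℂ (On n) (On n)}
    (h : ∀ j, D (coordG j) = E (coordG j)) : D = E := by
  ext1 g
  refine sub_eq_zero.1 (eq_zero_of_mem_mId_pow fun k => ?_)
  obtain ⟨p, hp, hgp⟩ := exists_mem_adjoin_sub_mem (k + 1) g
  have hDE : D p = E p := Derivation.eqOn_adjoin (by rintro _ ⟨j, rfl⟩; exact h j) hp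
  have hmem := derivation_apply_mem_pow (D - E) (mId n) hgp
  rwa [map_sub, Derivation.sub_apply, Derivation.sub_apply, hDE, sub_self, sub_zero] at hmem

lemma derivation_eq_vectorField (D : Derivation ℂ (On n) (On n)) :
    D = vectorField fun j => D (coordG j) :=
  derivation_ext fun j => by rw [vectorField_coordG]

lemma taylor_pd_of_mem_adjoin (i : Fin n) {p : On n}
    (hp : p ∈ Algebra.adjoin ℂ (Set.range (coordG (n := n)))) :
    taylor n (pd i p) = MvPowerSeries.pderiv ℂ i (taylor n p) := by
  induction hp using Algebra.adjoin_induction with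
  | mem _ h =>
    obtain ⟨j, rfl⟩ := h
    rw [pd_coordG, taylor_coordG]
    split_ifs with hij
    · rw [hij, map_one, MvPowerSeries.pderiv_X_self]
    · rw [map_zero, MvPowerSeries.pderiv_X_of_ne (Ne.symm hij)]
  | algebraMap c => rw [pd_algebraMap, map_zero, AlgHom.commutes, Derivation.map_algebraMap]
  | add p q _ _ hp hq => simp only [pd_add, map_add, hp, hq]
  | mul p q _ _ hp hq =>
    simp only [pd_mul, map_add, map_mul, hp, hq, Derivation.leibniz, smul_eq_mul]

lemma coeff_pd (i : Fin n) (g : On n) (α : Fin n →₀ ℕ) :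
    coeff α (pd i g) = coeff (α + Finsupp.single i 1) g * (α i + 1) := by
  obtain ⟨p, hp, hgp⟩ := exists_mem_adjoin_sub_mem (α.degree + 2) g
  have hleft := mem_mId_pow_iff.1 (derivation_apply_mem_pow (partialDer i) _ hgp) α (by lia)
  have hright := mem_mId_pow_iff.1 hgp (α + Finsupp.single i 1)
    (by rw [map_add, Finsupp.degree_single]; lia)
  rw [map_sub, partialDer_apply, partialDer_apply, map_sub, sub_eq_zero] at hleft
  rw [map_sub, sub_eq_zero] at hright
  rw [hleft, hright, coeff_def, taylor_pd_of_mem_adjoin i hp, MvPowerSeries.coeff_pderiv, coeff_def]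

end On

/-! ### Perturbations of the identity of `ℓ¹` -/

section Perturbation

variable {ι : Type*}

lemma summable_norm_lp_one (v : lp (fun _ : ι => ℂ) 1) : Summable fun i => ‖v i‖ := by
  simpa using (memℓp_gen_iff (p := 1) (by norm_num)).1 (lp.memℓp v)

lemma norm_lp_one (v : lp (fun _ : ι => ℂ) 1) : ‖v‖ = ∑' i, ‖v i‖ := by
  simpa using lp.norm_rpow_eq_tsum (p := 1) (by norm_num) v

lemma summable_smul_lp_one {E : Type*} [NormedAddCommGroup E] [NormedSpace ℂ E] [CompleteSpace E]
    {p : ι → E} {c : ℝ} (hp : ∀ β, ‖p β‖ ≤ c) (v : lp (fun _ : ι => ℂ) 1) :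
    Summable (fun β => v β • p β) ∧ ‖∑' β, v β • p β‖ ≤ c * ‖v‖ := by
  have hle (β) : ‖v β • p β‖ ≤ c * ‖v β‖ := by
    rw [norm_smul, mul_comm c]
    exact mul_le_mul_of_nonneg_left (hp β) (norm_nonneg _)
  have hsum := (summable_norm_lp_one v).mul_left c
  refine ⟨.of_norm_bounded hsum hle, ?_⟩
  rw [norm_lp_one, ← tsum_mul_left]
  exact tsum_of_norm_bounded hsum.hasSum hle

lemma exists_hasSum_smul_eq_sub {p : ι → lp (fun _ : ι => ℂ) 1} {c : ℝ} (hc : c < 1) (hc0 : 0 ≤ c)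
    (hp : ∀ β, ‖p β‖ ≤ c) (g : lp (fun _ : ι => ℂ) 1) :
    ∃ v : lp (fun _ : ι => ℂ) 1, HasSum (fun β => v β • p β) (g - v) := by
  have hs (v) := (summable_smul_lp_one hp v).1
  let M : lp (fun _ : ι => ℂ) 1 →L[ℂ] lp (fun _ : ι => ℂ) 1 := LinearMap.mkContinuous
    { toFun := fun v => ∑' β, v β • p β
      map_add' := fun v w => by
        simp only [lp.coeFn_add, Pi.add_apply, add_smul, (hs v).tsum_add (hs w)]
      map_smul' := fun a v => by
        simp only [lp.coeFn_smul, Pi.smul_apply, smul_assoc, (hs v).tsum_const_smul,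
          RingHom.id_apply] }
    c fun v => (summable_smul_lp_one hp v).2
  have hM : ‖-M‖ < 1 := (norm_neg M).trans_lt
    ((LinearMap.mkContinuous_norm_le _ hc0 _).trans_lt hc)
  obtain ⟨u, hu⟩ := (isUnit_one_sub_of_norm_lt_one hM).exists_right_inv
  have hug : u g + M (u g) = g := by simpa using congr($hu g)
  refine ⟨u g, ?_⟩
  rw [sub_eq_of_eq_add' hug.symm]
  exact (hs (u g)).hasSum

lemma exists_hasSum_mul_eq_sub {ρ : ι → ℝ} (hρ : ∀ i, 0 < ρ i) {P : ι → ι → ℂ} {c : ℝ} (hc : c < 1)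
    (hc0 : 0 ≤ c) (hP : ∀ β, Summable fun γ => ‖P β γ‖ * ρ γ)
    (hPc : ∀ β, ∑' γ, ‖P β γ‖ * ρ γ ≤ c * ρ β) {g : ι → ℂ} (hg : Summable fun γ => ‖g γ‖ * ρ γ) :
    ∃ v : ι → ℂ, (Summable fun γ => ‖v γ‖ * ρ γ) ∧
      ∀ γ, HasSum (fun β => v β * P β γ) (g γ - v γ) := by
  have hn (i) : ‖(ρ i : ℂ)‖ = ρ i := by rw [Complex.norm_real, Real.norm_of_nonneg (hρ i).le]
  have hne (i) : (ρ i : ℂ) ≠ 0 := Complex.ofReal_ne_zero.2 (hρ i).ne'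
  have hpn (β γ) : ‖P β γ * ρ γ / ρ β‖ = ‖P β γ‖ * ρ γ / ρ β := by rw [norm_div, norm_mul, hn, hn]
  let p (β) : lp (fun _ : ι => ℂ) 1 := ⟨fun γ => P β γ * ρ γ / ρ β,
    memℓp_gen (p := 1) (by
      simpa only [hpn, ENNReal.toReal_one, Real.rpow_one] using (hP β).div_const (ρ β))⟩
  have hp (β) : ‖p β‖ ≤ c := by
    rw [norm_lp_one]
    simpa only [p, hpn, tsum_div_const, div_le_iff₀ (hρ β)] using hPc β
  obtain ⟨v, hv⟩ := exists_hasSum_smul_eq_sub hc hc0 hp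
    ⟨fun γ => g γ * ρ γ, memℓp_gen (p := 1) (by
      simpa only [norm_mul, hn, ENNReal.toReal_one, Real.rpow_one] using hg)⟩
  refine ⟨fun γ => v γ / ρ γ, ?_, fun γ => ?_⟩
  · simpa only [norm_div, hn, div_mul_cancel₀ _ (hρ _).ne'] using summable_norm_lp_one v
  · have hγ : HasSum (fun β => v β * (P β γ * ρ γ / ρ β)) (g γ * ρ γ - v γ) :=
      (lp.evalCLM ℂ (fun _ : ι => ℂ) 1 γ).hasSum hv
    have hcol (β) : v β / ρ β * P β γ = v β * (P β γ * ρ γ / ρ β) / ρ γ := by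
      have hβ := hne β
      have hγ := hne γ
      field_simp
    have hdiv := hγ.div_const (ρ γ : ℂ)
    rw [sub_div, mul_div_cancel_right₀ _ (hne γ)] at hdiv
    simpa only [hcol] using hdiv

variable {σ : Type*} [Fintype σ] {r : σ → ℝ}

lemma WeightedSummable.exists_hasSum_coeff_mul_eq_sub (hr : ∀ i, 0 < r i)
    {P : (σ →₀ ℕ) → MvPowerSeries σ ℂ} {c : ℝ} (hc : c < 1) (hc0 : 0 ≤ c)
    (hP : ∀ β, WeightedSummable r (P β)) (hPc : ∀ β, weightedNorm r (P β) ≤ c * mvPow r β)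
    {g : MvPowerSeries σ ℂ} (hg : WeightedSummable r g) :
    ∃ v : MvPowerSeries σ ℂ, WeightedSummable r v ∧ ∀ γ,
      HasSum (fun β => MvPowerSeries.coeff β v * MvPowerSeries.coeff γ (P β))
        (MvPowerSeries.coeff γ g - MvPowerSeries.coeff γ v) :=
  exists_hasSum_mul_eq_sub (mvPow_pos hr) hc hc0 hP hPc hg

end Perturbation

/-! ### Noetherianity -/

lemma exists_finset_forall_exists_le {σ : Type*} [Finite σ] (E : Set (σ →₀ ℕ)) :
    ∃ S : Finset (σ →₀ ℕ), (∀ α ∈ S, α ∈ E) ∧ ∀ β ∈ E, ∃ α ∈ S, α ≤ β := by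
  have hfin : {α | Minimal (· ∈ E) α}.Finite :=
    (setOfPred_minimal_antichain (· ∈ E)).finite_of_wellQuasiOrdered wellQuasiOrdered_le
  refine ⟨hfin.toFinset, fun α hα => (hfin.mem_toFinset.1 hα).prop, fun β hβ => ?_⟩
  obtain ⟨α, hαβ, hα⟩ := exists_minimal_le_of_wellFoundedLT (· ∈ E) β hβ
  exact ⟨α, hfin.mem_toFinset.2 hα, hαβ⟩

section Division

variable {σ : Type*} [Fintype σ] {r : σ → ℝ}

lemma weightedNorm_monomial_sub_mul_le (hr : ∀ i, 0 ≤ r i) {b : MvPowerSeries σ ℂ} {α β : σ →₀ ℕ}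
    (hαβ : α ≤ β) {c : ℝ} (hb : WeightedSummable r b) (hbc : weightedNorm r b ≤ c * mvPow r α) :
    weightedNorm r (MvPowerSeries.monomial (β - α) 1 * b) ≤ c * mvPow r β :=
  calc _ ≤ weightedNorm r (MvPowerSeries.monomial (β - α) (1 : ℂ)) * weightedNorm r b :=
        weightedNorm_mul_le hr (weightedSummable_monomial r _ _) hb
    _ ≤ mvPow r (β - α) * (c * mvPow r α) := by
        rw [weightedNorm_monomial, norm_one, one_mul]
        exact mul_le_mul_of_nonneg_left hbc (mvPow_nonneg hr _)
    _ = c * mvPow r (β - α + α) := by rw [mvPow_add]; ring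
    _ = c * mvPow r β := by rw [tsub_add_cancel_of_le hαβ]

lemma exists_forall_coeff_sub_sum_mul_eq_zero (hr : ∀ i, 0 < r i) {E : Set (σ →₀ ℕ)}
    {S : Finset (σ →₀ ℕ)} (hE : ∀ β ∈ E, ∃ α ∈ S, α ≤ β) {G : (σ →₀ ℕ) → MvPowerSeries σ ℂ}
    (hG : ∀ α ∈ S, WeightedSummable r (G α - MvPowerSeries.monomial α 1) ∧
      weightedNorm r (G α - MvPowerSeries.monomial α 1) ≤ 1 / 2 * mvPow r α)
    {g : MvPowerSeries σ ℂ} (hg : WeightedSummable r g) :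
    ∃ q : (σ →₀ ℕ) → MvPowerSeries σ ℂ, (∀ α, WeightedSummable r (q α)) ∧
      ∀ β ∈ E, MvPowerSeries.coeff β (g - ∑ α ∈ S, q α * G α) = 0 := by
  classical
  have hr0 (i) : 0 ≤ r i := (hr i).le
  choose! s hsS hs using hE
  let P (β : σ →₀ ℕ) : MvPowerSeries σ ℂ := if β ∈ E then
    MvPowerSeries.monomial (β - s β) 1 * (G (s β) - MvPowerSeries.monomial (s β) 1) else 0
  have hP (β) : WeightedSummable r (P β) ∧ weightedNorm r (P β) ≤ 1 / 2 * mvPow r β := by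
    by_cases hβ : β ∈ E
    · obtain ⟨hsum, hnorm⟩ := hG _ (hsS β hβ)
      simp only [P, if_pos hβ]
      exact ⟨(weightedSummable_monomial r _ _).mul hr0 hsum,
        weightedNorm_monomial_sub_mul_le hr0 (hs β hβ) hsum hnorm⟩
    · simp only [P, if_neg hβ]
      exact ⟨weightedSummable_zero r, by
        rw [weightedNorm_zero]; exact mul_nonneg (by norm_num) (mvPow_nonneg hr0 β)⟩
  obtain ⟨v, hv, hvP⟩ := WeightedSummable.exists_hasSum_coeff_mul_eq_sub hr (by norm_num)
    (by norm_num) (fun β => (hP β).1) (fun β => (hP β).2) hg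
  let w : MvPowerSeries σ ℂ := fun β => if β ∈ E then MvPowerSeries.coeff β v else 0
  have hw (β) : MvPowerSeries.coeff β w = if β ∈ E then MvPowerSeries.coeff β v else 0 := rfl
  have hwE {β} (h : MvPowerSeries.coeff β w ≠ 0) : β ∈ E := by
    by_contra hβ
    exact h (by rw [hw, if_neg hβ])
  have hwr : WeightedSummable r w := WeightedSummable.of_le hr0 hv fun β => by
    refine mul_le_mul_of_nonneg_right ?_ (mvPow_nonneg hr0 β)
    rw [hw]
    split_ifs <;> simp
  refine ⟨cofactor s w, hwr.cofactor hr s, fun γ hγ => ?_⟩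
  have hsum := (hasSum_coeff_sum_cofactor_mul (a := w) (S := S)
    (fun β hβ => ⟨hsS β (hwE hβ), hs β (hwE hβ)⟩) G γ).sub (hasSum_coeff_mul w 1 γ)
  have hterm (β) : MvPowerSeries.coeff β w * MvPowerSeries.coeff γ
      (MvPowerSeries.monomial (β - s β) 1 * G (s β)) - MvPowerSeries.coeff β w *
      MvPowerSeries.coeff γ (MvPowerSeries.monomial β 1 * 1) =
      MvPowerSeries.coeff β v * MvPowerSeries.coeff γ (P β) := by
    by_cases hβ : β ∈ E
    · simp only [hw, P, if_pos hβ, mul_one, mul_sub, map_sub, MvPowerSeries.monomial_mul_monomial,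
        tsub_add_cancel_of_le (hs β hβ)]
    · simp only [hw, P, if_neg hβ, zero_mul, map_zero, mul_zero, sub_zero]
  have huniq := (hvP γ).unique (by simpa only [hterm] using hsum)
  rw [mul_one, hw, if_pos hγ] at huniq
  rw [map_sub, sub_eq_zero]
  exact sub_left_injective huniq

end Division

/-- The `i`-th prime number, used as a weight for the `i`-th coordinate. -/
def nthPrime (i : Fin n) : ℕ := Nat.nth Nat.Prime i

lemma prime_nthPrime (i : Fin n) : (nthPrime i).Prime := Nat.prime_nth_prime i

lemma nthPrime_injective : Function.Injective (nthPrime (n := n)) := fun _ _ h =>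
  Fin.ext (Nat.nth_injective Nat.infinite_setOfPred_prime h)

/-- The Gödel number `∏ pᵢ ^ αᵢ` of a multi-index; comparing Gödel numbers is a total monomial
order. -/
def goedelNumber (α : Fin n →₀ ℕ) : ℕ := mvPow nthPrime α

lemma goedelNumber_pos (α : Fin n →₀ ℕ) : 0 < goedelNumber α := by
  unfold goedelNumber mvPow
  exact Finset.prod_pos fun i _ => pow_pos (prime_nthPrime i).pos _

lemma factorization_goedelNumber (α : Fin n →₀ ℕ) (j : Fin n) :
    (goedelNumber α).factorization (nthPrime j) = α j := by
  unfold goedelNumber mvPow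
  rw [Nat.factorization_prod fun i _ => pow_ne_zero _ (prime_nthPrime i).ne_zero,
    Finsupp.finsetSum_apply, Finset.sum_eq_single_of_mem j (Finset.mem_univ j),
    (prime_nthPrime j).factorization_pow, Finsupp.single_eq_same]
  intro i _ hij
  rw [(prime_nthPrime i).factorization_pow,
    Finsupp.single_eq_of_ne (nthPrime_injective.ne hij.symm)]

lemma goedelNumber_injective : Function.Injective (goedelNumber (n := n)) := fun α β h => by
  ext j
  rw [← factorization_goedelNumber, h, factorization_goedelNumber]

/-- The polyradius `(pᵢ ^ (-s))ᵢ`, for which the monomial `x ^ α` has weighted norm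
`(goedelNumber α) ^ (-s)`. -/
def primeRadius (s : ℕ) (i : Fin n) : ℝ := ((nthPrime i : ℝ) ^ s)⁻¹

lemma primeRadius_pos (s : ℕ) (i : Fin n) : 0 < primeRadius s i :=
  inv_pos.2 (pow_pos (Nat.cast_pos.2 (prime_nthPrime i).pos) s)

lemma mvPow_primeRadius (s : ℕ) (α : Fin n →₀ ℕ) :
    mvPow (primeRadius s) α = ((goedelNumber α : ℝ) ^ s)⁻¹ := by
  simp only [mvPow, primeRadius, goedelNumber, Nat.cast_prod, Nat.cast_pow, inv_pow,
    Finset.prod_inv_distrib, ← Finset.prod_pow, ← pow_mul, mul_comm]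

lemma eventually_primeRadius_le {t : ℝ} (ht : 0 < t) :
    ∀ᶠ s in atTop, ∀ i : Fin n, primeRadius s i ≤ t := by
  refine eventually_all.2 fun i => ?_
  have hlim : Tendsto (fun s => primeRadius s i) atTop (𝓝 0) := by
    simp only [primeRadius, ← inv_pow]
    exact tendsto_pow_atTop_nhds_zero_of_lt_one (by positivity)
      (inv_lt_one_of_one_lt₀ (Nat.one_lt_cast.2 (prime_nthPrime i).one_lt))
  exact hlim.eventually_le_const ht

lemma eventually_weightedNorm_le {a : MvPowerSeries (Fin n) ℂ} {α : Fin n →₀ ℕ}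
    (ha : ∀ᶠ s in atTop, WeightedSummable (primeRadius s) a)
    (hα : ∀ γ, MvPowerSeries.coeff γ a ≠ 0 → goedelNumber α < goedelNumber γ) :
    ∀ᶠ s in atTop, weightedNorm (primeRadius s) a ≤ 1 / 2 * mvPow (primeRadius s) α := by
  have hα0 : (0 : ℝ) < goedelNumber α := Nat.cast_pos.2 (goedelNumber_pos α)
  obtain ⟨s₀, hs₀⟩ := ha.exists
  let u (s : ℕ) (γ : Fin n →₀ ℕ) : ℝ :=
    ‖MvPowerSeries.coeff γ a‖ * ((goedelNumber α : ℝ) / goedelNumber γ) ^ s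
  have hu (s γ) : u s γ =
      ‖MvPowerSeries.coeff γ a‖ * mvPow (primeRadius s) γ * (goedelNumber α : ℝ) ^ s := by
    simp only [u, mvPow_primeRadius, div_pow]
    ring
  have hratio {γ} (hγ : MvPowerSeries.coeff γ a ≠ 0) : (goedelNumber α : ℝ) / goedelNumber γ < 1 :=
    (div_lt_one (hα0.trans (Nat.cast_lt.2 (hα γ hγ)))).2 (Nat.cast_lt.2 (hα γ hγ))
  have hlim (γ) : Tendsto (fun s => u s γ) atTop (𝓝 0) := by
    by_cases hγ : MvPowerSeries.coeff γ a = 0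
    · simp [u, hγ]
    · simpa only [mul_zero] using (tendsto_pow_atTop_nhds_zero_of_lt_one (by positivity)
        (hratio hγ)).const_mul ‖MvPowerSeries.coeff γ a‖
  have hbound : ∀ᶠ s in atTop, ∀ γ, ‖u s γ‖ ≤ u s₀ γ := by
    filter_upwards [eventually_ge_atTop s₀] with s hs γ
    by_cases hγ : MvPowerSeries.coeff γ a = 0
    · simp [u, hγ]
    · rw [Real.norm_of_nonneg (by positivity)]
      exact mul_le_mul_of_nonneg_left
        (pow_le_pow_of_le_one (by positivity) (hratio hγ).le hs) (norm_nonneg _)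
  have hsum : Summable (u s₀) := (Summable.mul_right _ hs₀).congr fun γ => (hu s₀ γ).symm
  have htsum := tendsto_tsum_of_dominated_convergence hsum hlim hbound
  rw [tsum_zero] at htsum
  filter_upwards [htsum.eventually_le_const (u := 1 / 2) (by norm_num)] with s hs
  simp only [hu, tsum_mul_right] at hs
  rwa [mvPow_primeRadius, ← div_eq_mul_inv, le_div_iff₀ (pow_pos hα0 s)]

/-- The power series `a` has leading term `x ^ α`, with coefficient `1`, where the order on
monomials is the one given by Gödel numbers. -/
def HasMonicLeadingTerm (a : MvPowerSeries (Fin n) ℂ) (α : Fin n →₀ ℕ) : Prop :=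
  MvPowerSeries.coeff α a = 1 ∧
    ∀ β, MvPowerSeries.coeff β a ≠ 0 → goedelNumber α ≤ goedelNumber β

lemma exists_hasMonicLeadingTerm_smul {a : MvPowerSeries (Fin n) ℂ} (ha : a ≠ 0) :
    ∃ (c : ℂ) (α : Fin n →₀ ℕ), HasMonicLeadingTerm (c • a) α := by
  have hne : {α | MvPowerSeries.coeff α a ≠ 0}.Nonempty := by
    by_contra! h
    exact ha (MvPowerSeries.ext fun α => not_not.1 fun hα => h.subset hα)
  obtain ⟨α, hα, hmin⟩ := exists_minimalFor_of_wellFoundedLT _ goedelNumber hne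
  refine ⟨(MvPowerSeries.coeff α a)⁻¹, α, ?_, fun β hβ => ?_⟩
  · rw [MvPowerSeries.coeff_smul, inv_mul_cancel₀ hα]
  · rw [MvPowerSeries.coeff_smul] at hβ
    exact (le_total _ _).elim id (hmin (right_ne_zero_of_mul hβ))

namespace HasMonicLeadingTerm

variable {a : MvPowerSeries (Fin n) ℂ} {α : Fin n →₀ ℕ}

lemma lt_of_coeff_sub_ne_zero (h : HasMonicLeadingTerm a α) {γ : Fin n →₀ ℕ}
    (hγ : MvPowerSeries.coeff γ (a - MvPowerSeries.monomial α 1) ≠ 0) :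
    goedelNumber α < goedelNumber γ := by
  classical
  rw [map_sub, MvPowerSeries.coeff_monomial] at hγ
  rcases eq_or_ne γ α with rfl | hne
  · rw [h.1, if_pos rfl, sub_self] at hγ
    exact absurd rfl hγ
  · rw [if_neg hne, sub_zero] at hγ
    exact (h.2 γ hγ).lt_of_ne fun e => hne (goedelNumber_injective e.symm)

lemma eventually_weightedNorm_sub_le (h : HasMonicLeadingTerm a α)
    (ha : ∀ᶠ s in atTop, WeightedSummable (primeRadius s) a) :
    ∀ᶠ s in atTop, WeightedSummable (primeRadius s) (a - MvPowerSeries.monomial α 1) ∧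
      weightedNorm (primeRadius s) (a - MvPowerSeries.monomial α 1) ≤
        1 / 2 * mvPow (primeRadius s) α := by
  have hsub : ∀ᶠ s in atTop,
      WeightedSummable (primeRadius s) (a - MvPowerSeries.monomial α 1) := by
    filter_upwards [ha] with s hs
    rw [sub_eq_add_neg, ← map_neg]
    exact hs.add (fun i => (primeRadius_pos s i).le) (weightedSummable_monomial _ _ _)
  exact hsub.and (eventually_weightedNorm_le hsub fun _ => h.lt_of_coeff_sub_ne_zero)

end HasMonicLeadingTerm

namespace On

lemma eventually_weightedSummable_taylor (g : On n) :
    ∀ᶠ s in atTop, WeightedSummable (primeRadius s) (taylor n g) := by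
  obtain ⟨t, ht, hg⟩ := exists_weightedSummable_taylor g
  filter_upwards [eventually_primeRadius_le ht] with s hs
  exact hg.mono (fun i => (primeRadius_pos s i).le) hs

lemma exists_forall_coeff_sub_sum_mul_eq_zero {E : Set (Fin n →₀ ℕ)} {S : Finset (Fin n →₀ ℕ)}
    (hE : ∀ β ∈ E, ∃ α ∈ S, α ≤ β) {G : (Fin n →₀ ℕ) → On n}
    (hG : ∀ α ∈ S, HasMonicLeadingTerm (taylor n (G α)) α) (g : On n) :
    ∃ q : (Fin n →₀ ℕ) → On n, ∀ β ∈ E, coeff β (g - ∑ α ∈ S, q α * G α) = 0 := by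
  obtain ⟨s, hg, hGs⟩ := ((eventually_weightedSummable_taylor g).and
    ((Filter.eventually_all_finset S).2 fun α hα =>
      (hG α hα).eventually_weightedNorm_sub_le (eventually_weightedSummable_taylor _))).exists
  obtain ⟨Q, hQ, hzero⟩ := _root_.exists_forall_coeff_sub_sum_mul_eq_zero (primeRadius_pos s) hE
    (G := fun α => taylor n (G α)) hGs hg
  choose q hq using fun α => exists_taylor_eq (primeRadius_pos s) (hQ α)
  refine ⟨q, fun β hβ => ?_⟩
  simpa only [coeff_def, map_sub, map_sum, map_mul, hq] using hzero β hβ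

instance : IsNoetherianRing (On n) := by
  classical
  refine (isNoetherianRing_iff_ideal_fg _).2 fun I => ?_
  let E : Set (Fin n →₀ ℕ) := {α | ∃ g ∈ I, HasMonicLeadingTerm (taylor n g) α}
  obtain ⟨S, hSE, hE⟩ := exists_finset_forall_exists_le E
  choose! G hGI hG using hSE
  refine ⟨S.image G, le_antisymm (Ideal.span_le.2 ?_) fun g hg => ?_⟩
  · rw [Finset.coe_image, Set.image_subset_iff]
    exact hGI
  obtain ⟨q, hq⟩ := exists_forall_coeff_sub_sum_mul_eq_zero hE hG g
  have hu : g - ∑ α ∈ S, q α * G α = 0 := by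
    by_contra hne
    obtain ⟨c, α, hα⟩ := exists_hasMonicLeadingTerm_smul
      ((map_ne_zero_iff _ taylor_injective).2 hne)
    have huI : c • (g - ∑ α ∈ S, q α * G α) ∈ I := Submodule.smul_of_tower_mem I c
      (sub_mem hg (sum_mem fun α hα => Ideal.mul_mem_left _ _ (hGI α hα)))
    have hzero := hq α ⟨_, huI, by rwa [map_smul]⟩
    have hone := hα.1
    rw [MvPowerSeries.coeff_smul, ← coeff_def, hzero, mul_zero] at hone
    exact zero_ne_one hone
  rw [sub_eq_zero.1 hu]
  exact Ideal.sum_mem _ fun α hα => Ideal.mul_mem_left _ _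
    (Ideal.subset_span (Finset.mem_coe.2 (Finset.mem_image_of_mem G hα)))

end On

/-! ### Composition with analytic maps -/

namespace On

section Composition

variable {k m : ℕ} {ψ : (Fin m → ℂ) → (Fin n → ℂ)}

lemma eventuallyEq_comp (hψ : AnalyticAt ℂ ψ 0) (h0 : ψ 0 = 0) {g h : (Fin n → ℂ) → ℂ}
    (e : g =ᶠ[𝓝 0] h) : g ∘ ψ =ᶠ[𝓝 0] h ∘ ψ :=
  e.comp_tendsto (h0 ▸ hψ.continuousAt.tendsto)

lemma rep_comp_analyticAt (hψ : AnalyticAt ℂ ψ 0) (h0 : ψ 0 = 0) (g : On n) :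
    AnalyticAt ℂ (On.rep g ∘ ψ) 0 :=
  (h0.symm ▸ On.rep_analyticAt g : AnalyticAt ℂ (On.rep g) (ψ 0)).comp hψ

lemma mkOn_rep_algebraMap_comp (hψ : AnalyticAt ℂ ψ 0) (h0 : ψ 0 = 0) (c : ℂ) :
    mkOn _ (rep_comp_analyticAt hψ h0 (algebraMap ℂ (On n) c)) = algebraMap ℂ (On m) c :=
  ext_rep ((rep_mkOn _).trans
    ((eventuallyEq_comp hψ h0 (rep_algebraMap c)).trans (rep_algebraMap c).symm))

/-- Composition of germs at the origin with an analytic map fixing the origin. -/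
def comp (ψ : (Fin m → ℂ) → (Fin n → ℂ)) (hψ : AnalyticAt ℂ ψ 0) (h0 : ψ 0 = 0) :
    On n →ₐ[ℂ] On m where
  toFun g := mkOn (On.rep g ∘ ψ) (rep_comp_analyticAt hψ h0 g)
  map_one' := by simpa only [map_one] using mkOn_rep_algebraMap_comp hψ h0 1
  map_zero' := by simpa only [map_zero] using mkOn_rep_algebraMap_comp hψ h0 0
  map_add' g h := ext_rep ((rep_mkOn _).trans ((eventuallyEq_comp hψ h0 (rep_add g h)).trans
    ((rep_add _ _).trans ((rep_mkOn _).add (rep_mkOn _))).symm))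
  map_mul' g h := ext_rep ((rep_mkOn _).trans ((eventuallyEq_comp hψ h0 (rep_mul g h)).trans
    ((rep_mul _ _).trans ((rep_mkOn _).mul (rep_mkOn _))).symm))
  commutes' c := mkOn_rep_algebraMap_comp hψ h0 c

lemma rep_comp (hψ : AnalyticAt ℂ ψ 0) (h0 : ψ 0 = 0) (g : On n) :
    On.rep (comp ψ hψ h0 g) =ᶠ[𝓝 0] On.rep g ∘ ψ :=
  rep_mkOn (rep_comp_analyticAt hψ h0 g)

lemma rep_coordG (i : Fin n) : On.rep (coordG i) =ᶠ[𝓝 0] fun x => x i := rep_mkOn _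

lemma rep_comp_coordG (hψ : AnalyticAt ℂ ψ 0) (h0 : ψ 0 = 0) (i : Fin n) :
    On.rep (comp ψ hψ h0 (coordG i)) =ᶠ[𝓝 0] fun x => ψ x i :=
  (rep_comp hψ h0 _).trans (eventuallyEq_comp hψ h0 (rep_coordG i))

lemma comp_id (g : On n) : comp id analyticAt_id rfl g = g := ext_rep (rep_comp _ _ g)

lemma comp_comp {χ : (Fin k → ℂ) → (Fin m → ℂ)} {ω : (Fin k → ℂ) → (Fin n → ℂ)}
    (hψ : AnalyticAt ℂ ψ 0) (hψ0 : ψ 0 = 0) (hχ : AnalyticAt ℂ χ 0) (hχ0 : χ 0 = 0)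
    (hω : AnalyticAt ℂ ω 0) (hω0 : ω 0 = 0) (h : ∀ᶠ x in 𝓝 0, ψ (χ x) = ω x) (g : On n) :
    comp χ hχ hχ0 (comp ψ hψ hψ0 g) = comp ω hω hω0 g := by
  refine ext_rep ((rep_comp _ _ _).trans
    ((eventuallyEq_comp hχ hχ0 (rep_comp _ _ g)).trans (EventuallyEq.trans ?_
      (rep_comp hω hω0 g).symm)))
  filter_upwards [h] with x hx
  simp only [Function.comp_apply, hx]

end Composition

end On

namespace CoordChange

lemma pullback_eq_comp (φ : CoordChange n) (g : On n) :
    pullback φ g = On.comp φ.toFun φ.analyticAt φ.map_zero g := by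
  apply Subtype.ext
  change (g : Filter.Germ (𝓝 (0 : Fin n → ℂ)) ℂ).compTendsto φ.toFun φ.tendsto =
    ((On.rep g ∘ φ.toFun : (Fin n → ℂ) → ℂ) : Filter.Germ (𝓝 (0 : Fin n → ℂ)) ℂ)
  rw [← On.rep_spec g]
  rfl

/-- The pullback by a coordinate change, as an automorphism of `𝒪ₙ`. -/
def pullbackEquiv (φ : CoordChange n) : On n ≃ₐ[ℂ] On n :=
  AlgEquiv.ofAlgHom (On.comp φ.toFun φ.analyticAt φ.map_zero)
    (On.comp φ.invFun φ.inv_analyticAt φ.inv_map_zero)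
    (AlgHom.ext fun g => (On.comp_comp φ.inv_analyticAt φ.inv_map_zero φ.analyticAt φ.map_zero
      analyticAt_id rfl φ.left_inv g).trans (On.comp_id g))
    (AlgHom.ext fun g => (On.comp_comp φ.analyticAt φ.map_zero φ.inv_analyticAt φ.inv_map_zero
      analyticAt_id rfl φ.right_inv g).trans (On.comp_id g))

lemma pullbackEquiv_apply (φ : CoordChange n) (g : On n) :
    φ.pullbackEquiv g = pullback φ g := (pullback_eq_comp φ g).symm

end CoordChange

/-! ### The height of the maximal ideal -/

namespace On

section Height

/-- The coordinate projection of `ℂⁿ` killing the first `j` coordinates. -/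
def dropCoord (n j : ℕ) : (Fin n → ℂ) → (Fin n → ℂ) := fun x i => if i.1 < j then 0 else x i

lemma dropCoord_analyticAt (j : ℕ) : AnalyticAt ℂ (dropCoord n j) 0 := by
  refine analyticAt_pi_iff.2 fun i => ?_
  unfold dropCoord
  split_ifs
  · exact analyticAt_const
  · exact (ContinuousLinearMap.proj (R := ℂ) (φ := fun _ : Fin n => ℂ) i).analyticAt _

lemma dropCoord_zero (j : ℕ) : dropCoord n j 0 = 0 := by
  ext i
  simp [dropCoord]

lemma dropCoord_dropCoord_succ (j : ℕ) (x : Fin n → ℂ) :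
    dropCoord n j (dropCoord n (j + 1) x) = dropCoord n (j + 1) x := by
  ext i
  grind [dropCoord]

/-- The prime ideal `⟨x₁, …, xⱼ⟩` of `𝒪ₙ`, encoded as the kernel of the restriction of germs to
the coordinate subspace `x₁ = ⋯ = xⱼ = 0`. -/
def coordPrime (n j : ℕ) : Ideal (On n) :=
  RingHom.ker (comp (dropCoord n j) (dropCoord_analyticAt j) (dropCoord_zero j))

instance (j : ℕ) : (coordPrime n j).IsPrime := RingHom.ker_isPrime _

lemma coordG_mem_coordPrime_iff {j : ℕ} {i : Fin n} : coordG i ∈ coordPrime n j ↔ i.1 < j := by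
  rw [coordPrime, RingHom.mem_ker]
  by_cases hi : i.1 < j
  · refine iff_of_true (ext_rep ((rep_comp_coordG _ _ i).trans ?_)) hi
    rw [← map_zero (algebraMap ℂ (On n))]
    refine EventuallyEq.trans (.of_eq ?_) (rep_algebraMap 0).symm
    simp [dropCoord, hi]
  · have hfix : comp (dropCoord n j) (dropCoord_analyticAt j) (dropCoord_zero j) (coordG i) =
        coordG i := by
      refine ext_rep ((rep_comp_coordG _ _ i).trans ((EventuallyEq.of_eq ?_).trans
        (rep_coordG i).symm))
      simp [dropCoord, hi]
    refine iff_of_false (fun h => ?_) hi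
    have hX := taylor_coordG i
    rw [← hfix, h, map_zero] at hX
    simpa using congrArg (MvPowerSeries.coeff (Finsupp.single i 1)) hX

lemma coordPrime_lt_succ {j : ℕ} (hj : j < n) : coordPrime n j < coordPrime n (j + 1) := by
  refine SetLike.lt_iff_le_and_exists.2 ⟨fun g hg => ?_, coordG ⟨j, hj⟩,
    coordG_mem_coordPrime_iff.2 j.lt_succ_self, fun h => ?_⟩
  · rw [coordPrime, RingHom.mem_ker] at hg ⊢
    rw [← comp_comp (dropCoord_analyticAt j) (dropCoord_zero j) (dropCoord_analyticAt (j + 1))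
      (dropCoord_zero _) _ _ (.of_forall (dropCoord_dropCoord_succ j)) g, hg, map_zero]
  · exact lt_irrefl j (coordG_mem_coordPrime_iff.1 h)

lemma le_height_coordPrime {j : ℕ} (hj : j ≤ n) : (j : ℕ∞) ≤ (coordPrime n j).height := by
  induction j with
  | zero => simp
  | succ j ih =>
    calc ((j + 1 : ℕ) : ℕ∞) ≤ (coordPrime n j).height + 1 := by
          push_cast
          gcongr
          exact ih (by omega)
      _ ≤ (coordPrime n (j + 1)).height :=
          Ideal.height_add_one_le_of_lt_of_isPrime (coordPrime_lt_succ hj)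

lemma le_height_mId : (n : ℕ∞) ≤ (mId n).height :=
  (le_height_coordPrime le_rfl).trans (Ideal.height_mono (by
    rw [← maximalIdeal_eq]
    exact IsLocalRing.le_maximalIdeal (Ideal.IsPrime.ne_top inferInstance)))

lemma le_ncard_of_mId_pow_le_span {s : Set (On n)} (hs : s.Finite) (h1 : Ideal.span s ≤ mId n)
    {N : ℕ} (h2 : mId n ^ N ≤ Ideal.span s) : n ≤ s.ncard := by
  have hmin : mId n ∈ (Ideal.span s).minimalPrimes :=
    ⟨⟨inferInstance, h1⟩, fun q hq _ =>
      haveI := hq.1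
      Ideal.IsPrime.le_of_pow_le (h2.trans hq.2)⟩
  exact_mod_cast (le_height_mId (n := n)).trans
    (Ideal.height_le_card_of_mem_minimalPrimes_span hs hmin)

end Height

/-! ### Coordinate systems -/

section Coordinates

lemma fderiv_rep_zero (g : On n) (v : Fin n → ℂ) :
    fderiv ℂ (On.rep g) 0 v =
      coeff 0 (vectorField (fun j => algebraMap ℂ (On n) (v j)) g) := by
  have hpd (j : Fin n) : fderiv ℂ (On.rep g) 0 (Pi.single j 1) = coeff 0 (pd j g) := by
    rw [← rep_zero_eq]
    exact (rep_pd (EventuallyEq.refl _ (On.rep g)) j).self_of_nhds.symm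
  have hv : v = ∑ j, v j • (Pi.single j 1 : Fin n → ℂ) := by
    ext i
    simp [Finset.sum_apply, Pi.single_apply]
  conv_lhs => rw [hv]
  rw [vectorField_apply, applyVF, map_sum, map_sum]
  refine Finset.sum_congr rfl fun j _ => ?_
  rw [map_smul, hpd, ← Algebra.smul_def, map_smul]

/-- The analytic map with components (the chosen representatives of) the germs `y i`. -/
def repMap (y : Fin n → On n) : (Fin n → ℂ) → (Fin n → ℂ) := fun x i => On.rep (y i) x

lemma repMap_analyticAt (y : Fin n → On n) : AnalyticAt ℂ (repMap y) 0 :=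
  analyticAt_pi_iff.2 fun i => On.rep_analyticAt (y i)

lemma fderiv_repMap_apply (y : Fin n → On n) (v : Fin n → ℂ) (i : Fin n) :
    fderiv ℂ (repMap y) 0 v i =
      coeff 0 (vectorField (fun j => algebraMap ℂ (On n) (v j)) (y i)) := by
  unfold repMap
  rw [← fderiv_rep_zero, fderiv_pi fun i => (On.rep_analyticAt (y i)).differentiableAt]
  rfl

lemma fderiv_repMap_injective {y : Fin n → On n} (hy : ∀ i, y i ∈ mId n)
    (h : mId n ≤ Ideal.span (Set.range y) ⊔ mId n ^ 2) :
    Function.Injective (fderiv ℂ (repMap y) 0) := by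
  refine (injective_iff_map_eq_zero _).2 fun v hv => ?_
  set D := vectorField fun j => algebraMap ℂ (On n) (v j) with hD
  have hDy : ∀ a ∈ Set.range y, D a ∈ mId n := by
    rintro _ ⟨i, rfl⟩
    rw [mem_mId_iff, hD, ← fderiv_repMap_apply, hv, Pi.zero_apply]
  ext j
  obtain ⟨a, ha, b, hb, hab⟩ := Submodule.mem_sup.1 (h (coordG_mem_mId j))
  have hDj : D (coordG j) ∈ mId n := by
    rw [← hab, map_add]
    refine add_mem (derivation_mem_of_mem_span (Set.range_subset_iff.2 hy) hDy ha) ?_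
    exact pow_one (mId n) ▸ derivation_apply_mem_pow D (mId n) (k := 1) hb
  rw [hD, vectorField_coordG, mem_mId_iff, Algebra.algebraMap_eq_smul_one, map_smul,
    coeff_zero_one] at hDj
  simpa using hDj

end Coordinates

end On

namespace CoordChange

lemma exists_invFun_eq_of_injective_fderiv {Y : (Fin n → ℂ) → (Fin n → ℂ)}
    (hY : AnalyticAt ℂ Y 0) (hY0 : Y 0 = 0) (hinj : Function.Injective (fderiv ℂ Y 0)) :
    ∃ φ : CoordChange n, φ.invFun = Y := by
  let L : (Fin n → ℂ) ≃L[ℂ] (Fin n → ℂ) := (LinearEquiv.ofInjectiveEndo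
    (fderiv ℂ Y 0 : (Fin n → ℂ) →ₗ[ℂ] (Fin n → ℂ)) hinj).toContinuousLinearEquiv
  have hL : (L : (Fin n → ℂ) →L[ℂ] (Fin n → ℂ)) = fderiv ℂ Y 0 := by
    ext v i
    rfl
  have hs : HasStrictFDerivAt Y (L : (Fin n → ℂ) →L[ℂ] (Fin n → ℂ)) 0 :=
    hL ▸ hY.hasStrictFDerivAt
  have hZ : AnalyticAt ℂ (hs.localInverse Y L 0) 0 := by
    have := OpenPartialHomeomorph.analyticAt_symm' (i := L) (hs.toOpenPartialHomeomorph Y)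
      hs.mem_toOpenPartialHomeomorph_source hY hL.symm
    rwa [hs.toOpenPartialHomeomorph_coe, hY0] at this
  exact ⟨{
    toFun := hs.localInverse Y L 0
    invFun := Y
    analyticAt := hZ
    inv_analyticAt := hY
    map_zero := by simpa only [hY0] using hs.localInverse_apply_image
    inv_map_zero := hY0
    left_inv := by simpa only [hY0] using hs.eventually_right_inverse
    right_inv := hs.eventually_left_inverse }, rfl⟩

theorem exists_pullback_eq_coordG {y : Fin n → On n} (hy : ∀ i, y i ∈ mId n)
    (h : mId n ≤ Ideal.span (Set.range y) ⊔ mId n ^ 2) :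
    ∃ φ : CoordChange n, ∀ i, pullback φ (y i) = coordG i := by
  have hY0 : On.repMap y 0 = 0 :=
    funext fun i => (On.rep_zero_eq (y i)).trans (On.mem_mId_iff.1 (hy i))
  obtain ⟨φ, hφ⟩ := exists_invFun_eq_of_injective_fderiv (On.repMap_analyticAt y) hY0
    (On.fderiv_repMap_injective hy h)
  refine ⟨φ, fun i => ?_⟩
  rw [pullback_eq_comp]
  refine On.ext_rep ((On.rep_comp _ _ _).trans
    (EventuallyEq.trans ?_ (On.rep_coordG i).symm))
  filter_upwards [φ.left_inv] with x hx
  exact congrFun (hφ ▸ hx : On.repMap y (φ.toFun x) = x) i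

end CoordChange

/-! ### Generalized eigenspaces modulo an invariant submodule -/

section GenEigenspaceMod

open Module (End)

variable {K V W : Type*} [Field K] [AddCommGroup V] [Module K V] [AddCommGroup W] [Module K W]
  {f : End K V} {N N' : Submodule K V} {μ : K} {v : V}

/-- The generalized `μ`-eigenvectors of `f` modulo a submodule `N`: those `v` such that
`(f - μ) ^ p v` lies in `N` for all large `p`. If `N` is invariant under `f`, this is the preimage
of a generalized eigenspace of the induced endomorphism of `V ⧸ N`, and one `p` suffices; asking for
all large `p` makes the definition meaningful for arbitrary `N`. -/
def genEigenspaceMod (f : End K V) (N : Submodule K V) (μ : K) : Submodule K V where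
  carrier := {v | ∀ᶠ p : ℕ in atTop, ((f - μ • (1 : End K V)) ^ p) v ∈ N}
  add_mem' hv hw := by
    filter_upwards [hv, hw] with p hp hp'
    exact map_add (_ : End K V) _ _ ▸ add_mem hp hp'
  zero_mem' := .of_forall fun p => by simp
  smul_mem' c v hv := by
    filter_upwards [hv] with p hp
    exact map_smul (_ : End K V) c v ▸ N.smul_mem c hp

lemma sub_smul_one_apply_mem (hN : ∀ w ∈ N, f w ∈ N) (hv : v ∈ N) :
    (f - μ • (1 : End K V)) v ∈ N :=
  sub_mem (hN v hv) (N.smul_mem μ hv)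

lemma sub_smul_one_pow_apply_mem (hN : ∀ w ∈ N, f w ∈ N) (hv : v ∈ N) (p : ℕ) :
    ((f - μ • (1 : End K V)) ^ p) v ∈ N := by
  induction p with
  | zero => exact hv
  | succ p ih =>
    rw [pow_succ', End.mul_apply]
    exact sub_smul_one_apply_mem hN ih

lemma mem_genEigenspaceMod_of_pow_apply_mem (hN : ∀ w ∈ N, f w ∈ N) {p : ℕ}
    (hp : ((f - μ • (1 : End K V)) ^ p) v ∈ N) : v ∈ genEigenspaceMod f N μ := by
  filter_upwards [eventually_ge_atTop p] with q hq
  rw [← Nat.sub_add_cancel hq, pow_add, End.mul_apply]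
  exact sub_smul_one_pow_apply_mem hN hp _

lemma mem_genEigenspaceMod_of_apply_eq_smul (h : f v = μ • v) : v ∈ genEigenspaceMod f N μ := by
  filter_upwards [eventually_ge_atTop 1] with q hq
  rw [← Nat.sub_add_cancel hq, pow_succ, End.mul_apply, LinearMap.sub_apply, h,
    LinearMap.smul_apply, End.one_apply, sub_self, map_zero]
  exact N.zero_mem

lemma le_genEigenspaceMod (hN : ∀ w ∈ N, f w ∈ N) : N ≤ genEigenspaceMod f N μ := fun _ hv =>
  .of_forall (sub_smul_one_pow_apply_mem hN hv)

lemma genEigenspaceMod_mono (h : N ≤ N') : genEigenspaceMod f N μ ≤ genEigenspaceMod f N' μ :=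
  fun _ hv => Eventually.mono hv fun _ hp => h hp

lemma apply_mem_genEigenspaceMod {g : End K W} {M : Submodule K W} {e : W →ₗ[K] V} {w : W}
    (hN : ∀ v ∈ N, f v ∈ N) (he : ∀ w, f (e w) - e (g w) ∈ N) (hM : ∀ w ∈ M, e w ∈ N)
    (hw : w ∈ genEigenspaceMod g M μ) : e w ∈ genEigenspaceMod f N μ := by
  have hpow (p : ℕ) : ((f - μ • (1 : End K V)) ^ p) (e w) -
      e (((g - μ • (1 : End K W)) ^ p) w) ∈ N := by
    induction p with
    | zero => simp
    | succ p ih =>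
      have h := add_mem (sub_smul_one_apply_mem (μ := μ) hN ih)
        (he (((g - μ • (1 : End K W)) ^ p) w))
      simp only [pow_succ', End.mul_apply, LinearMap.sub_apply, LinearMap.smul_apply,
        End.one_apply, map_sub, map_smul] at h ⊢
      convert h using 1
      abel
  filter_upwards [hw] with p hp
  simpa only [sub_add_cancel] using add_mem (hpow p) (hM _ hp)

lemma mem_genEigenspaceMod_iff_mkQ (hN : ∀ w ∈ N, f w ∈ N) :
    v ∈ genEigenspaceMod f N μ ↔ N.mkQ v ∈ End.maxGenEigenspace (N.mapQ N f hN) μ := by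
  have hpow (p : ℕ) : (((N.mapQ N f hN : End K (V ⧸ N)) - μ • (1 : End K (V ⧸ N))) ^ p) (N.mkQ v) =
      N.mkQ (((f - μ • (1 : End K V)) ^ p) v) := by
    induction p with
    | zero => rfl
    | succ p ih =>
      rw [pow_succ', pow_succ', End.mul_apply, End.mul_apply, ih]
      rfl
  rw [End.mem_maxGenEigenspace]
  exact ⟨fun hv => (Eventually.exists hv).imp fun p hp =>
      (hpow p).trans ((Submodule.Quotient.mk_eq_zero N).2 hp),
    fun ⟨p, hp⟩ => mem_genEigenspaceMod_of_pow_apply_mem hN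
      ((Submodule.Quotient.mk_eq_zero N).1 ((hpow p).symm.trans hp))⟩

lemma mem_of_mem_genEigenspaceMod_of_mem_iSup (hN : ∀ w ∈ N, f w ∈ N)
    (hv : v ∈ genEigenspaceMod f N μ) (hv' : v ∈ ⨆ ν ≠ μ, genEigenspaceMod f N ν) : v ∈ N := by
  have hmap (ν : K) : (genEigenspaceMod f N ν).map N.mkQ ≤
      End.maxGenEigenspace (N.mapQ N f hN) ν := by
    rintro _ ⟨w, hw, rfl⟩
    exact (mem_genEigenspaceMod_iff_mkQ hN).1 hw
  have hsup : N.mkQ v ∈ ⨆ ν ≠ μ, End.maxGenEigenspace (N.mapQ N f hN) ν := by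
    have h := Submodule.mem_map_of_mem (f := N.mkQ) hv'
    simp only [Submodule.map_iSup] at h
    exact iSup₂_mono (fun ν _ => hmap ν) h
  have h0 := Submodule.disjoint_def.1 (End.independent_maxGenEigenspace (N.mapQ N f hN) μ) _
    ((mem_genEigenspaceMod_iff_mkQ hN).1 hv) hsup
  rwa [Submodule.mkQ_apply, Submodule.Quotient.mk_eq_zero] at h0

section FiniteCodimension

variable [IsAlgClosed K] [FiniteDimensional K (V ⧸ N)] {p : Submodule K V}

lemma le_iSup_inf_genEigenspaceMod_sup (hN : ∀ w ∈ N, f w ∈ N) (hp : ∀ w ∈ p, f w ∈ p) :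
    p ≤ (⨆ μ, p ⊓ genEigenspaceMod f N μ) ⊔ N := by
  let T : End K (V ⧸ N) := N.mapQ N f hN
  have hdecomp : p.map N.mkQ = ⨆ μ, p.map N.mkQ ⊓ T.genEigenspace μ ⊤ := by
    refine Submodule.eq_iSup_inf_genEigenspace (f := T) ⊤ ?_ T.iSup_maxGenEigenspace_eq_top
    rintro _ ⟨w, hw, rfl⟩
    exact ⟨f w, hp w hw, rfl⟩
  have hlift : p.map N.mkQ ≤ (⨆ μ, p ⊓ genEigenspaceMod f N μ).map N.mkQ := by
    rw [hdecomp, Submodule.map_iSup]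
    refine iSup_mono fun μ => ?_
    rintro _ ⟨⟨u, hu, rfl⟩, huT⟩
    exact ⟨u, ⟨hu, (mem_genEigenspaceMod_iff_mkQ hN).2 huT⟩, rfl⟩
  calc p ≤ ((⨆ μ, p ⊓ genEigenspaceMod f N μ).map N.mkQ).comap N.mkQ :=
        Submodule.map_le_iff_le_comap.1 hlift
    _ = (⨆ μ, p ⊓ genEigenspaceMod f N μ) ⊔ N := by
        rw [Submodule.comap_map_eq, Submodule.ker_mkQ]

lemma exists_mem_genEigenspaceMod_sub_mem (hN : ∀ w ∈ N, f w ∈ N) (hN' : ∀ w ∈ N', f w ∈ N')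
    (hle : N ≤ N') (hp : ∀ w ∈ p, f w ∈ p) (hv : v ∈ p) (hvμ : v ∈ genEigenspaceMod f N' μ) :
    ∃ u ∈ p, u ∈ genEigenspaceMod f N μ ∧ v - u ∈ N' := by
  have h := le_iSup_inf_genEigenspaceMod_sup hN hp hv
  rw [iSup_split_single _ μ] at h
  obtain ⟨_, ha, r, hr, rfl⟩ := Submodule.mem_sup.1 h
  obtain ⟨u, hu, z, hz, rfl⟩ := Submodule.mem_sup.1 ha
  have hz' : z ∈ ⨆ ν ≠ μ, genEigenspaceMod f N' ν :=
    iSup₂_mono (fun ν _ => inf_le_right.trans (genEigenspaceMod_mono hle)) hz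
  have hzμ : z ∈ genEigenspaceMod f N' μ := by
    have h := sub_mem (sub_mem hvμ (genEigenspaceMod_mono hle hu.2))
      (le_genEigenspaceMod hN' (hle hr))
    rwa [add_assoc, add_sub_cancel_left, add_sub_cancel_right] at h
  refine ⟨u, hu.1, hu.2, ?_⟩
  rw [add_assoc, add_sub_cancel_left]
  exact add_mem (mem_of_mem_genEigenspaceMod_of_mem_iSup hN' hzμ hz') (hle hr)

end FiniteCodimension

lemma exists_mem_genEigenspaceMod_bot_sub_mem
    (hsurj : ∀ w ∈ N, ∃ v ∈ N, (f - μ • (1 : End K V)) v = w)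
    (hv : v ∈ genEigenspaceMod f N μ) : ∃ u ∈ genEigenspaceMod f ⊥ μ, v - u ∈ N := by
  have hsurj_pow (p : ℕ) : ∀ w ∈ N, ∃ v ∈ N, ((f - μ • (1 : End K V)) ^ p) v = w := by
    induction p with
    | zero => exact fun w hw => ⟨w, hw, rfl⟩
    | succ p ih =>
      intro w hw
      obtain ⟨w', hw', rfl⟩ := hsurj w hw
      obtain ⟨v, hv, rfl⟩ := ih w' hw'
      exact ⟨v, hv, by rw [pow_succ', End.mul_apply]⟩
  obtain ⟨p, hp⟩ := Eventually.exists hv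
  obtain ⟨u, hu, hup⟩ := hsurj_pow p _ hp
  refine ⟨v - u, mem_genEigenspaceMod_of_pow_apply_mem (p := p) ?_ ?_, by simpa using hu⟩
  · simp
  · rw [map_sub, hup, sub_self]
    exact zero_mem _

end GenEigenspaceMod

section DerivationEigenspace

variable {K A : Type*} [Field K] [CommRing A] [Algebra K A] {D : Derivation K A A} {I : Ideal A}

/-- The generalized `μ`-eigenvectors of a derivation modulo an ideal. -/
abbrev derivationEigenspace (D : Derivation K A A) (I : Ideal A) (μ : K) : Submodule K A :=
  genEigenspaceMod D.toLinearMap (I.restrictScalars K) μ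

lemma derivation_sub_smul_one_pow_mul_mem {μ ν : K} {r : ℕ} {a b : A}
    (h : ∀ i j, i + j = r → ((D.toLinearMap - μ • (1 : Module.End K A)) ^ i) a *
      ((D.toLinearMap - ν • (1 : Module.End K A)) ^ j) b ∈ I) :
    ((D.toLinearMap - (μ + ν) • (1 : Module.End K A)) ^ r) (a * b) ∈ I := by
  induction r generalizing a b with
  | zero => exact h 0 0 rfl
  | succ r ih =>
    have hleibniz : (D.toLinearMap - (μ + ν) • (1 : Module.End K A)) (a * b) =
        (D.toLinearMap - μ • (1 : Module.End K A)) a * b +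
          a * (D.toLinearMap - ν • (1 : Module.End K A)) b := by
      simp only [LinearMap.sub_apply, LinearMap.smul_apply, Module.End.one_apply,
        LinearMap.add_apply, Derivation.coeFn_coe, Derivation.leibniz, smul_eq_mul, add_smul,
        sub_mul, mul_sub, smul_mul_assoc, mul_smul_comm]
      ring
    rw [pow_succ, Module.End.mul_apply, hleibniz, map_add]
    refine add_mem (ih fun i j hij => ?_) (ih fun i j hij => ?_)
    · simpa only [pow_succ, Module.End.mul_apply] using h (i + 1) j (by omega)
    · simpa only [pow_succ, Module.End.mul_apply] using h i (j + 1) (by omega)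

lemma mul_mem_derivationEigenspace {μ ν : K} {a b : A} (ha : a ∈ derivationEigenspace D I μ)
    (hb : b ∈ derivationEigenspace D I ν) : a * b ∈ derivationEigenspace D I (μ + ν) := by
  obtain ⟨p, hp⟩ := eventually_atTop.1 ha
  obtain ⟨q, hq⟩ := eventually_atTop.1 hb
  filter_upwards [eventually_ge_atTop (p + q)] with r hr
  refine derivation_sub_smul_one_pow_mul_mem fun i j hij => ?_
  rcases le_or_gt p i with hi | hi
  · exact I.mul_mem_right _ (hp i hi)
  · exact I.mul_mem_left _ (hq j (by omega))

lemma one_mem_derivationEigenspace : (1 : A) ∈ derivationEigenspace D I 0 :=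
  mem_genEigenspaceMod_of_apply_eq_smul (by simp)

lemma pow_mem_derivationEigenspace {μ : K} {a : A} (ha : a ∈ derivationEigenspace D I μ) (k : ℕ) :
    a ^ k ∈ derivationEigenspace D I (k • μ) := by
  induction k with
  | zero => simpa using one_mem_derivationEigenspace
  | succ k ih =>
    rw [pow_succ, succ_nsmul]
    exact mul_mem_derivationEigenspace ih ha

lemma mvPow_mem_derivationEigenspace {σ : Type*} [Fintype σ] {x : σ → A} {l : σ → K}
    (hx : ∀ i, x i ∈ derivationEigenspace D I (l i)) (α : σ →₀ ℕ) :
    mvPow x α ∈ derivationEigenspace D I (Finsupp.weight l α) := by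
  classical
  have hprod (s : Finset σ) :
      ∏ i ∈ s, x i ^ α i ∈ derivationEigenspace D I (∑ i ∈ s, α i • l i) := by
    induction s using Finset.induction_on with
    | empty => simpa using one_mem_derivationEigenspace
    | insert i s hi ih =>
      rw [Finset.prod_insert hi, Finset.sum_insert hi]
      exact mul_mem_derivationEigenspace (pow_mem_derivationEigenspace (hx i) _) ih
  rw [Finsupp.weight_apply, Finsupp.sum_fintype _ _ fun i => zero_smul ℕ (l i)]
  exact hprod Finset.univ

end DerivationEigenspace

/-! ### Conjugation of derivations -/

section ConjDerivation

variable {R A B : Type*} [CommSemiring R] [CommRing A] [CommRing B] [Algebra R A] [Algebra R B]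

/-- The derivation `σ ∘ D ∘ σ⁻¹` obtained by transporting a derivation along an isomorphism of
algebras. -/
def conjDerivation (σ : A ≃ₐ[R] B) (D : Derivation R A A) : Derivation R B B :=
  Derivation.mk' (σ.toLinearMap ∘ₗ D.toLinearMap ∘ₗ σ.symm.toLinearMap) fun a b => by
    simp [Derivation.leibniz]

lemma conjDerivation_apply (σ : A ≃ₐ[R] B) (D : Derivation R A A) (b : B) :
    conjDerivation σ D b = σ (D (σ.symm b)) :=
  rfl

lemma conjDerivation_apply_apply (σ : A ≃ₐ[R] B) (D : Derivation R A A) (a : A) :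
    conjDerivation σ D (σ a) = σ (D a) := by
  rw [conjDerivation_apply, σ.symm_apply_apply]

end ConjDerivation

lemma apply_mem_derivationEigenspace_conjDerivation {K A B : Type*} [Field K] [CommRing A]
    [CommRing B] [Algebra K A] [Algebra K B] (σ : A ≃ₐ[K] B) {D : Derivation K A A} {I : Ideal A}
    {J : Ideal B} (hJ : ∀ b ∈ J, conjDerivation σ D b ∈ J) (hIJ : ∀ a ∈ I, σ a ∈ J) {μ : K}
    {a : A} (ha : a ∈ derivationEigenspace D I μ) :
    σ a ∈ derivationEigenspace (conjDerivation σ D) J μ := by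
  refine apply_mem_genEigenspaceMod (e := σ.toLinearMap) hJ (fun a => ?_) hIJ ha
  have h := sub_self (σ (D a))
  nth_rewrite 1 [← conjDerivation_apply_apply σ D a] at h
  exact h ▸ zero_mem (J.restrictScalars K)

namespace On

lemma map_mem_mId_iff (σ : On n ≃ₐ[ℂ] On n) {g : On n} : σ g ∈ mId n ↔ g ∈ mId n := by
  rw [← maximalIdeal_eq, IsLocalRing.mem_maximalIdeal, IsLocalRing.mem_maximalIdeal,
    mem_nonunits_iff, mem_nonunits_iff, MulEquiv.isUnit_map σ]

lemma map_mId (σ : On n ≃ₐ[ℂ] On n) : (mId n).map σ = mId n := by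
  refine le_antisymm (Ideal.map_le_iff_le_comap.2 fun g hg => (map_mem_mId_iff σ).2 hg)
    fun g hg => ?_
  simpa using Ideal.mem_map_of_mem σ ((map_mem_mId_iff σ.symm).2 hg)

lemma map_mem_mId_pow (σ : On n ≃ₐ[ℂ] On n) {g : On n} {k : ℕ} (hg : g ∈ mId n ^ k) :
    σ g ∈ mId n ^ k := by
  have h := Ideal.mem_map_of_mem σ hg
  rwa [Ideal.map_pow, map_mId] at h

lemma conjDerivation_mem_mId (σ : On n ≃ₐ[ℂ] On n) {D : Derivation ℂ (On n) (On n)}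
    (hD : ∀ g ∈ mId n, D g ∈ mId n) {g : On n} (hg : g ∈ mId n) :
    conjDerivation σ D g ∈ mId n :=
  (map_mem_mId_iff σ).2 (hD _ ((map_mem_mId_iff σ.symm).2 hg))

lemma derivation_apply_mem_Jac (D : Derivation ℂ (On n) (On n)) (f : On n) : D f ∈ Jac n f := by
  rw [derivation_eq_vectorField D, vectorField_apply]
  exact Ideal.sum_mem _ fun i _ => Ideal.mul_mem_left _ _ (Ideal.subset_span ⟨i, rfl⟩)

lemma map_Jac_le (σ : On n ≃ₐ[ℂ] On n) (f : On n) : (Jac n f).map σ ≤ Jac n (σ f) := by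
  rw [Jac, Ideal.map_span, Ideal.span_le]
  rintro _ ⟨_, ⟨i, rfl⟩, rfl⟩
  have h := derivation_apply_mem_Jac (conjDerivation σ (partialDer i)) (σ f)
  rwa [conjDerivation_apply_apply, partialDer_apply] at h

lemma mId_pow_le_Jac_map (σ : On n ≃ₐ[ℂ] On n) {f : On n} {N : ℕ} (h : mId n ^ N ≤ Jac n f) :
    mId n ^ N ≤ Jac n (σ f) :=
  calc mId n ^ N = (mId n ^ N).map σ := by rw [Ideal.map_pow, map_mId]
    _ ≤ (Jac n f).map σ := Ideal.map_mono h
    _ ≤ Jac n (σ f) := map_Jac_le σ f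

/-! ### Coefficients of generalized eigenvectors -/

instance (k : ℕ) : FiniteDimensional ℂ (On n ⧸ (mId n ^ k).restrictScalars ℂ) :=
  haveI := finiteDimensional_quotient_mId_pow (n := n) k
  Module.Finite.equiv (Submodule.Quotient.restrictScalarsEquiv ℂ (mId n ^ k)).symm

lemma weight_eq_of_coeff_ne_zero {D : Derivation ℂ (On n) (On n)} {k : ℕ}
    (hD : ∀ g ∈ mId n ^ k, D g ∈ mId n ^ k) {l : Fin n → ℂ}
    (hx : ∀ i, coordG i ∈ derivationEigenspace D (mId n ^ k) (l i)) {μ : ℂ} {g : On n}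
    (hg : g ∈ derivationEigenspace D (mId n ^ k) μ) {α : Fin n →₀ ℕ} (hα : α.degree < k)
    (h0 : coeff α g ≠ 0) : Finsupp.weight l α = μ := by
  classical
  let s := (Finsupp.finite_of_degree_lt (σ := Fin n) k).toFinset
  let part (p : (Fin n →₀ ℕ) → Prop) [DecidablePred p] : On n :=
    ∑ β ∈ s with p β, coeff β g • mvPow coordG β
  have hmono (β : Fin n →₀ ℕ) : coeff β g • mvPow coordG β ∈
      derivationEigenspace D (mId n ^ k) (Finsupp.weight l β) :=
    Submodule.smul_mem _ _ (mvPow_mem_derivationEigenspace hx β)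
  have hEg : part (Finsupp.weight l · = μ) ∈ derivationEigenspace D (mId n ^ k) μ :=
    sum_mem fun β hβ => (Finset.mem_filter.1 hβ).2 ▸ hmono β
  have hrest : g - part (Finsupp.weight l · = μ) ∈
      ⨆ ν ≠ μ, derivationEigenspace D (mId n ^ k) ν := by
    have hsplit : g - part (Finsupp.weight l · = μ) =
        (g - ∑ β ∈ s, coeff β g • mvPow coordG β) + part (¬ Finsupp.weight l · = μ) := by
      rw [← Finset.sum_filter_add_sum_filter_not s (Finsupp.weight l · = μ)]
      abel
    rw [hsplit]
    refine add_mem ?_ (sum_mem fun β hβ =>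
      Submodule.mem_iSup_of_mem _ (Submodule.mem_iSup_of_mem (Finset.mem_filter.1 hβ).2 (hmono β)))
    exact Submodule.mem_iSup_of_mem (μ + 1) (Submodule.mem_iSup_of_mem (by simp)
      (le_genEigenspaceMod hD (sub_sum_coeff_smul_mem k g)))
  have hmem : g - part (Finsupp.weight l · = μ) ∈ mId n ^ k :=
    mem_of_mem_genEigenspaceMod_of_mem_iSup hD (sub_mem hg hEg) hrest
  by_contra hne
  refine h0 ?_
  have hcoeff := mem_mId_pow_iff.1 hmem α hα
  rwa [map_sub, map_sum, Finset.sum_eq_zero, sub_zero] at hcoeff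
  intro β hβ
  rw [map_smul, coeff_mvPow, if_neg, smul_zero]
  rintro rfl
  exact hne (Finset.mem_filter.1 hβ).2

end On

/-! ### Triangular eigenbases -/

section TriangularBasis

open Module (End finrank)

variable {K : Type*} [Field K]

lemma dual_apply_sub_smul_pow_apply {V : Type*} [AddCommGroup V] [Module K V] {f : End K V}
    {φ : V →ₗ[K] K} {ν : K} (hφ : ∀ v, φ (f v) = ν * φ v) (μ : K) (p : ℕ) (v : V) :
    φ (((f - μ • (1 : End K V)) ^ p) v) = (ν - μ) ^ p * φ v := by
  induction p with
  | zero => simp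
  | succ p ih =>
    rw [pow_succ', End.mul_apply, LinearMap.sub_apply, map_sub, hφ, LinearMap.smul_apply,
      End.one_apply, map_smul, ih, smul_eq_mul]
    ring

variable [IsAlgClosed K]

lemma exists_mem_maxGenEigenspace_dual_apply_ne_zero {V : Type*} [AddCommGroup V] [Module K V]
    [FiniteDimensional K V] {f : End K V} {φ : V →ₗ[K] K} (hφ0 : φ ≠ 0) {ν : K}
    (hφ : ∀ v, φ (f v) = ν * φ v) : ∃ v ∈ f.maxGenEigenspace ν, φ v ≠ 0 := by
  by_contra! hcon
  refine hφ0 (LinearMap.ker_eq_top.1 (eq_top_iff.2 ?_))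
  rw [← f.iSup_maxGenEigenspace_eq_top]
  refine iSup_le fun μ v hv => ?_
  obtain rfl | hμ := eq_or_ne μ ν
  · exact hcon v hv
  · obtain ⟨p, hp⟩ := End.mem_maxGenEigenspace f μ v |>.1 hv
    have h := dual_apply_sub_smul_pow_apply hφ μ p v
    rw [hp, map_zero] at h
    exact (mul_eq_zero.1 h.symm).resolve_left (pow_ne_zero p (sub_ne_zero.2 hμ.symm))

lemma exists_dual_eigenvector {V : Type*} [AddCommGroup V] [Module K V] [FiniteDimensional K V]
    [Nontrivial V] (f : End K V) :
    ∃ (φ : V →ₗ[K] K) (ν : K), φ ≠ 0 ∧ ∀ v, φ (f v) = ν * φ v := by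
  have : Nontrivial (Module.Dual K V) := inferInstance
  obtain ⟨ν, hν⟩ := End.exists_eigenvalue (Module.Dual.transpose (R := K) f)
  obtain ⟨φ, hφ⟩ := hν.exists_hasEigenvector
  exact ⟨φ, ν, hφ.2, LinearMap.congr_fun hφ.apply_eq_smul⟩

/-- The last vector is a generalized eigenvector not annihilated by an eigenvector of the transpose;
the others come from the kernel of the latter. -/
lemma exists_triangular_eigenbasis {d : ℕ} {V : Type*} [AddCommGroup V] [Module K V]
    [FiniteDimensional K V] (f : End K V) (hd : finrank K V = d) :
    ∃ (b : Fin d → V) (μ : Fin d → K), Submodule.span K (Set.range b) = ⊤ ∧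
      (∀ i, b i ∈ f.maxGenEigenspace (μ i)) ∧
      ∀ i, f (b i) - μ i • b i ∈ Submodule.span K (b '' Set.Iio i) := by
  induction d generalizing V with
  | zero =>
    have := Module.finrank_zero_iff.1 hd
    exact ⟨Fin.elim0, Fin.elim0, Subsingleton.elim _ _, fun i => i.elim0, fun i => i.elim0⟩
  | succ d ih =>
    have : Nontrivial V := Module.nontrivial_of_finrank_pos (R := K) (by omega)
    obtain ⟨φ, ν, hφ0, hφ⟩ := exists_dual_eigenvector f
    obtain ⟨v, hv, hφv⟩ := exists_mem_maxGenEigenspace_dual_apply_ne_zero hφ0 hφ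
    have hker : ∀ x ∈ LinearMap.ker φ, f x ∈ LinearMap.ker φ := fun x hx => by
      rw [LinearMap.mem_ker] at hx ⊢
      rw [hφ, hx, mul_zero]
    obtain ⟨b, μ, hb, hbμ, hbtri⟩ := ih (f.restrict hker)
      (by have := Module.Dual.finrank_ker_add_one_of_ne_zero hφ0; omega)
    have hspan : Submodule.span K (Set.range fun i => (b i : V)) = LinearMap.ker φ := by
      rw [Set.range_comp' Subtype.val b, ← Submodule.coe_subtype, Submodule.span_image, hb,
        Submodule.map_subtype_top]
    have hspan_Iio (i : Fin d) : ((f.restrict hker (b i) - μ i • b i : LinearMap.ker φ) : V) ∈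
        Submodule.span K ((fun i => (b i : V)) '' Set.Iio i) := by
      have h := Submodule.mem_map_of_mem (f := (LinearMap.ker φ).subtype) (hbtri i)
      rwa [Submodule.map_span, ← Set.image_comp] at h
    refine ⟨Fin.snoc (fun i => (b i : V)) v, Fin.snoc μ ν, ?_, Fin.lastCases ?_ fun i => ?_,
      Fin.lastCases ?_ fun i => ?_⟩
    · refine eq_top_iff.2 fun x _ => ?_
      have hx : x - (φ x / φ v) • v ∈ LinearMap.ker φ := by
        rw [LinearMap.mem_ker, map_sub, map_smul, smul_eq_mul, div_mul_cancel₀ _ hφv, sub_self]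
      rw [← sub_add_cancel x ((φ x / φ v) • v), Fin.range_snoc, Submodule.span_insert, hspan,
        add_comm]
      exact Submodule.add_mem_sup (Submodule.smul_mem _ _ (Submodule.mem_span_singleton_self v)) hx
    · simpa using hv
    · rw [Fin.snoc_castSucc, Fin.snoc_castSucc]
      have h := hbμ i
      rw [End.maxGenEigenspace, End.genEigenspace_restrict] at h
      exact h
    · have hmem : f v - ν • v ∈ LinearMap.ker φ := by
        rw [LinearMap.mem_ker, map_sub, map_smul, hφ, smul_eq_mul, sub_self]
      rw [Fin.snoc_last, Fin.snoc_last]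
      refine Submodule.span_mono ?_ (hspan.ge hmem)
      rintro _ ⟨i, rfl⟩
      exact ⟨i.castSucc, Fin.castSucc_lt_last i, by simp⟩
    · rw [Fin.snoc_castSucc, Fin.snoc_castSucc]
      refine Submodule.span_mono ?_ (hspan_Iio i)
      rintro _ ⟨j, hj, rfl⟩
      exact ⟨j.castSucc, Fin.castSucc_lt_castSucc_iff.2 hj, by simp⟩

end TriangularBasis

lemma apply_mem_span_image_sup {K V W ι : Type*} [Ring K] [AddCommGroup V] [Module K V]
    [AddCommGroup W] [Module K W] (e : V →ₗ[K] W) {N : Submodule K W} {b : ι → V} {u : ι → W}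
    (h : ∀ i, e (b i) - u i ∈ N) {s : Set ι} {v : V} (hv : v ∈ Submodule.span K (b '' s)) :
    e v ∈ Submodule.span K (u '' s) ⊔ N := by
  suffices hle : Submodule.span K (b '' s) ≤ (Submodule.span K (u '' s) ⊔ N).comap e from hle hv
  refine Submodule.span_le.2 ?_
  rintro _ ⟨i, hi, rfl⟩
  exact Submodule.mem_sup.2 ⟨u i, Submodule.subset_span ⟨i, hi, rfl⟩, _, h i, add_sub_cancel ..⟩

namespace On

/-- The linear part of a germ at the origin, as the tuple of its degree one coefficients. -/
def linearPart : On n →ₗ[ℂ] (Fin n → ℂ) :=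
  LinearMap.pi fun j => coeff (Finsupp.single j 1)

/-- The linear form `∑ vⱼ xⱼ` with coefficients `v`, a section of `On.linearPart`. -/
def linearForm : (Fin n → ℂ) →ₗ[ℂ] On n :=
  Fintype.linearCombination ℂ coordG

lemma linearForm_mem_mId (v : Fin n → ℂ) : linearForm v ∈ mId n := by
  rw [linearForm, Fintype.linearCombination_apply]
  exact sum_mem fun j _ => Submodule.smul_of_tower_mem _ _ (coordG_mem_mId j)

lemma linearPart_coordG (i : Fin n) : linearPart (coordG i) = Pi.single i 1 := by
  classical
  ext j
  have h := coeff_mvPow (Finsupp.single j 1) (Finsupp.single i 1)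
  rw [mvPow_single, pow_one] at h
  simp only [linearPart, LinearMap.pi_apply, h, Pi.single_apply,
    (Finsupp.single_left_injective (M := ℕ) one_ne_zero).eq_iff]

lemma linearPart_linearForm (v : Fin n → ℂ) : linearPart (linearForm v) = v := by
  rw [linearForm, Fintype.linearCombination_apply, map_sum]
  simp only [map_smul, linearPart_coordG]
  exact (pi_eq_sum_univ' v).symm

lemma mem_mId_sq_iff {g : On n} (hg : g ∈ mId n) : g ∈ mId n ^ 2 ↔ linearPart g = 0 := by
  rw [mem_mId_pow_iff]
  refine ⟨fun h => funext fun j => h _ (by simp), fun h α hα => ?_⟩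
  obtain h0 | h1 : α.degree = 0 ∨ α.degree = 1 := by omega
  · rw [(Finsupp.degree_eq_zero_iff α).1 h0]
    exact mem_mId_iff.1 hg
  · obtain ⟨j, rfl⟩ := Finsupp.range_single_one.ge h1
    exact congrFun h j

lemma sub_linearForm_linearPart_mem {g : On n} (hg : g ∈ mId n) :
    g - linearForm (linearPart g) ∈ mId n ^ 2 := by
  rw [mem_mId_sq_iff (sub_mem hg (linearForm_mem_mId _)), map_sub, linearPart_linearForm, sub_self]

variable {D : Derivation ℂ (On n) (On n)}

theorem exists_triangular_eigencoordinates (hD : ∀ g ∈ mId n, D g ∈ mId n) {k : ℕ} (hk : 2 ≤ k) :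
    ∃ (u : Fin n → On n) (l : Fin n → ℂ), (∀ i, u i ∈ mId n) ∧
      mId n ≤ Ideal.span (Set.range u) ⊔ mId n ^ 2 ∧
      (∀ i, u i ∈ derivationEigenspace D (mId n ^ k) (l i)) ∧
      ∀ i, D (u i) - l i • u i ∈
        Submodule.span ℂ (u '' Set.Iio i) ⊔ (mId n ^ 2).restrictScalars ℂ := by
  have hDpow (j : ℕ) : ∀ g ∈ mId n ^ j, D g ∈ mId n ^ j :=
    fun g hg => derivation_apply_mem_pow_of_mapsTo hD hg
  let T : Module.End ℂ (Fin n → ℂ) := linearPart ∘ₗ D.toLinearMap ∘ₗ linearForm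
  have hT (v : Fin n → ℂ) : D (linearForm v) - linearForm (T v) ∈ mId n ^ 2 :=
    sub_linearForm_linearPart_mem (hD _ (linearForm_mem_mId v))
  obtain ⟨b, l, hb, hbl, hbtri⟩ := exists_triangular_eigenbasis T (Module.finrank_fin_fun ℂ)
  have hbl' (i : Fin n) : linearForm (b i) ∈ derivationEigenspace D (mId n ^ 2) (l i) := by
    obtain ⟨p, hp⟩ := (Module.End.mem_maxGenEigenspace T (l i) _).1 (hbl i)
    exact apply_mem_genEigenspaceMod (M := ⊥) (hDpow 2) hT (by simp)
      (mem_genEigenspaceMod_of_pow_apply_mem (by simp) ((Submodule.mem_bot ℂ).2 hp))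
  have hle : (mId n ^ k).restrictScalars ℂ ≤ (mId n ^ 2).restrictScalars ℂ :=
    Ideal.pow_le_pow_right hk
  choose u hu hul hbu using fun i => exists_mem_genEigenspaceMod_sub_mem (hDpow k) (hDpow 2) hle
    (p := (mId n).restrictScalars ℂ) hD (linearForm_mem_mId (b i)) (hbl' i)
  refine ⟨u, l, hu, fun g hg => ?_, hul, fun i => ?_⟩
  · have h := apply_mem_span_image_sup linearForm hbu (s := Set.univ) (v := linearPart g)
      (by rw [Set.image_univ, hb]; trivial)
    rw [Set.image_univ] at h
    have hle : Submodule.span ℂ (Set.range u) ⊔ (mId n ^ 2).restrictScalars ℂ ≤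
        (Ideal.span (Set.range u) ⊔ mId n ^ 2).restrictScalars ℂ :=
      sup_le ((Submodule.span_le_restrictScalars ℂ (On n) _).trans
        fun _ hx => Ideal.mem_sup_left hx) fun _ hx => Ideal.mem_sup_right hx
    rw [← sub_add_cancel g (linearForm (linearPart g))]
    exact add_mem (Ideal.mem_sup_right (sub_linearForm_linearPart_mem hg)) (hle h)
  · have hsplit : D (u i) - l i • u i = linearForm (T (b i) - l i • b i) +
        ((D (linearForm (b i)) - linearForm (T (b i))) -
          (D (linearForm (b i) - u i) - l i • (linearForm (b i) - u i))) := by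
      simp only [map_sub, map_smul, smul_sub]
      abel
    rw [hsplit]
    refine add_mem (apply_mem_span_image_sup linearForm hbu (hbtri i))
      (Submodule.mem_sup_right (sub_mem (hT _) (sub_mem (hDpow 2 _ (hbu i)) ?_)))
    exact Submodule.smul_of_tower_mem (mId n ^ 2) _ (hbu i)

theorem exists_coordChange_triangular (hD : ∀ g ∈ mId n, D g ∈ mId n) {k : ℕ} (hk : 2 ≤ k) :
    ∃ (φ : CoordChange n) (l : Fin n → ℂ), ∀ i,
      coordG i ∈ derivationEigenspace (conjDerivation φ.pullbackEquiv D) (mId n ^ k) (l i) ∧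
      conjDerivation φ.pullbackEquiv D (coordG i) - l i • coordG i ∈
        Submodule.span ℂ (coordG '' Set.Iio i) ⊔ (mId n ^ 2).restrictScalars ℂ := by
  obtain ⟨u, l, hu, hspan, hul, hutri⟩ := exists_triangular_eigencoordinates hD hk
  obtain ⟨φ, hφ⟩ := CoordChange.exists_pullback_eq_coordG hu hspan
  let σ := φ.pullbackEquiv
  replace hφ : ∀ i, σ (u i) = coordG i := fun i => (φ.pullbackEquiv_apply _).trans (hφ i)
  refine ⟨φ, l, fun i => ⟨?_, ?_⟩⟩
  · rw [← hφ i]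
    exact apply_mem_derivationEigenspace_conjDerivation σ
      (fun g hg => derivation_apply_mem_pow_of_mapsTo (fun _ => conjDerivation_mem_mId σ hD) hg)
      (fun g => map_mem_mId_pow σ) (hul i)
  · rw [← hφ i, conjDerivation_apply_apply, ← map_smul, ← map_sub]
    obtain ⟨a, ha, r, hr, har⟩ := Submodule.mem_sup.1 (hutri i)
    rw [← har, map_add]
    refine Submodule.add_mem_sup ?_ (map_mem_mId_pow σ hr)
    have h := Submodule.mem_map_of_mem (f := σ.toLinearMap) ha
    rw [Submodule.map_span, ← Set.image_comp] at h
    rwa [← show ⇑σ ∘ u = coordG from funext hφ]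

end On

/-! ### Rationality of the weights -/

section Weight

variable {ι M : Type*} [AddCommMonoid M] [PartialOrder M] [IsOrderedAddMonoid M] {w : ι → M}
  {c : M} {β : ι →₀ ℕ}

lemma degree_nsmul_le_weight (h : ∀ i ∈ β.support, c ≤ w i) :
    β.degree • c ≤ Finsupp.weight w β := by
  rw [Finsupp.weight_apply, Finsupp.degree_apply, Finset.sum_smul]
  exact Finset.sum_le_sum fun i hi => nsmul_le_nsmul_right (h i hi) _

lemma weight_le_degree_nsmul (h : ∀ i ∈ β.support, w i ≤ c) :
    Finsupp.weight w β ≤ β.degree • c := by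
  rw [Finsupp.weight_apply, Finsupp.degree_apply, Finset.sum_smul]
  exact Finset.sum_le_sum fun i hi => nsmul_le_nsmul_right (h i hi) _

end Weight

lemma map_weight {ι M M' F : Type*} [AddCommMonoid M] [AddCommMonoid M'] [FunLike F M M']
    [AddMonoidHomClass F M M'] (ρ : F) (w : ι → M) (α : ι →₀ ℕ) :
    ρ (Finsupp.weight w α) = Finsupp.weight (ρ ∘ w) α := by
  simp only [Finsupp.weight_apply, map_finsuppSum, map_nsmul, Function.comp_apply]

lemma mem_Ioo_of_forall_exists_add_weight_eq_one {ι 𝕜 : Type*} [Finite ι] [Field 𝕜] [LinearOrder 𝕜]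
    [IsStrictOrderedRing 𝕜] {w : ι → 𝕜}
    (h : ∀ A : Set ι, A.Nonempty → ∃ (j : ι) (β : ι →₀ ℕ),
      ↑β.support ⊆ A ∧ 2 ≤ β.degree ∧ w j + Finsupp.weight w β = 1) (i : ι) :
    w i ∈ Set.Ioo 0 (1 / 2) := by
  have : Nonempty ι := ⟨i⟩
  have two_le {β : ι →₀ ℕ} (hβ : 2 ≤ β.degree) : (2 : 𝕜) ≤ β.degree := by exact_mod_cast hβ
  have hpos (i : ι) : 0 < w i := by
    obtain ⟨m, hm⟩ := Finite.exists_min w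
    suffices 0 < w m from this.trans_le (hm i)
    by_contra! hwm
    -- A weight `≤ 0` forces a weight `≥ 1 - 2 w m`, and that one forces a weight `< w m`.
    obtain ⟨j, β, hβ, hdeg, hsum⟩ := h {i | w i ≤ w m} ⟨m, le_rfl⟩
    have hle := weight_le_degree_nsmul (w := w) fun i hi => hβ hi
    rw [nsmul_eq_mul] at hle
    have hj : 1 - 2 * w m ≤ w j := by nlinarith [two_le hdeg]
    obtain ⟨j', β', hβ', hdeg', hsum'⟩ := h {i | 1 - 2 * w m ≤ w i} ⟨j, hj⟩
    have hge := degree_nsmul_le_weight (w := w) fun i hi => hβ' hi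
    rw [nsmul_eq_mul] at hge
    nlinarith [two_le hdeg', hm j']
  obtain ⟨m, hm⟩ := Finite.exists_max w
  refine ⟨hpos i, (hm i).trans_lt ?_⟩
  by_contra! hwm
  obtain ⟨j, β, hβ, hdeg, hsum⟩ := h {i | w m ≤ w i} ⟨m, le_rfl⟩
  have hge := degree_nsmul_le_weight (w := w) fun i hi => hβ hi
  rw [nsmul_eq_mul] at hge
  nlinarith [two_le hdeg, hpos j]

lemma exists_linearMap_apply_eq_and_apply_eq {K V : Type*} [Field K] [AddCommGroup V] [Module K V]
    {x y : V} (hx : x ≠ 0) (hy : y ∉ Submodule.span K {x}) (a b : K) :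
    ∃ ρ : V →ₗ[K] K, ρ x = a ∧ ρ y = b := by
  obtain ⟨φ, hφ, -⟩ := Submodule.exists_le_ker_of_notMem (mt (Submodule.mem_bot K).1 hx)
  obtain ⟨ψ, hψ, hψx⟩ := Submodule.exists_le_ker_of_notMem hy
  replace hψx : ψ x = 0 := hψx (Submodule.mem_span_singleton_self x)
  refine ⟨(a / φ x) • φ + ((b - a / φ x * φ y) / ψ y) • ψ, ?_, ?_⟩
  · simp [hψx, hφ]
  · simp [hψ]

namespace On

lemma mvPow_coordG_mem_of_coordG_mem {I : Ideal (On n)} {i : Fin n} (hi : coordG i ∈ I)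
    {β : Fin n →₀ ℕ} (hβ : β i ≠ 0) : mvPow coordG β ∈ I := by
  have hdvd : coordG i ^ β i ∣ mvPow coordG β :=
    Finset.dvd_prod_of_mem (fun i => (coordG i : On n) ^ β i) (Finset.mem_univ i)
  exact Ideal.mem_of_dvd _ ((dvd_pow_self _ hβ).trans hdvd) hi

/-- If no such monomial existed, `Jac f` would lie in the ideal of the variables outside `A` up to
order `N + 1`, so by Nakayama's lemma fewer than `n` elements would generate an ideal primary to the
maximal ideal. -/
lemma exists_coeff_ne_zero_of_mId_pow_le_Jac {f : On n} {N : ℕ} (hN : mId n ^ N ≤ Jac n f)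
    {A : Set (Fin n)} (hA : A.Nonempty) : ∃ (j : Fin n) (β : Fin n →₀ ℕ),
      ↑β.support ⊆ A ∧ β.degree ≤ N ∧ coeff (β + Finsupp.single j 1) f ≠ 0 := by
  by_contra! hcon
  let J : Ideal (On n) := Ideal.span (coordG '' Aᶜ)
  have hJac : Jac n f ≤ J ⊔ mId n ^ (N + 1) := by
    refine Ideal.span_le.2 ?_
    rintro _ ⟨j, rfl⟩
    refine Submodule.mem_sup.2 ⟨_, sum_mem fun β hβ => ?_, _,
      sub_sum_coeff_smul_mem (N + 1) (pd j f), add_sub_cancel _ _⟩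
    rw [Set.Finite.mem_toFinset, Set.mem_ofPred_eq, Nat.lt_succ_iff] at hβ
    by_cases hβA : ↑β.support ⊆ A
    · rw [coeff_pd, hcon j β hβA hβ, zero_mul, zero_smul]
      exact zero_mem _
    · obtain ⟨i, hi, hiA⟩ := Set.not_subset.1 hβA
      exact Submodule.smul_of_tower_mem _ _ (mvPow_coordG_mem_of_coordG_mem
        (Ideal.subset_span (Set.mem_image_of_mem coordG hiA)) (Finsupp.mem_support_iff.1 hi))
  have hpow : mId n ^ N ≤ J := by
    refine Submodule.le_of_le_smul_of_le_jacobson_bot (I := mId n) (IsNoetherian.noetherian _) ?_ ?_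
    · rw [IsLocalRing.jacobson_eq_maximalIdeal _ bot_ne_top, maximalIdeal_eq]
    · rw [smul_eq_mul, ← pow_succ']
      exact hN.trans hJac
  have hJ : J ≤ mId n := by
    refine Ideal.span_le.2 ?_
    rintro _ ⟨i, -, rfl⟩
    exact coordG_mem_mId i
  have hcard := (le_ncard_of_mId_pow_le_span (Set.toFinite _) hJ hpow).trans
    (Set.ncard_image_le (Set.toFinite _))
  have hcompl := Set.ncard_add_ncard_compl A
  rw [Nat.card_eq_fintype_card, Fintype.card_fin] at hcompl
  have := (Set.ncard_pos (Set.toFinite A)).2 hA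
  omega

/-- Apply the positivity of weights to the images of the eigenvalues under all `ℚ`-linear
functionals on `ℂ` fixing `1`: an irrational eigenvalue could be given any value. -/
theorem exists_rat_weights {D : Derivation ℂ (On n) (On n)} {k : ℕ}
    (hD : ∀ g ∈ mId n ^ k, D g ∈ mId n ^ k) {l : Fin n → ℂ}
    (hx : ∀ i, coordG i ∈ derivationEigenspace D (mId n ^ k) (l i)) {f : On n}
    (hf : f ∈ mId n ^ 3) (hDf : D f = f) {N : ℕ} (hN : mId n ^ N ≤ Jac n f) (hk : N + 2 ≤ k) :
    ∃ w : Fin n → ℚ, (∀ i, w i ∈ Set.Ioo 0 (1 / 2)) ∧ ∀ i, l i = w i := by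
  have hf1 : f ∈ derivationEigenspace D (mId n ^ k) 1 :=
    mem_genEigenspaceMod_of_apply_eq_smul (hDf.trans (one_smul ℂ f).symm)
  have hbound (ρ : ℂ →ₗ[ℚ] ℚ) (hρ : ρ 1 = 1) (i : Fin n) : ρ (l i) ∈ Set.Ioo 0 (1 / 2) := by
    refine mem_Ioo_of_forall_exists_add_weight_eq_one (w := ρ ∘ l) (fun A hA => ?_) i
    obtain ⟨j, β, hβA, hβN, hβ⟩ := exists_coeff_ne_zero_of_mId_pow_le_Jac hN hA
    have hdeg : (β + Finsupp.single j 1).degree = β.degree + 1 := by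
      rw [map_add, Finsupp.degree_single]
    have hdeg3 : 3 ≤ (β + Finsupp.single j 1).degree := by
      by_contra! hlt
      exact hβ (mem_mId_pow_iff.1 hf _ hlt)
    have hweight := weight_eq_of_coeff_ne_zero hD hx hf1 (by omega) hβ
    refine ⟨j, β, hβA, by omega, ?_⟩
    rw [← hρ, ← hweight, map_weight, map_add, Finsupp.weight_single, one_smul, add_comm]
  have hrat (i : Fin n) : l i ∈ Submodule.span ℚ {(1 : ℂ)} := by
    by_contra hi
    obtain ⟨ρ, hρ1, hρi⟩ := exists_linearMap_apply_eq_and_apply_eq one_ne_zero hi 1 1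
    have := (hbound ρ hρ1 i).2
    norm_num [hρi] at this
  choose w hw using fun i => Submodule.mem_span_singleton.1 (hrat i)
  obtain ⟨ρ, hρ, -⟩ := Submodule.exists_le_ker_of_notMem
    (mt (Submodule.mem_bot ℚ).1 (one_ne_zero (α := ℂ)))
  refine ⟨w, fun i => ?_, fun i => by rw [← hw i, Rat.smul_one_eq_cast]⟩
  have h := hbound ((ρ 1)⁻¹ • ρ) (by simp [hρ]) i
  rwa [← hw i, map_smul, LinearMap.smul_apply, smul_eq_mul, smul_eq_mul, inv_mul_cancel₀ hρ,
    mul_one] at h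

end On

/-! ### Convergent solution of the cohomological equation -/

section Rescaling

variable {σ : Type*} [Fintype σ]

lemma mul_mvPow_sub_single {R : Type*} [CommMonoid R] (x : σ → R) {i : σ} {β : σ →₀ ℕ}
    (hi : β i ≠ 0) : x i * mvPow x (β - Finsupp.single i 1) = mvPow x β := by
  have hle : Finsupp.single i 1 ≤ β := Finsupp.single_le_iff.2 (Nat.one_le_iff_ne_zero.2 hi)
  conv_rhs => rw [← add_tsub_cancel_of_le hle, mvPow_add, mvPow_single, pow_one]

lemma mvPow_pow_mul {R : Type*} [CommMonoid R] (θ : R) (e : σ → ℕ) (x : σ → R) (α : σ →₀ ℕ) :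
    mvPow (fun i => θ ^ e i * x i) α = θ ^ Finsupp.weight e α * mvPow x α := by
  simp only [mvPow, mul_pow, Finset.prod_mul_distrib, ← pow_mul, Finset.prod_pow_eq_pow_sum,
    Finsupp.weight_eq_sum, smul_eq_mul, mul_comm]

variable {𝕜 : Type*} [NontriviallyNormedField 𝕜] {e : σ → ℕ} {R : σ → ℝ}

lemma WeightedSummable.pow_mul {a : MvPowerSeries σ 𝕜} (ha : WeightedSummable R a)
    (hR : ∀ i, 0 ≤ R i) {θ : ℝ} (hθ : θ ∈ Set.Icc 0 1) :
    WeightedSummable (fun i => θ ^ e i * R i) a :=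
  ha.mono (fun i => mul_nonneg (pow_nonneg hθ.1 _) (hR i)) fun i =>
    mul_le_of_le_one_left (hR i) (pow_le_one₀ hθ.1 hθ.2)

lemma weightedNorm_pow_mul_le {a : MvPowerSeries σ 𝕜} {m : ℕ}
    (hm : ∀ α, MvPowerSeries.coeff α a ≠ 0 → m ≤ Finsupp.weight e α) (hR : ∀ i, 0 ≤ R i)
    (ha : WeightedSummable R a) {θ : ℝ} (hθ : θ ∈ Set.Icc 0 1) :
    weightedNorm (fun i => θ ^ e i * R i) a ≤ θ ^ m * weightedNorm R a := by
  rw [weightedNorm, weightedNorm, ← tsum_mul_left]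
  refine Summable.tsum_le_tsum (fun α => ?_) (ha.pow_mul hR hθ) (Summable.mul_left _ ha)
  by_cases hα : MvPowerSeries.coeff α a = 0
  · simp [hα]
  · rw [mvPow_pow_mul, mul_left_comm]
    exact mul_le_mul_of_nonneg_right (pow_le_pow_of_le_one hθ.1 hθ.2 (hm α hα))
      (mul_nonneg (norm_nonneg _) (mvPow_nonneg hR α))

lemma exists_weightedNorm_pow_mul_le {a : σ → MvPowerSeries σ 𝕜}
    (hm : ∀ i α, MvPowerSeries.coeff α (a i) ≠ 0 → e i < Finsupp.weight e α) (hR : ∀ i, 0 < R i)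
    (ha : ∀ i, WeightedSummable R (a i)) {η : ℝ} (hη : 0 < η) :
    ∃ θ ∈ Set.Ioc (0 : ℝ) 1, ∀ i,
      weightedNorm (fun j => θ ^ e j * R j) (a i) ≤ η * (θ ^ e i * R i) := by
  have hR0 (i) : 0 ≤ R i := (hR i).le
  have hsmall (i : σ) : ∀ᶠ θ : ℝ in 𝓝[>] 0, θ * weightedNorm R (a i) < η * R i := by
    have hlim : Tendsto (fun θ : ℝ => θ * weightedNorm R (a i)) (𝓝 0) (𝓝 0) := by
      simpa using (continuous_mul_const (weightedNorm R (a i))).tendsto 0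
    exact (hlim.mono_left nhdsWithin_le_nhds).eventually_lt_const (mul_pos hη (hR i))
  obtain ⟨θ, hsmall, hθ⟩ :=
    ((eventually_all.2 hsmall).and (Ioc_mem_nhdsGT (one_pos (α := ℝ)))).exists
  refine ⟨θ, hθ, fun i => ?_⟩
  calc weightedNorm (fun j => θ ^ e j * R j) (a i)
      ≤ θ ^ (e i + 1) * weightedNorm R (a i) :=
        weightedNorm_pow_mul_le (hm i) hR0 (ha i) (Set.Ioc_subset_Icc_self hθ)
    _ = θ ^ e i * (θ * weightedNorm R (a i)) := by ring
    _ ≤ θ ^ e i * (η * R i) :=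
        mul_le_mul_of_nonneg_left (hsmall i).le (pow_nonneg hθ.1.le _)
    _ = η * (θ ^ e i * R i) := by ring

end Rescaling

section NearDiagonal

variable {σ : Type*} [Fintype σ] {r : σ → ℝ}

lemma weightedNorm_smul {𝕜 : Type*} [NontriviallyNormedField 𝕜] (c : 𝕜) (a : MvPowerSeries σ 𝕜) :
    weightedNorm r (c • a) = ‖c‖ * weightedNorm r a := by
  simp only [weightedNorm, MvPowerSeries.coeff_smul, norm_mul, mul_assoc, tsum_mul_left]

variable {S : Set (σ →₀ ℕ)} {g : MvPowerSeries σ ℂ}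

lemma WeightedSummable.exists_support_hasSum_coeff_mul_eq_sub (hr : ∀ i, 0 < r i)
    {P : (σ →₀ ℕ) → MvPowerSeries σ ℂ} {c : ℝ} (hc : c < 1) (hc0 : 0 ≤ c)
    (hP : ∀ β ∈ S, WeightedSummable r (P β)) (hPc : ∀ β ∈ S, weightedNorm r (P β) ≤ c * mvPow r β)
    (hPS : ∀ β ∈ S, ∀ γ ∉ S, MvPowerSeries.coeff γ (P β) = 0)
    (hg : WeightedSummable r g) (hgS : ∀ γ ∉ S, MvPowerSeries.coeff γ g = 0) :
    ∃ v : MvPowerSeries σ ℂ, WeightedSummable r v ∧ (∀ γ ∉ S, MvPowerSeries.coeff γ v = 0) ∧ ∀ γ,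
      HasSum (fun β => MvPowerSeries.coeff β v * MvPowerSeries.coeff γ (P β))
        (MvPowerSeries.coeff γ g - MvPowerSeries.coeff γ v) := by
  classical
  let P' (β : σ →₀ ℕ) : MvPowerSeries σ ℂ := if β ∈ S then P β else 0
  obtain ⟨v, hv, hsum⟩ := hg.exists_hasSum_coeff_mul_eq_sub hr hc hc0 (P := P')
    (fun β => by
      by_cases hβ : β ∈ S
      · simpa only [P', if_pos hβ] using hP β hβ
      · simpa only [P', if_neg hβ] using weightedSummable_zero r)
    fun β => by
      by_cases hβ : β ∈ S
      · simpa only [P', if_pos hβ] using hPc β hβ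
      · simpa only [P', if_neg hβ, weightedNorm_zero] using
          mul_nonneg hc0 (mvPow_nonneg (fun i => (hr i).le) β)
  have hvS (γ) (hγ : γ ∉ S) : MvPowerSeries.coeff γ v = 0 := by
    have hzero (β) : MvPowerSeries.coeff γ (P' β) = 0 := by
      by_cases hβ : β ∈ S
      · simpa only [P', if_pos hβ] using hPS β hβ γ hγ
      · simp only [P', if_neg hβ, map_zero]
    have h := hsum γ
    simp only [hzero, mul_zero, hgS γ hγ, zero_sub] at h
    exact neg_eq_zero.1 (h.unique hasSum_zero)
  refine ⟨v, hv, hvS, fun γ => ?_⟩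
  convert hsum γ using 2 with β
  by_cases hβ : β ∈ S
  · simp only [P', if_pos hβ]
  · rw [hvS β hβ, zero_mul, zero_mul]

lemma WeightedSummable.exists_hasSum_coeff_mul_eq (hr : ∀ i, 0 < r i) {d : (σ →₀ ℕ) → ℂ}
    {A : (σ →₀ ℕ) → MvPowerSeries σ ℂ} {δ c : ℝ} (hδ : 0 < δ) (hc : c < 1) (hc0 : 0 ≤ c)
    (hd : ∀ β ∈ S, δ ≤ ‖d β‖)
    (hA : ∀ β ∈ S, WeightedSummable r (A β - MvPowerSeries.monomial β (d β)))
    (hAc : ∀ β ∈ S, weightedNorm r (A β - MvPowerSeries.monomial β (d β)) ≤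
      c * (‖d β‖ * mvPow r β))
    (hAS : ∀ β ∈ S, ∀ γ ∉ S, MvPowerSeries.coeff γ (A β) = 0)
    (hg : WeightedSummable r g) (hgS : ∀ γ ∉ S, MvPowerSeries.coeff γ g = 0) :
    ∃ a : MvPowerSeries σ ℂ, WeightedSummable r a ∧ (∀ γ ∉ S, MvPowerSeries.coeff γ a = 0) ∧
      ∀ γ, HasSum (fun β => MvPowerSeries.coeff β a * MvPowerSeries.coeff γ (A β))
        (MvPowerSeries.coeff γ g) := by
  classical
  have hd0 (β) (hβ : β ∈ S) : 0 < ‖d β‖ := hδ.trans_le (hd β hβ)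
  have hr0 (γ) : 0 ≤ mvPow r γ := mvPow_nonneg (fun i => (hr i).le) γ
  obtain ⟨v, hv, hvS, hsum⟩ := hg.exists_support_hasSum_coeff_mul_eq_sub hr hc hc0
    (P := fun β => (d β)⁻¹ • (A β - MvPowerSeries.monomial β (d β)))
    (fun β hβ => (hA β hβ).smul _)
    (fun β hβ => by
      rw [weightedNorm_smul, norm_inv, inv_mul_le_iff₀ (hd0 β hβ), mul_left_comm]
      exact hAc β hβ)
    (fun β hβ γ hγ => by
      rw [MvPowerSeries.coeff_smul, map_sub, hAS β hβ γ hγ, MvPowerSeries.coeff_monomial_ne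
        (by rintro rfl; exact hγ hβ), sub_zero, mul_zero]) hgS
  obtain ⟨a, ha⟩ : ∃ a : MvPowerSeries σ ℂ,
      ∀ γ, MvPowerSeries.coeff γ a = MvPowerSeries.coeff γ v / d γ :=
    ⟨fun γ => MvPowerSeries.coeff γ v / d γ, fun _ => rfl⟩
  have haS (γ) (hγ : γ ∉ S) : MvPowerSeries.coeff γ a = 0 := by rw [ha, hvS γ hγ, zero_div]
  refine ⟨a, .of_le (fun i => (hr i).le) (Summable.mul_left δ⁻¹ hv) fun γ => ?_, haS, fun γ => ?_⟩
  · rw [← mul_assoc]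
    refine mul_le_mul_of_nonneg_right ?_ (hr0 γ)
    by_cases hγ : γ ∈ S
    · rw [ha, norm_div, div_eq_inv_mul]
      exact mul_le_mul_of_nonneg_right (inv_anti₀ hδ (hd γ hγ)) (norm_nonneg _)
    · rw [haS γ hγ, norm_zero]
      positivity
  · have h := (hsum γ).add (hasSum_ite_eq γ (MvPowerSeries.coeff γ v))
    rw [sub_add_cancel] at h
    convert h using 2 with β
    by_cases hβ : β ∈ S
    · have := norm_pos_iff.1 (hd0 β hβ)
      rw [ha, MvPowerSeries.coeff_smul, map_sub, MvPowerSeries.coeff_monomial]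
      by_cases hγβ : γ = β
      · rw [if_pos hγβ, if_pos hγβ.symm, hγβ]
        field_simp
        ring
      · rw [if_neg hγβ, if_neg (Ne.symm hγβ)]
        ring
    · rw [haS β hβ, hvS β hβ, zero_mul, zero_mul, zero_add]
      split_ifs with h
      exacts [(h ▸ hvS β hβ).symm, rfl]

end NearDiagonal

namespace On

open Classical in
lemma hasSum_coeff_apply {T : On n →ₗ[ℂ] On n} (hT : ∀ k, ∀ g ∈ mId n ^ k, T g ∈ mId n ^ k)
    (g : On n) (γ : Fin n →₀ ℕ) :
    HasSum (fun β => coeff β g * coeff γ (T (mvPow coordG β))) (coeff γ (T g)) := by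
  have htail := mem_mId_pow_iff.1 (hT _ _ (sub_sum_coeff_smul_mem (γ.degree + 1) g)) γ (by omega)
  rw [map_sub, map_sub, sub_eq_zero, map_sum, map_sum] at htail
  simp only [map_smul, smul_eq_mul] at htail
  rw [htail]
  refine hasSum_sum_of_ne_finset_zero fun β hβ => ?_
  rw [Set.Finite.mem_toFinset, Set.mem_ofPred_eq, not_lt] at hβ
  rw [mem_mId_pow_iff.1 (hT _ _ (mvPow_coordG_mem β)) γ (by omega), mul_zero]

lemma exists_mem_mId_pow_apply_eq {T : On n →ₗ[ℂ] On n}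
    (hT : ∀ k, ∀ g ∈ mId n ^ k, T g ∈ mId n ^ k) {d : (Fin n →₀ ℕ) → ℂ} {r : Fin n → ℝ}
    (hr : ∀ i, 0 < r i) {K : ℕ} {δ c : ℝ} (hδ : 0 < δ) (hc : c < 1) (hc0 : 0 ≤ c)
    (hd : ∀ β : Fin n →₀ ℕ, K ≤ β.degree → δ ≤ ‖d β‖)
    (hS : ∀ β : Fin n →₀ ℕ, K ≤ β.degree →
      WeightedSummable r (taylor n (T (mvPow coordG β) - d β • mvPow coordG β)))
    (hle : ∀ β : Fin n →₀ ℕ, K ≤ β.degree →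
      weightedNorm r (taylor n (T (mvPow coordG β) - d β • mvPow coordG β)) ≤
        c * (‖d β‖ * mvPow r β))
    {g : On n} (hg : g ∈ mId n ^ K) (hgS : WeightedSummable r (taylor n g)) :
    ∃ v ∈ mId n ^ K, T v = g := by
  have htaylor (β : Fin n →₀ ℕ) : taylor n (T (mvPow coordG β) - d β • mvPow coordG β) =
      taylor n (T (mvPow coordG β)) - MvPowerSeries.monomial β (d β) := by
    rw [map_sub, map_smul, taylor_mvPow_coordG, ← map_smul, smul_eq_mul, mul_one]
  simp only [htaylor] at hS hle
  obtain ⟨a, haS, ha0, hsum⟩ := hgS.exists_hasSum_coeff_mul_eq hr hδ hc hc0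
    (S := {β | K ≤ β.degree}) hd hS hle
    (fun β hβ γ hγ => mem_mId_pow_iff.1 (hT _ _ (mvPow_coordG_mem β)) γ
      ((not_le.1 hγ).trans_le hβ))
    fun γ hγ => mem_mId_pow_iff.1 hg γ (not_le.1 hγ)
  obtain ⟨v, rfl⟩ := exists_taylor_eq hr haS
  exact ⟨v, mem_mId_pow_iff.2 fun γ hγ => ha0 γ (not_le.2 hγ),
    ext_coeff fun γ => (hasSum_coeff_apply hT v γ).unique (hsum γ)⟩

lemma pd_mvPow_coordG (i : Fin n) (β : Fin n →₀ ℕ) :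
    pd i (mvPow coordG β) = (β i : ℂ) • mvPow coordG (β - Finsupp.single i 1) := by
  refine ext_coeff fun α => ?_
  rw [coeff_pd, coeff_mvPow, map_smul, coeff_mvPow, smul_eq_mul]
  by_cases hi : β i = 0
  · rw [if_neg (by rintro rfl; simp at hi), hi, zero_mul, Nat.cast_zero, zero_mul]
  · have hle : Finsupp.single i 1 ≤ β := Finsupp.single_le_iff.2 (Nat.one_le_iff_ne_zero.2 hi)
    simp only [eq_tsub_iff_add_eq_of_le hle]
    split_ifs with h
    · rw [← h]
      simp
    · rw [zero_mul, mul_zero]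

lemma derivation_mvPow_coordG_sub_smul (D : Derivation ℂ (On n) (On n)) (l : Fin n → ℂ)
    (β : Fin n →₀ ℕ) :
    D (mvPow coordG β) - Finsupp.weight l β • mvPow coordG β =
      ∑ i, (β i : ℂ) •
        ((D (coordG i) - l i • coordG i) * mvPow coordG (β - Finsupp.single i 1)) := by
  rw [derivation_eq_vectorField D, vectorField_apply, applyVF, Finsupp.weight_eq_sum,
    Finset.sum_smul, ← Finset.sum_sub_distrib]
  refine Finset.sum_congr rfl fun i _ => ?_
  rw [vectorField_coordG, pd_mvPow_coordG, mul_smul_comm, sub_mul, smul_sub, smul_mul_assoc]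
  by_cases hi : β i = 0
  · simp [hi]
  · rw [mul_mvPow_sub_single _ hi, ← Nat.cast_smul_eq_nsmul ℂ, smul_eq_mul, mul_smul]

lemma weightedNorm_taylor_derivation_mvPow_sub_smul_le {D : Derivation ℂ (On n) (On n)}
    {l : Fin n → ℂ} {r : Fin n → ℝ} {η : ℝ} (hr : ∀ i, 0 ≤ r i)
    (hS : ∀ i, WeightedSummable r (taylor n (D (coordG i) - l i • coordG i)))
    (hle : ∀ i, weightedNorm r (taylor n (D (coordG i) - l i • coordG i)) ≤ η * r i)
    (β : Fin n →₀ ℕ) :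
    WeightedSummable r (taylor n (D (mvPow coordG β) - Finsupp.weight l β • mvPow coordG β)) ∧
      weightedNorm r (taylor n (D (mvPow coordG β) - Finsupp.weight l β • mvPow coordG β)) ≤
        η * β.degree * mvPow r β := by
  have hterm (i) := (hS i).mul hr (weightedSummable_monomial r (β - Finsupp.single i 1) (1 : ℂ))
  rw [derivation_mvPow_coordG_sub_smul, map_sum]
  simp only [map_smul, map_mul, taylor_mvPow_coordG]
  refine ⟨.sum hr fun i _ => (hterm i).smul _,
    (weightedNorm_sum_le hr fun i _ => (hterm i).smul _).trans ?_⟩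
  rw [Finsupp.degree_eq_sum, Nat.cast_sum, Finset.mul_sum, Finset.sum_mul]
  refine Finset.sum_le_sum fun i _ => ?_
  rw [weightedNorm_smul, Complex.norm_natCast]
  by_cases hi : β i = 0
  · simp [hi]
  calc (β i : ℝ) * weightedNorm r (taylor n (D (coordG i) - l i • coordG i) *
        MvPowerSeries.monomial (β - Finsupp.single i 1) 1)
      ≤ β i * (η * r i * mvPow r (β - Finsupp.single i 1)) := by
        refine mul_le_mul_of_nonneg_left ?_ (Nat.cast_nonneg _)
        refine (weightedNorm_mul_le hr (hS i) (weightedSummable_monomial _ _ _)).trans ?_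
        rw [weightedNorm_monomial, norm_one, one_mul]
        exact mul_le_mul_of_nonneg_right (hle i) (mvPow_nonneg hr _)
    _ = η * β i * mvPow r β := by rw [← mul_mvPow_sub_single r hi]; ring

/-- Giving `coordG j` the weight `2 * n - j` turns "strictly triangular plus order two" into
"of weight larger than `2 * n - i`". -/
lemma lt_weight_of_coeff_ne_zero {p : On n} {i : Fin n}
    (hp : p ∈ Submodule.span ℂ (coordG '' Set.Iio i) ⊔ (mId n ^ 2).restrictScalars ℂ)
    {α : Fin n →₀ ℕ} (hα : coeff α p ≠ 0) :
    2 * n - i < Finsupp.weight (fun j : Fin n => 2 * n - (j : ℕ)) α := by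
  by_contra! hle
  refine hα ?_
  suffices h : Submodule.span ℂ (coordG '' Set.Iio i) ⊔ (mId n ^ 2).restrictScalars ℂ ≤
      LinearMap.ker (coeff α) from h hp
  refine sup_le (Submodule.span_le.2 ?_) fun g hg => mem_mId_pow_iff.1 hg α ?_
  · rintro _ ⟨j, hj : j < i, rfl⟩
    rw [SetLike.mem_coe, LinearMap.mem_ker, coeff_def, taylor_coordG, MvPowerSeries.coeff_X, if_neg]
    rintro rfl
    rw [Finsupp.weight_single, one_smul] at hle
    have := i.2
    lia
  · have h := (degree_nsmul_le_weight (w := fun j : Fin n => 2 * n - (j : ℕ)) (c := n + 1)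
      (β := α) fun j _ => by have := j.2; lia).trans hle
    rw [smul_eq_mul] at h
    by_contra! h2
    have := Nat.mul_le_mul_right (n + 1) h2
    lia

lemma exists_common_radius {ι : Type*} [Finite ι] (g : ι → On n) :
    ∃ t > 0, ∀ i, WeightedSummable (fun _ => t) (taylor n (g i)) := by
  choose t ht hsum using fun i => exists_weightedSummable_taylor (g i)
  have hsmall (i) : ∀ᶠ s in 𝓝[>] (0 : ℝ), s < t i := nhdsWithin_le_nhds (eventually_lt_nhds (ht i))
  obtain ⟨s, hst, hs⟩ := ((eventually_all.2 hsmall).and self_mem_nhdsWithin).exists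
  exact ⟨s, hs, fun i => (hsum i).mono (fun _ => le_of_lt hs) fun _ => (hst i).le⟩

lemma exists_radius_of_triangular {p : Fin n → On n}
    (hp : ∀ i, p i ∈ Submodule.span ℂ (coordG '' Set.Iio i) ⊔ (mId n ^ 2).restrictScalars ℂ)
    (g : On n) {η : ℝ} (hη : 0 < η) :
    ∃ r : Fin n → ℝ, (∀ i, 0 < r i) ∧ WeightedSummable r (taylor n g) ∧
      (∀ i, WeightedSummable r (taylor n (p i))) ∧
      ∀ i, weightedNorm r (taylor n (p i)) ≤ η * r i := by
  obtain ⟨t, ht, hsum⟩ := exists_common_radius fun o : Option (Fin n) => o.elim g p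
  obtain ⟨θ, hθ, hle⟩ := exists_weightedNorm_pow_mul_le (R := fun _ : Fin n => t)
    (fun i α => lt_weight_of_coeff_ne_zero (hp i)) (fun _ => ht) (fun i => hsum (some i)) hη
  have hθ' := Set.Ioc_subset_Icc_self hθ
  exact ⟨_, fun i => mul_pos (pow_pos hθ.1 _) ht, (hsum none).pow_mul (fun _ => ht.le) hθ',
    fun i => (hsum (some i)).pow_mul (fun _ => ht.le) hθ', hle⟩

lemma exists_mul_degree_le_norm_weight_sub {l : Fin n → ℂ} (hl : ∀ i, 0 < (l i).re) (μ : ℂ) :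
    ∃ ω > 0, ∃ K₀ > 0, ∀ β : Fin n →₀ ℕ, K₀ ≤ β.degree →
      ω * β.degree ≤ ‖Finsupp.weight l β - μ‖ := by
  have hsmall (i) : ∀ᶠ s in 𝓝[>] (0 : ℝ), s < (l i).re :=
    nhdsWithin_le_nhds (eventually_lt_nhds (hl i))
  obtain ⟨s, hsl, hs : 0 < s⟩ := ((eventually_all.2 hsmall).and self_mem_nhdsWithin).exists
  refine ⟨s / 2, half_pos hs, ⌈‖μ‖ / (s / 2)⌉₊ + 1, Nat.succ_pos _, fun β hβ => ?_⟩
  have hμ : ‖μ‖ ≤ s / 2 * β.degree := by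
    rw [← div_le_iff₀' (half_pos hs)]
    exact (Nat.le_ceil _).trans (Nat.cast_le.2 (Nat.le_of_succ_le hβ))
  have hweight : β.degree * s ≤ ‖Finsupp.weight l β‖ := by
    rw [← nsmul_eq_mul]
    refine (degree_nsmul_le_weight fun i _ => (hsl i).le).trans ?_
    rw [← show _ = Finsupp.weight (fun i => (l i).re) β from map_weight Complex.reAddGroupHom l β]
    exact Complex.re_le_norm _
  linarith [norm_sub_norm_le (Finsupp.weight l β) μ]

theorem exists_derivation_sub_smul_apply_eq {D : Derivation ℂ (On n) (On n)} {l : Fin n → ℂ}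
    (hD : ∀ g ∈ mId n, D g ∈ mId n) (hl : ∀ i, 0 < (l i).re)
    (hp : ∀ i, D (coordG i) - l i • coordG i ∈
      Submodule.span ℂ (coordG '' Set.Iio i) ⊔ (mId n ^ 2).restrictScalars ℂ) (μ : ℂ) :
    ∃ K₀, ∀ K ≥ K₀, ∀ g ∈ mId n ^ K, ∃ v ∈ mId n ^ K,
      (D.toLinearMap - μ • (1 : Module.End ℂ (On n))) v = g := by
  obtain ⟨ω, hω, K₀, hK₀, hweight⟩ := exists_mul_degree_le_norm_weight_sub hl μ
  refine ⟨K₀, fun K hK g hg => ?_⟩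
  obtain ⟨r, hr, hgS, hpS, hple⟩ := exists_radius_of_triangular hp g (half_pos hω)
  have hr0 (i) : 0 ≤ r i := (hr i).le
  have hmono (β : Fin n →₀ ℕ) := weightedNorm_taylor_derivation_mvPow_sub_smul_le hr0 hpS hple β
  have hsub (β : Fin n →₀ ℕ) : (D.toLinearMap - μ • (1 : Module.End ℂ (On n))) (mvPow coordG β) -
      (Finsupp.weight l β - μ) • mvPow coordG β =
      D (mvPow coordG β) - Finsupp.weight l β • mvPow coordG β := by
    rw [sub_smul, LinearMap.sub_apply, LinearMap.smul_apply, Module.End.one_apply,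
      Derivation.coeFn_coe]
    abel
  refine exists_mem_mId_pow_apply_eq (T := D.toLinearMap - μ • 1)
    (d := fun β => Finsupp.weight l β - μ) (c := 1 / 2) (fun k g hg => ?_) hr hω (by norm_num)
    (by norm_num) (fun β hβ => ?_) (fun β _ => by rw [hsub]; exact (hmono β).1) (fun β hβ => ?_)
    hg hgS
  · exact sub_mem (derivation_apply_mem_pow_of_mapsTo hD hg) (Submodule.smul_of_tower_mem _ μ hg)
  · refine le_trans ?_ (hweight β (hK.trans hβ))
    exact le_mul_of_one_le_right hω.le (Nat.one_le_cast.2 (hK₀.trans_le (hK.trans hβ)))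
  · rw [hsub]
    refine (hmono β).2.trans ?_
    rw [← mul_assoc]
    refine mul_le_mul_of_nonneg_right ?_ (mvPow_nonneg hr0 β)
    linarith [hweight β (hK.trans hβ)]

end On

/-! ### The Bruce–Roberts ideal -/

lemma le_of_finrank_quotient_eq {K A : Type*} [Field K] [CommRing A] [Algebra K A] {I J : Ideal A}
    [FiniteDimensional K (A ⧸ I)] (hle : I ≤ J)
    (h : Module.finrank K (A ⧸ I) = Module.finrank K (A ⧸ J)) : J ≤ I := by
  have hsurj : Function.Surjective (Ideal.Quotient.factorₐ K hle).toLinearMap :=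
    Ideal.Quotient.factor_surjective hle
  have : FiniteDimensional K (A ⧸ J) := Module.Finite.of_surjective _ hsurj
  have hinj := (LinearMap.injective_iff_surjective_of_finrank_eq_finrank h).2 hsurj
  intro g hg
  refine Ideal.Quotient.eq_zero_iff_mem.1 (hinj ?_)
  rw [map_zero]
  exact Ideal.Quotient.eq_zero_iff_mem.2 hg

-- If `D x` were a unit, applying `D` to `x ^ (p + 1) ∈ J` would give `x ^ p ∈ J`, and finally
-- `1 ∈ J`.
lemma derivation_apply_mem_maximalIdeal {K R : Type*} [Field K] [CharZero K] [CommRing R]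
    [IsLocalRing R] [Algebra K R] {D : Derivation K R R} {J : Ideal R} (hJ : J ≠ ⊤)
    (hD : ∀ g ∈ J, D g ∈ J) {N : ℕ} (hN : IsLocalRing.maximalIdeal R ^ N ≤ J) {x : R}
    (hx : x ∈ IsLocalRing.maximalIdeal R) : D x ∈ IsLocalRing.maximalIdeal R := by
  by_contra hunit
  rw [IsLocalRing.notMem_maximalIdeal] at hunit
  have hdescent (p : ℕ) (hp : x ^ (p + 1) ∈ J) : x ^ p ∈ J := by
    have h := Submodule.smul_of_tower_mem J ((p + 1 : ℕ) : K)⁻¹ (hD _ hp)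
    rw [Derivation.leibniz_pow, Nat.add_sub_cancel, ← Nat.cast_smul_eq_nsmul K,
      inv_smul_smul₀ (Nat.cast_ne_zero.2 p.succ_ne_zero), smul_eq_mul] at h
    exact (Ideal.mul_unit_mem_iff_mem J hunit).1 h
  have hpow (p : ℕ) : x ^ p ∉ J := by
    induction p with
    | zero => rwa [pow_zero, ← Ideal.ne_top_iff_one]
    | succ p ih => exact mt (hdescent p) ih
  exact hpow N (hN (Ideal.pow_mem_pow hx N))

namespace On

variable {X : Set (Fin n → ℂ)} {f : On n}

lemma mem_BRIdeal_iff {g : On n} : g ∈ BRIdeal n X f ↔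
    ∃ D : Derivation ℂ (On n) (On n), (∀ h ∈ IX n X, D h ∈ IX n X) ∧ D f = g := by
  constructor
  · rintro ⟨δ, hδ, rfl⟩
    exact ⟨vectorField δ, fun h hh => vectorField_apply δ h ▸ hδ h hh, vectorField_apply δ f⟩
  · rintro ⟨D, hD, rfl⟩
    have happly (h : On n) : applyVF (fun j => D (coordG j)) h = D h := by
      rw [← vectorField_apply, ← derivation_eq_vectorField]
    exact ⟨fun j => D (coordG j), fun h hh => (happly h).symm ▸ hD h hh, happly f⟩

lemma BRIdeal_le_mId (hf : f ∈ mId n ^ 2) : BRIdeal n X f ≤ mId n := by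
  intro g hg
  obtain ⟨D, -, rfl⟩ := mem_BRIdeal_iff.1 hg
  exact pow_one (mId n) ▸ derivation_apply_mem_pow D (mId n) (k := 1) hf

lemma BRIdeal_le_Jac : BRIdeal n X f ≤ Jac n f := by
  intro g hg
  obtain ⟨D, -, rfl⟩ := mem_BRIdeal_iff.1 hg
  exact derivation_apply_mem_Jac D f

lemma derivation_apply_mem_BRIdeal {D : Derivation ℂ (On n) (On n)}
    (hD : ∀ h ∈ IX n X, D h ∈ IX n X) (hDf : D f = f) {g : On n} (hg : g ∈ BRIdeal n X f) :
    D g ∈ BRIdeal n X f := by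
  obtain ⟨E, hE, rfl⟩ := mem_BRIdeal_iff.1 hg
  have hcomm : D (E f) = (⁅D, E⁆ + E) f := by
    rw [Derivation.add_apply, Derivation.commutator_apply, hDf, sub_add_cancel]
  refine mem_BRIdeal_iff.2 ⟨⁅D, E⁆ + E, fun h hh => ?_, hcomm.symm⟩
  rw [Derivation.add_apply, Derivation.commutator_apply]
  exact add_mem (sub_mem (hD _ (hE h hh)) (hE _ (hD h hh))) (hE h hh)

lemma self_mem_BRIdeal [FiniteDimensional ℂ (On n ⧸ BRIdeal n X f)]
    (heq : muX n X f = tauX n X f) : f ∈ BRIdeal n X f :=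
  le_of_finrank_quotient_eq (J := BRIdeal n X f + Ideal.span {f}) le_sup_left heq
    (Ideal.mem_sup_right (Ideal.mem_span_singleton_self f))

theorem exists_derivation_apply_self_eq (hf : f ∈ mId n ^ 2)
    [FiniteDimensional ℂ (On n ⧸ BRIdeal n X f)] (heq : muX n X f = tauX n X f) :
    ∃ (D : Derivation ℂ (On n) (On n)) (N : ℕ), (∀ g ∈ mId n, D g ∈ mId n) ∧ D f = f ∧
      (∀ g ∈ IX n X, D g ∈ IX n X) ∧ mId n ^ N ≤ Jac n f := by
  have : IsArtinianRing (On n ⧸ BRIdeal n X f) := IsArtinianRing.of_finite ℂ _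
  obtain ⟨N, hN⟩ :=
    IsLocalRing.exists_maximalIdeal_pow_le_of_isArtinianRing_quotient (BRIdeal n X f)
  obtain ⟨D, hDX, hDf⟩ := mem_BRIdeal_iff.1 (self_mem_BRIdeal heq)
  have hne : BRIdeal n X f ≠ ⊤ :=
    ne_top_of_le_ne_top (Ideal.IsMaximal.ne_top inferInstance) (BRIdeal_le_mId hf)
  have hDm {g : On n} :
      g ∈ IsLocalRing.maximalIdeal (On n) → D g ∈ IsLocalRing.maximalIdeal (On n) :=
    derivation_apply_mem_maximalIdeal hne
      (fun g hg => derivation_apply_mem_BRIdeal hDX hDf hg) hN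
  rw [maximalIdeal_eq] at hN hDm
  exact ⟨D, N, fun g => hDm, hDf, hDX, hN.trans BRIdeal_le_Jac⟩

end On

/-! ### Linearization of the Euler field -/

namespace On

variable {D : Derivation ℂ (On n) (On n)}

lemma exists_mem_derivationEigenspace_bot_sub_mem {l : Fin n → ℂ} {k : ℕ}
    (hD : ∀ g ∈ mId n, D g ∈ mId n) (hl : ∀ i, 0 < (l i).re)
    (hx : ∀ i, coordG i ∈ derivationEigenspace D (mId n ^ k) (l i))
    (hp : ∀ i, D (coordG i) - l i • coordG i ∈
      Submodule.span ℂ (coordG '' Set.Iio i) ⊔ (mId n ^ 2).restrictScalars ℂ) (i : Fin n) :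
    ∃ y ∈ derivationEigenspace D ⊥ (l i), coordG i - y ∈ mId n ^ k := by
  have hDpow (j : ℕ) : ∀ g ∈ mId n ^ j, D g ∈ mId n ^ j :=
    fun g hg => derivation_apply_mem_pow_of_mapsTo hD hg
  obtain ⟨K₀, hsurj⟩ := exists_derivation_sub_smul_apply_eq hD hl hp (l i)
  have hle {j : ℕ} (hj : j ≤ max k K₀) :
      (mId n ^ max k K₀).restrictScalars ℂ ≤ (mId n ^ j).restrictScalars ℂ :=
    Ideal.pow_le_pow_right hj
  obtain ⟨u, -, hu, hxu⟩ := exists_mem_genEigenspaceMod_sub_mem (hDpow (max k K₀)) (hDpow k)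
    (hle (le_max_left k K₀)) (p := ⊤) (fun _ _ => trivial) trivial (hx i)
  obtain ⟨y, hy, huy⟩ :=
    exists_mem_genEigenspaceMod_bot_sub_mem (hsurj _ (le_max_right k K₀)) hu
  refine ⟨y, hy, ?_⟩
  rw [← sub_add_sub_cancel (coordG i) u y]
  exact add_mem hxu (hle (le_max_left k K₀) huy)

lemma mId_le_span_range_sup {y : Fin n → On n} (h : ∀ i, coordG i - y i ∈ mId n ^ 2) :
    mId n ≤ Ideal.span (Set.range y) ⊔ mId n ^ 2 := by
  nth_rewrite 1 [mId_eq_span]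
  rw [Ideal.span_le]
  rintro _ ⟨i, rfl⟩
  rw [← add_sub_cancel (y i) (coordG i)]
  exact add_mem (Ideal.mem_sup_left (Ideal.subset_span ⟨i, rfl⟩)) (Ideal.mem_sup_right (h i))

lemma mId_le_span_range_comp_sup (σ : On n ≃ₐ[ℂ] On n) {y : Fin n → On n}
    (h : mId n ≤ Ideal.span (Set.range y) ⊔ mId n ^ 2) :
    mId n ≤ Ideal.span (Set.range (σ ∘ y)) ⊔ mId n ^ 2 := by
  have hmap := Ideal.map_mono (f := σ) h
  rwa [Ideal.map_sup, Ideal.map_span, Ideal.map_pow, map_mId, ← Set.range_comp] at hmap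

theorem exists_coordChange_eigencoordinates (hD : ∀ g ∈ mId n, D g ∈ mId n) {f : On n}
    (hf : f ∈ mId n ^ 3) (hDf : D f = f) {N : ℕ} (hN : mId n ^ N ≤ Jac n f) :
    ∃ w : Fin n → ℚ, (∀ i, w i ∈ Set.Ioo 0 (1 / 2)) ∧ ∃ φ : CoordChange n, ∀ i,
      coordG i ∈ derivationEigenspace (conjDerivation φ.pullbackEquiv D) ⊥ (w i : ℂ) := by
  obtain ⟨φ, l, hφ⟩ := exists_coordChange_triangular hD (Nat.le_add_left 2 N)
  set σ := φ.pullbackEquiv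
  have hσD : ∀ g ∈ mId n, conjDerivation σ D g ∈ mId n := fun _ => conjDerivation_mem_mId σ hD
  obtain ⟨w, hw, hlw⟩ := exists_rat_weights
    (fun g hg => derivation_apply_mem_pow_of_mapsTo hσD hg) (fun i => (hφ i).1)
    (map_mem_mId_pow σ hf) (by rw [conjDerivation_apply_apply, hDf]) (mId_pow_le_Jac_map σ hN)
    le_rfl
  obtain rfl : l = fun i => (w i : ℂ) := funext hlw
  choose y hy hyx using exists_mem_derivationEigenspace_bot_sub_mem hσD
    (fun i => by simpa using (hw i).1) (fun i => (hφ i).1) (fun i => (hφ i).2)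
  have hspan := mId_le_span_range_comp_sup σ.symm <| mId_le_span_range_sup fun i =>
    Ideal.pow_le_pow_right (Nat.le_add_left 2 N) (hyx i)
  have hymem (i : Fin n) : y i ∈ mId n :=
    (Submodule.sub_mem_iff_right _ (coordG_mem_mId i)).1
      (Ideal.pow_le_self (Nat.succ_ne_zero (N + 1)) (hyx i))
  obtain ⟨ψ, hψ⟩ := CoordChange.exists_pullback_eq_coordG
    (fun i => (map_mem_mId_iff σ.symm).2 (hymem i)) hspan
  refine ⟨w, hw, ψ, fun i => ?_⟩
  have hyD : σ.symm (y i) ∈ derivationEigenspace D ⊥ (w i : ℂ) :=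
    apply_mem_genEigenspaceMod (e := σ.symm.toLinearMap) (by simp)
      (by simp [conjDerivation_apply]) (by simp) (hy i)
  rw [← hψ i, ← CoordChange.pullbackEquiv_apply]
  exact apply_mem_derivationEigenspace_conjDerivation ψ.pullbackEquiv (by simp) (by simp) hyD

end On

/-! ### Weighted homogeneous components -/

lemma mem_of_forall_mem_sup_pow {R : Type*} [CommRing R] [IsLocalRing R] [IsNoetherianRing R]
    {I J : Ideal R} (hI : I ≠ ⊤) {g : R} (h : ∀ k : ℕ, g ∈ J ⊔ I ^ k) : g ∈ J := by
  have hmem : Ideal.Quotient.mk J g ∈ (⨅ k : ℕ, I ^ k • ⊤ : Submodule R (R ⧸ J)) := by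
    refine (Submodule.mem_iInf _).2 fun k => ?_
    obtain ⟨a, ha, b, hb, rfl⟩ := Submodule.mem_sup.1 (h k)
    rw [map_add, Ideal.Quotient.eq_zero_iff_mem.2 ha, zero_add, ← mul_one b]
    exact Submodule.smul_mem_smul hb (Submodule.mem_top (x := (1 : R ⧸ J)))
  rwa [Ideal.iInf_pow_smul_eq_bot_of_isLocalRing I hI, Submodule.mem_bot,
    Ideal.Quotient.eq_zero_iff_mem] at hmem

lemma exists_fin_family_mem_span_eq {R M : Type*} [Semiring R] [AddCommMonoid M] [Module R M]
    [IsNoetherian R M] (s : Set M) :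
    ∃ (m : ℕ) (h : Fin m → M), (∀ j, h j ∈ s) ∧
      Submodule.span R (Set.range h) = Submodule.span R s := by
  obtain ⟨t, hts, hspan⟩ := (Submodule.fg_span_iff_fg_span_finset_subset s).1
    (IsNoetherian.noetherian (Submodule.span R s))
  refine ⟨t.card, fun j => t.equivFin.symm j, fun j => hts (t.equivFin.symm j).2, ?_⟩
  rw [hspan, Set.range_comp' Subtype.val, t.equivFin.symm.range_eq_univ, Set.image_univ,
    Subtype.range_coe_subtype, Finset.setOfPred_mem]

namespace On

lemma coeff_coordG_mul_pd (i : Fin n) (g : On n) (α : Fin n →₀ ℕ) :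
    coeff α (coordG i * pd i g) = α i * coeff α g := by
  have hX : coordG i = mvPow coordG (Finsupp.single i 1) := by rw [mvPow_single, pow_one]
  rw [hX]
  by_cases hle : Finsupp.single i 1 ≤ α
  · obtain ⟨γ, rfl⟩ := exists_add_of_le hle
    rw [coeff_add_mvPow_mul, coeff_pd, add_comm γ]
    simp [mul_comm, add_comm]
  · have hi : α i = 0 := by rwa [Finsupp.single_le_iff, Nat.one_le_iff_ne_zero, not_not] at hle
    rw [coeff_mvPow_mul_of_not_le hle, hi, Nat.cast_zero, zero_mul]

lemma isQH_iff {w : Fin n → ℚ} {d : ℚ} {g : On n} :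
    IsQH n w d g ↔ ∀ α, coeff α g ≠ 0 → Finsupp.weight w α = d := by
  have hEuler (α : Fin n →₀ ℕ) : coeff α (∑ i, (w i : ℂ) • (coordG i * pd i g)) =
      (Finsupp.weight w α : ℚ) * coeff α g := by
    simp only [map_sum, map_smul, coeff_coordG_mul_pd, smul_eq_mul, Finsupp.weight_eq_sum,
      Rat.cast_sum, Rat.cast_mul, Rat.cast_natCast, nsmul_eq_mul, Finset.sum_mul]
    exact Finset.sum_congr rfl fun i _ => by ring
  have hcoeff : IsQH n w d g ↔
      ∀ α, (Finsupp.weight w α : ℚ) * coeff α g = (d : ℂ) * coeff α g := by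
    refine ⟨fun h α => ?_, fun h => ext_coeff fun α => ?_⟩
    · rw [← hEuler, h, map_smul, smul_eq_mul]
    · rw [hEuler, h, map_smul, smul_eq_mul]
  simp only [hcoeff, mul_eq_mul_right_iff, Rat.cast_inj, or_iff_not_imp_right, ne_eq]

lemma finite_weight_eq {l : Fin n → ℂ} (hl : ∀ i, 0 < (l i).re) (μ : ℂ) :
    {α : Fin n →₀ ℕ | Finsupp.weight l α = μ}.Finite := by
  obtain ⟨ω, hω, K₀, hK₀, h⟩ := exists_mul_degree_le_norm_weight_sub hl μ
  refine (Finsupp.finite_of_degree_lt K₀).subset fun α (hα : Finsupp.weight l α = μ) => ?_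
  by_contra hdeg
  replace hdeg : K₀ ≤ α.degree := not_lt.1 hdeg
  have hle := h α hdeg
  rw [hα, sub_self, norm_zero] at hle
  exact hle.not_gt (mul_pos hω (Nat.cast_pos.2 (hK₀.trans_le hdeg)))

/-- The sum of the terms of weight `μ` in the Taylor expansion of a germ, for weights `l` having
positive real parts. Only finitely many monomials have weight `μ`, so this is a polynomial; for
other `l` the `finsum` may take its junk value `0`. -/
def weightedComponent (l : Fin n → ℂ) (μ : ℂ) : On n →ₗ[ℂ] On n :=
  ∑ᶠ (α : Fin n →₀ ℕ) (_ : Finsupp.weight l α = μ), (coeff α).smulRight (mvPow coordG α)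

section WeightedComponent

variable {l : Fin n → ℂ}

open Classical in
lemma coeff_weightedComponent (hl : ∀ i, 0 < (l i).re) (μ : ℂ) (g : On n) (α : Fin n →₀ ℕ) :
    coeff α (weightedComponent l μ g) = if Finsupp.weight l α = μ then coeff α g else 0 := by
  have hsum := finsum_mem_eq_finite_toFinset_sum
    (fun α => (coeff α).smulRight (mvPow coordG α)) (finite_weight_eq hl μ)
  rw [weightedComponent, show (∑ᶠ (α : Fin n →₀ ℕ) (_ : Finsupp.weight l α = μ),
    (coeff α).smulRight (mvPow coordG α)) = _ from hsum]
  simp [coeff_mvPow]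

lemma sub_sum_weightedComponent_mem (hl : ∀ i, 0 < (l i).re) (k : ℕ) (g : On n) :
    ∃ s : Finset ℂ, g - ∑ μ ∈ s, weightedComponent l μ g ∈ mId n ^ k := by
  classical
  refine ⟨(Finsupp.finite_of_degree_lt k).toFinset.image (Finsupp.weight l),
    mem_mId_pow_iff.2 fun α hα => ?_⟩
  have hα' : Finsupp.weight l α ∈
      (Finsupp.finite_of_degree_lt k).toFinset.image (Finsupp.weight l) :=
    Finset.mem_image_of_mem _ ((Set.Finite.mem_toFinset _).2 hα)
  simp only [map_sub, map_sum, coeff_weightedComponent hl, Finset.sum_ite_eq, if_pos hα', sub_self]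

variable {D : Derivation ℂ (On n) (On n)}

lemma weightedComponent_sub_mem (hl : ∀ i, 0 < (l i).re) {k : ℕ}
    (hD : ∀ g ∈ mId n ^ k, D g ∈ mId n ^ k)
    (hx : ∀ i, coordG i ∈ derivationEigenspace D (mId n ^ k) (l i)) {ν : ℂ} {g : On n}
    (hg : g ∈ derivationEigenspace D (mId n ^ k) ν) (μ : ℂ) [Decidable (ν = μ)] :
    weightedComponent l μ g - (if ν = μ then g else 0) ∈ mId n ^ k := by
  classical
  refine mem_mId_pow_iff.2 fun α hα => ?_
  rw [map_sub, coeff_weightedComponent hl, apply_ite (coeff α), map_zero]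
  by_cases h0 : coeff α g = 0
  · simp [h0]
  · rw [weight_eq_of_coeff_ne_zero hD hx hg hα h0]
    split_ifs <;> exact sub_self _

/-- Modulo `𝔪ᵏ`, an invariant ideal is the sum of its intersections with the generalized
eigenspaces, on each of which taking the component of weight `μ` is the identity or zero. Krull's
intersection theorem removes the `𝔪ᵏ`. -/
theorem weightedComponent_mem (hl : ∀ i, 0 < (l i).re) (hD : ∀ g ∈ mId n, D g ∈ mId n)
    (hx : ∀ i, coordG i ∈ derivationEigenspace D ⊥ (l i)) {I : Ideal (On n)}
    (hI : ∀ g ∈ I, D g ∈ I) {g : On n} (hg : g ∈ I) (μ : ℂ) : weightedComponent l μ g ∈ I := by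
  classical
  refine mem_of_forall_mem_sup_pow (I := mId n) Ideal.IsPrime.ne_top' fun k => ?_
  have hDk : ∀ g ∈ mId n ^ k, D g ∈ mId n ^ k := fun g => derivation_apply_mem_pow_of_mapsTo hD
  have hxk (i : Fin n) : coordG i ∈ derivationEigenspace D (mId n ^ k) (l i) :=
    genEigenspaceMod_mono bot_le (hx i)
  suffices (⨆ ν, I.restrictScalars ℂ ⊓ derivationEigenspace D (mId n ^ k) ν) ⊔
      (mId n ^ k).restrictScalars ℂ ≤
        ((I ⊔ mId n ^ k).restrictScalars ℂ).comap (weightedComponent l μ) from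
    this (le_iSup_inf_genEigenspaceMod_sup hDk hI hg)
  refine sup_le (iSup_le fun ν h ⟨hhI, hhν⟩ => ?_) fun h hh => Ideal.mem_sup_right ?_
  · have hite : (if ν = μ then h else 0) ∈ I := by
      split_ifs
      exacts [hhI, zero_mem I]
    have hsub := weightedComponent_sub_mem hl hDk hxk hhν μ
    exact (Submodule.sub_mem_iff_left _ (Ideal.mem_sup_left hite)).1 (Ideal.mem_sup_right hsub)
  · refine mem_mId_pow_iff.2 fun α hα => ?_
    rw [coeff_weightedComponent hl, mem_mId_pow_iff.1 hh α hα, ite_self]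

end WeightedComponent

variable {w : Fin n → ℚ} {D : Derivation ℂ (On n) (On n)}

lemma isQH_of_apply_eq_smul (hD : ∀ g ∈ mId n, D g ∈ mId n)
    (hx : ∀ i, coordG i ∈ derivationEigenspace D ⊥ (w i : ℂ)) {g : On n} {d : ℚ}
    (hg : D g = (d : ℂ) • g) : IsQH n w d g := by
  refine isQH_iff.2 fun α hα => Rat.cast_injective (α := ℂ) ?_
  refine (map_weight (Rat.castHom ℂ) w α).trans (weight_eq_of_coeff_ne_zero (k := α.degree + 1)
    (fun g => derivation_apply_mem_pow_of_mapsTo hD) (fun i => genEigenspaceMod_mono bot_le (hx i))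
    (mem_genEigenspaceMod_of_apply_eq_smul hg) (Nat.lt_succ_self _) hα)

lemma exists_isQH_weightedComponent (hw : ∀ i, 0 < w i) {g : On n} {μ : ℂ}
    (hg : weightedComponent (fun i => (w i : ℂ)) μ g ∈ mId n)
    (h0 : weightedComponent (fun i => (w i : ℂ)) μ g ≠ 0) :
    ∃ d, 0 < d ∧ IsQH n w d (weightedComponent (fun i => (w i : ℂ)) μ g) := by
  classical
  have hl (i : Fin n) : 0 < ((w i : ℂ)).re := by simpa using hw i
  have hweight (α : Fin n →₀ ℕ) (hα : coeff α (weightedComponent (fun i => (w i : ℂ)) μ g) ≠ 0) :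
      ((Finsupp.weight w α : ℚ) : ℂ) = μ := by
    rw [coeff_weightedComponent hl] at hα
    exact (map_weight (Rat.castHom ℂ) w α).trans (of_not_not fun h => hα (if_neg h))
  obtain ⟨α, hα⟩ : ∃ α, coeff α (weightedComponent (fun i => (w i : ℂ)) μ g) ≠ 0 := by
    by_contra! h
    exact h0 (ext_coeff fun α => by rw [h α, map_zero])
  have hα0 : α ≠ 0 := by
    rintro rfl
    exact hα (mem_mId_iff.1 hg)
  obtain ⟨i, hi⟩ := Finsupp.ne_iff.1 hα0
  have hpos : 0 < Finsupp.weight w α :=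
    (hw i).trans_le (Finsupp.le_weight_of_ne_zero (fun i => (hw i).le) hi)
  exact ⟨Finsupp.weight w α, hpos, isQH_iff.2 fun β hβ =>
    Rat.cast_injective ((hweight β hβ).trans (hweight α hα).symm)⟩

theorem span_isQH_eq (hw : ∀ i, 0 < w i) (hD : ∀ g ∈ mId n, D g ∈ mId n)
    (hx : ∀ i, coordG i ∈ derivationEigenspace D ⊥ (w i : ℂ)) {I : Ideal (On n)}
    (hI : ∀ g ∈ I, D g ∈ I) (hIm : I ≤ mId n) :
    Ideal.span {c | c ∈ I ∧ ∃ d, 0 < d ∧ IsQH n w d c} = I := by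
  have hl (i : Fin n) : 0 < ((w i : ℂ)).re := by simpa using hw i
  refine le_antisymm (Ideal.span_le.2 fun c hc => hc.1) fun g hg => ?_
  refine mem_of_forall_mem_sup_pow (I := mId n) Ideal.IsPrime.ne_top' fun k => ?_
  obtain ⟨s, hs⟩ := sub_sum_weightedComponent_mem hl k g
  refine (Submodule.sub_mem_iff_left _ (Ideal.mem_sup_left (sum_mem fun μ _ => ?_))).1
    (Ideal.mem_sup_right hs)
  have hmem := weightedComponent_mem hl hD hx hI hg μ
  by_cases h0 : weightedComponent (fun i => (w i : ℂ)) μ g = 0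
  · rw [h0]
    exact zero_mem _
  · exact Ideal.subset_span ⟨hmem, exists_isQH_weightedComponent hw (hIm hmem) h0⟩

theorem relQH_of_eigencoordinates (hw : ∀ i, 0 < w i) (hD : ∀ g ∈ mId n, D g ∈ mId n)
    {X : Set (Fin n → ℂ)} (hX : IX n X ≤ mId n) (hDX : ∀ g ∈ IX n X, D g ∈ IX n X) {f : On n}
    (hDf : D f = f) {φ : CoordChange n}
    (hx : ∀ i, coordG i ∈ derivationEigenspace (conjDerivation φ.pullbackEquiv D) ⊥ (w i : ℂ)) :
    RelQH n X f w := by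
  let σ := φ.pullbackEquiv
  have hσD : ∀ g ∈ mId n, conjDerivation σ D g ∈ mId n := fun _ => conjDerivation_mem_mId σ hD
  have hσDX : ∀ g ∈ (IX n X).comap σ.symm, conjDerivation σ D g ∈ (IX n X).comap σ.symm := by
    intro g hg
    rw [Ideal.mem_comap, conjDerivation_apply, σ.symm_apply_apply]
    exact hDX _ hg
  have hσf : conjDerivation σ D (σ f) = ((1 : ℚ) : ℂ) • σ f := by
    rw [conjDerivation_apply_apply, hDf, Rat.cast_one, one_smul]
  obtain ⟨m, h, hmem, hspan⟩ := exists_fin_family_mem_span_eq (R := On n)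
    {c | c ∈ (IX n X).comap σ.symm ∧ ∃ d, 0 < d ∧ IsQH n w d c}
  replace hspan : Ideal.span (Set.range h) = (IX n X).comap σ.symm := hspan.trans <|
    span_isQH_eq hw hσD hx hσDX fun g hg => (map_mem_mId_iff σ.symm).1 (hX hg)
  choose d hd hh using fun j => (hmem j).2
  refine ⟨φ, φ.pullbackEquiv_apply f ▸ isQH_of_apply_eq_smul hσD hx hσf, m,
    fun j => σ.symm (h j), d, ?_, hd, fun j => ?_⟩
  · rw [Set.range_comp' σ.symm h, ← Ideal.map_span, hspan]
    exact Ideal.map_comap_of_surjective _ σ.symm.surjective _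
  · rw [← φ.pullbackEquiv_apply]
    exact (σ.apply_symm_apply (h j)).symm ▸ hh j

end On

theorem relative_saito_of_mem_m3_general (n : ℕ) (X : Set (Fin n → ℂ)) (hX : IX n X ≠ ⊤) (f : On n)
    (hf : f ∈ (mId n) ^ 3) (hfin : FiniteDimensional ℂ (On n ⧸ BRIdeal n X f))
    (heq : muX n X f = tauX n X f) :
    ∃ w : Fin n → ℚ, (∀ i, 0 < w i ∧ w i < 1 / 2) ∧ RelQH n X f w := by
  have hXm : IX n X ≤ mId n :=
    (IsLocalRing.le_maximalIdeal hX).trans_eq On.maximalIdeal_eq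
  obtain ⟨D, N, hD, hDf, hDX, hN⟩ :=
    On.exists_derivation_apply_self_eq (Ideal.pow_le_pow_right (by norm_num) hf) heq
  obtain ⟨w, hw, φ, hφ⟩ := On.exists_coordChange_eigencoordinates hD hf hDf hN
  exact ⟨w, hw, On.relQH_of_eigencoordinates (fun i => (hw i).1) hD hXm hDX hDf hφ⟩

/-- **Theorem 4.1** (part (a) of Theorem 1.3): if `f ∈ 𝔪³`, `μ_X(f) < ∞` and
`μ_X(f) = τ_X(f)`, then the pair `(f, X)` is relatively quasihomogeneous with respect to
a system of weights `w ∈ ((0, 1/2) ∩ ℚ)ⁿ`. -/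
theorem relative_saito_of_mem_m3 (n : ℕ) (X : Set (Fin n → ℂ))
    (hX : IsAnalyticGermAt0 n X) (f : On n) (hf : f ∈ (mId n) ^ 3)
    (hfin : FiniteDimensional ℂ (On n ⧸ BRIdeal n X f))
    (heq : muX n X f = tauX n X f) :
    ∃ w : Fin n → ℚ, (∀ i, 0 < w i ∧ w i < 1 / 2) ∧ RelQH n X f w :=
  relative_saito_of_mem_m3_general n X
    (ne_top_of_le_ne_top Ideal.IsPrime.ne_top' (On.IX_le_mId hX.1)) f hf hfin heq

end
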